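/- For every prime p ≥ 5 and every integer n ≥ 5, Ψ_{n-3}^p(1,1,1) = 23 + 2·gcd(p-1,3) + gcd(p-1,4); that is, the number of isomorphism classes of regular p-groups of type (n-3, 1, 1, 1) equals 23 + 2·gcd(p-1,3) + gcd(p-1,4). -/

import Mathlib

/-- `℧_1(H) = ⟨h^p : h ∈ H⟩` for a subgroup `H`. -/
def MhoOne (p : ℕ) {P : Type} [Group P] (H : Subgroup P) : Subgroup P :=
  Subgroup.closure {y : P | ∃ x ∈ H, y = x ^ p}

/-- A `p`-group `P` is regular if for all `x y : P` there is
`z ∈ ℧_1(γ_2(⟨x,y⟩))` with `x^p * y^p = (x*y)^p * z`. -/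
def IsRegularPGroup (p : ℕ) (P : Type) [Group P] : Prop :=
  ∀ x y : P,
    ∃ z ∈ MhoOne p ⁅Subgroup.closure {x, y}, Subgroup.closure {x, y}⁆,
      x ^ p * y ^ p = (x * y) ^ p * z

/-- `Ω_i(P) = ⟨x : x^(p^i) = 1⟩`. -/
def OmegaSubgroup (p : ℕ) (P : Type) [Group P] (i : ℕ) : Subgroup P :=
  Subgroup.closure {x : P | x ^ p ^ i = 1}

/-- `ω_i(P)`, defined by `p ^ ω_i(P) = |Ω_i(P)/Ω_{i-1}(P)|`. -/
noncomputable def omegaInv (p : ℕ) (P : Type) [Group P] (i : ℕ) : ℕ :=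
  ((OmegaSubgroup p P (i - 1)).relIndex (OmegaSubgroup p P i)).factorization p

/-- `μ_j(P)` (for `j ≥ 1`): the dual partition of `(ω_1(P), ω_2(P), ...)`;
the type invariants of `P` are `μ_1(P) ≥ μ_2(P) ≥ ...`. -/
noncomputable def muInv (p : ℕ) (P : Type) [Group P] (j : ℕ) : ℕ :=
  Nat.card {i : ℕ // 1 ≤ i ∧ j ≤ omegaInv p P i}

/-- `P` has type invariants given by the list `l`. -/
def HasTypeInvariants (p : ℕ) (P : Type) [Group P] (l : List ℕ) : Prop :=
  ∀ i : ℕ, muInv p P (i + 1) = l.getD i 0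

/-- The multiplication extracted from a group structure. -/
def mulOfGroup (G : Type) (s : Group G) : Mul G := by letI := s; infer_instance

/-- The number of isomorphism classes of groups of order `N` whose group structure
satisfies the predicate `Q`. -/
noncomputable def groupClassCount (N : ℕ) (Q : Group (Fin N) → Prop) : ℕ :=
  Nat.card (Quot fun s t : {s : Group (Fin N) // Q s} =>
    Nonempty (@MulEquiv (Fin N) (Fin N) (mulOfGroup _ s.1) (mulOfGroup _ t.1)))

/-- `Ψ_e^p(λ)`: the number of isomorphism classes of regular `p`-groups of type
`(e, λ_1, ..., λ_k)`; such a group has order `p ^ (e + λ_1 + ... + λ_k)`. -/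
noncomputable def PsiType (p e : ℕ) (l : List ℕ) : ℕ :=
  groupClassCount (p ^ (e + l.sum)) fun s =>
    letI := s
    IsRegularPGroup p (Fin (p ^ (e + l.sum))) ∧
      HasTypeInvariants p (Fin (p ^ (e + l.sum))) (e :: l)

set_option linter.all false

/-- Structure constants. -/
structure Th (p : ℕ) where
  k1 : ZMod p
  e : ZMod p
  k2 : ZMod p
  h : ZMod p
  mu : ZMod p
  la : ZMod p
  nu : ZMod p
  b2 : ZMod p
  b3 : ZMod p
  hc : k1 * la = h * k2

section model
variable {p : ℕ} [hp : Fact p.Prime]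

/-- binomials -/
def c2 (s : ZMod p) : ZMod p := s * (s - 1) / 2
def c3 (s : ZMod p) : ZMod p := s * (s - 1) * (s - 2) / 6

namespace Th
variable (θ : Th p)
def bu (t : ZMod p) : ZMod p := t * θ.b2 + c2 t * (θ.h * θ.nu)
def bc (t : ZMod p) : ZMod p :=
  t * θ.b3 + c2 t * (θ.mu * θ.nu + θ.la * θ.b2) + c3 t * (θ.h * θ.la * θ.nu)
def fY (t x' : ZMod p) : ZMod p := x' * (t * θ.nu)
def vu (t x' y' : ZMod p) : ZMod p :=
  t * θ.h * y' + x' * θ.bu t + c2 x' * (θ.k1 * (t * θ.nu))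
def fU (t x x' y' : ZMod p) : ZMod p := θ.vu t x' y' + x * θ.k1 * (y' + θ.fY t x')
def vc (t x' y' u' : ZMod p) : ZMod p :=
  (t * θ.mu + c2 t * (θ.h * θ.la)) * y' + t * θ.la * u' + x' * θ.bc t
   + c2 x' * (θ.e * (t * θ.nu) + θ.k2 * θ.bu t) + c3 x' * (θ.k1 * θ.k2 * (t * θ.nu))
def fC (t x x' y' u' : ZMod p) : ZMod p :=
  θ.vc t x' y' u' + (x * θ.e + c2 x * (θ.k1 * θ.k2)) * (y' + θ.fY t x')
   + x * θ.k2 * (u' + θ.vu t x' y')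
end Th

variable [h5 : Fact (5 ≤ p)]

lemma two_ne : (2 : ZMod p) ≠ 0 := by
  have := h5.out
  intro h
  have h2 : ((2 : ℕ) : ZMod p) = 0 := by exact_mod_cast h
  rw [ZMod.natCast_eq_zero_iff] at h2
  have := Nat.le_of_dvd (by norm_num) h2
  omega
lemma three_ne : (3 : ZMod p) ≠ 0 := by
  have := h5.out
  intro h
  have h2 : ((3 : ℕ) : ZMod p) = 0 := by exact_mod_cast h
  rw [ZMod.natCast_eq_zero_iff] at h2
  have := Nat.le_of_dvd (by norm_num) h2
  omega
lemma six_ne : (6 : ZMod p) ≠ 0 := by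
  have : (6 : ZMod p) = 2 * 3 := by norm_num
  rw [this]; exact mul_ne_zero two_ne three_ne

lemma Th.cases (θ : Th p) : (∃ g, θ.la = θ.k2 * g ∧ θ.h = θ.k1 * g) ∨ (θ.k1 = 0 ∧ θ.k2 = 0) ∨
   (θ.k2 = 0 ∧ θ.la = 0) := by
  have h := θ.hc
  by_cases h2 : θ.k2 = 0
  · rw [h2, mul_zero, mul_eq_zero] at h
    tauto
  · left
    refine ⟨θ.la / θ.k2, by field_simp, ?_⟩
    field_simp
    rw [h]

lemma assocU (θ : Th p) (t x t' x' x'' y' y'' : ZMod p) :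
    θ.fU t x x' y' + θ.fU (t + t') (x + x') x'' y'' =
    θ.fU t' x' x'' y'' + θ.fU t x (x' + x'') (y' + y'' + θ.fY t' x'') := by
  have h2 := two_ne (p := p)
  have h6 := six_ne (p := p)
  simp only [Th.fU, Th.vu, Th.fY, Th.bu, c2]
  field_simp
  ring

set_option maxHeartbeats 1000000 in
lemma assocC (θ : Th p) (t x t' x' x'' y' y'' u' u'' : ZMod p) :
    θ.fC t x x' y' u' + θ.fC (t + t') (x + x') x'' y'' u'' =
    θ.fC t' x' x'' y'' u'' + θ.fC t x (x' + x'') (y' + y'' + θ.fY t' x'')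
      (u' + u'' + θ.fU t' x' x'' y'') := by
  have h2 := two_ne (p := p)
  have h3 := three_ne (p := p)
  have h6 := six_ne (p := p)
  have h62 : (6 : ZMod p) = 2 * 3 := by norm_num
  obtain ⟨g, hl, hh⟩ | ⟨h1, h2'⟩ | ⟨h1, h2'⟩ := θ.cases
  · simp only [Th.fC, Th.vc, Th.fU, Th.vu, Th.fY, Th.bu, Th.bc, c2, c3, hl, hh, h62]
    field_simp
    ring
  · simp only [Th.fC, Th.vc, Th.fU, Th.vu, Th.fY, Th.bu, Th.bc, c2, c3, h1, h2', h62]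
    field_simp
    ring
  · simp only [Th.fC, Th.vc, Th.fU, Th.vu, Th.fY, Th.bu, Th.bc, c2, c3, h1, h2', h62]
    field_simp
    ring
end model

set_option linter.all false

section model2
variable {p : ℕ} [hp : Fact p.Prime]

/-- embedding of `F_p` as the socle of `Z/p^(d+2)` -/
def iot (p d : ℕ) : ZMod p →+ ZMod (p ^ (d + 2)) :=
  ZMod.lift p ⟨zmultiplesHom _ ((p : ZMod (p ^ (d + 2))) ^ (d + 1)), by
    simp only [zmultiplesHom_apply, natCast_zsmul, nsmul_eq_mul]
    have := ZMod.natCast_self (p ^ (d + 2))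
    push_cast at this
    rw [← this]; ring⟩

def bar (p d : ℕ) : ZMod (p ^ (d + 2)) →+* ZMod p :=
  ZMod.castHom (dvd_pow_self p (by omega)) (ZMod p)

lemma iot_int (d : ℕ) (i : ℤ) : iot p d (i : ZMod p) = i * (p : ZMod (p ^ (d + 2))) ^ (d + 1) := by
  simp [iot]

lemma int_surj {n : ℕ} (f : ZMod n) : ∃ i : ℤ, (i : ZMod n) = f := ZMod.intCast_surjective f

@[simp] lemma bar_iot (d : ℕ) (f : ZMod p) : bar p d (iot p d f) = 0 := by
  obtain ⟨i, rfl⟩ := int_surj f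
  rw [iot_int]; simp

lemma iot_inj (d : ℕ) {f : ZMod p} (h : iot p d f = 0) : f = 0 := by
  obtain ⟨i, rfl⟩ := int_surj f
  rw [iot_int] at h
  have h' : ((i * (p : ℤ) ^ (d + 1) : ℤ) : ZMod (p ^ (d + 2))) = 0 := by push_cast; exact h
  rw [ZMod.intCast_zmod_eq_zero_iff_dvd] at h' ⊢
  push_cast at h'
  have e1 : (p : ℤ) ^ (d + 2) = p * (p : ℤ) ^ (d + 1) := by ring
  rw [e1] at h'
  have e2 : (p : ℤ) ^ (d + 1) ≠ 0 := pow_ne_zero _ (by exact_mod_cast hp.out.ne_zero)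
  exact (mul_dvd_mul_iff_right e2).1 h'

lemma iot_inj' (d : ℕ) {f g : ZMod p} : iot p d f = iot p d g ↔ f = g := by
  refine ⟨fun h => ?_, fun h => by rw [h]⟩
  exact sub_eq_zero.1 (iot_inj d (by rw [map_sub, h, sub_self]))

lemma pow_mul_T (d : ℕ) (t : ZMod (p ^ (d + 2))) : (p : ZMod (p ^ (d + 2))) ^ (d + 1) * t = iot p d (bar p d t) := by
  obtain ⟨i, rfl⟩ := int_surj t
  rw [map_intCast, iot_int, mul_comm]

lemma nsmul_iot (d n : ℕ) (f : ZMod p) : (n : ZMod (p ^ (d + 2))) * iot p d f = iot p d (n * f) := by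
  rw [← nsmul_eq_mul, ← nsmul_eq_mul, map_nsmul]

lemma p_mul_eq_zero (d : ℕ) {t : ZMod (p ^ (d + 2))} (h : (p : ZMod (p ^ (d + 2))) * t = 0) :
    ∃ f, t = iot p d f := by
  obtain ⟨i, rfl⟩ := int_surj t
  have h' : ((p * i : ℤ) : ZMod (p ^ (d + 2))) = 0 := by push_cast; exact h
  rw [ZMod.intCast_zmod_eq_zero_iff_dvd] at h'
  push_cast at h'
  rw [pow_succ', mul_dvd_mul_iff_left (by exact_mod_cast hp.out.ne_zero)] at h'
  obtain ⟨j, rfl⟩ := h'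
  exact ⟨j, by rw [iot_int]; push_cast; ring⟩

/-- the model group -/
@[ext] structure Gr (d : ℕ) (θ : Th p) where
  t : ZMod (p ^ (d + 2))
  x : ZMod p
  y : ZMod p
  u : ZMod p

variable [h5 : Fact (5 ≤ p)] {d : ℕ} {θ : Th p}

namespace Gr

instance : Mul (Gr d θ) := ⟨fun w v => ⟨w.t + v.t + iot p d (θ.fC (bar p d w.t) w.x v.x v.y v.u),
  w.x + v.x, w.y + v.y + θ.fY (bar p d w.t) v.x, w.u + v.u + θ.fU (bar p d w.t) w.x v.x v.y⟩⟩
instance : One (Gr d θ) := ⟨⟨0, 0, 0, 0⟩⟩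
instance : Inv (Gr d θ) := ⟨fun v => ⟨-v.t - iot p d (θ.fC (-bar p d v.t) (-v.x) v.x v.y v.u),
  -v.x, -v.y - θ.fY (-bar p d v.t) v.x, -v.u - θ.fU (-bar p d v.t) (-v.x) v.x v.y⟩⟩

lemma mul_t (w v : Gr d θ) : (w * v).t = w.t + v.t + iot p d (θ.fC (bar p d w.t) w.x v.x v.y v.u) := rfl
@[simp] lemma mul_x (w v : Gr d θ) : (w * v).x = w.x + v.x := rfl
@[simp] lemma mul_y (w v : Gr d θ) : (w * v).y = w.y + v.y + θ.fY (bar p d w.t) v.x := rfl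
@[simp] lemma mul_u (w v : Gr d θ) : (w * v).u = w.u + v.u + θ.fU (bar p d w.t) w.x v.x v.y := rfl
@[simp] lemma one_t : (1 : Gr d θ).t = 0 := rfl
@[simp] lemma one_x : (1 : Gr d θ).x = 0 := rfl
@[simp] lemma one_y : (1 : Gr d θ).y = 0 := rfl
@[simp] lemma one_u : (1 : Gr d θ).u = 0 := rfl
lemma inv_t (v : Gr d θ) : (v⁻¹).t = -v.t - iot p d (θ.fC (-bar p d v.t) (-v.x) v.x v.y v.u) := rfl
@[simp] lemma inv_x (v : Gr d θ) : (v⁻¹).x = -v.x := rfl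
@[simp] lemma inv_y (v : Gr d θ) : (v⁻¹).y = -v.y - θ.fY (-bar p d v.t) v.x := rfl
@[simp] lemma inv_u (v : Gr d θ) : (v⁻¹).u = -v.u - θ.fU (-bar p d v.t) (-v.x) v.x v.y := rfl
@[simp] lemma bar_mul (w v : Gr d θ) : bar p d (w * v).t = bar p d w.t + bar p d v.t := by
  simp [mul_t]
@[simp] lemma bar_inv (w : Gr d θ) : bar p d (w⁻¹).t = -bar p d w.t := by
  simp [inv_t]

instance : Group (Gr d θ) := Group.ofLeftAxioms
  (by
    intro a b c
    ext
    · rw [mul_t, mul_t, mul_t, mul_t, map_add (bar p d), map_add (bar p d), bar_iot]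
      simp only [mul_x, mul_y, mul_u, add_zero]
      have := congrArg (iot p d) (assocC θ (bar p d a.t) a.x (bar p d b.t) b.x c.x b.y c.y b.u c.u)
      rw [map_add, map_add] at this
      linear_combination this
    · simp only [mul_x]; ring
    · simp only [mul_y, mul_x, bar_mul, Th.fY]; ring
    · simp only [mul_y, mul_x, mul_u, bar_mul]
      linear_combination assocU θ (bar p d a.t) a.x (bar p d b.t) b.x c.x b.y c.y)
  (by
    intro a
    ext
    · simp [mul_t, Th.fC, Th.vc, Th.vu, Th.fY, Th.bu, Th.bc, c2, c3]
    · simp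
    · simp [Th.fY]
    · simp [Th.fU, Th.vu, Th.fY, Th.bu, c2])
  (by
    intro a
    ext
    · rw [mul_t, bar_inv, inv_t, inv_x, one_t]; ring
    · simp
    · rw [mul_y, bar_inv, inv_y, one_y]; ring
    · rw [mul_u, bar_inv, inv_u, inv_x, one_u]; ring)

def equivProd : Gr d θ ≃ ZMod (p ^ (d + 2)) × ZMod p × ZMod p × ZMod p where
  toFun w := (w.t, w.x, w.y, w.u)
  invFun v := ⟨v.1, v.2.1, v.2.2.1, v.2.2.2⟩
  left_inv _ := rfl
  right_inv _ := rfl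

instance : Finite (Gr d θ) :=
  haveI : NeZero (p ^ (d + 2)) := ⟨pow_ne_zero _ hp.out.ne_zero⟩
  Finite.of_equiv _ equivProd.symm

lemma card_eq : Nat.card (Gr d θ) = p ^ (d + 5) := by
  rw [Nat.card_congr equivProd]
  simp [Nat.card_prod]
  ring

/-- power formula -/
lemma pow_coord (w : Gr d θ) (n : ℕ) : (w ^ n).x = n * w.x ∧
   (w ^ n).y = n * w.y + c2 (n : ZMod p) * (θ.nu * bar p d w.t * w.x) ∧
   (w ^ n).u = n * w.u + c2 (n : ZMod p) * (bar p d w.t * θ.h * w.y + w.x * θ.bu (bar p d w.t)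
      + w.x * θ.k1 * w.y + w.x ^ 2 * θ.k1 * θ.nu * bar p d w.t + c2 w.x * (θ.k1 * (bar p d w.t * θ.nu)))
      + c3 (n : ZMod p) * (θ.h * θ.nu * bar p d w.t ^ 2 * w.x + 2 * θ.k1 * θ.nu * bar p d w.t * w.x ^ 2) := by
  have h2 := two_ne (p := p)
  have h3 := three_ne (p := p)
  have h62 : (6 : ZMod p) = 2 * 3 := by norm_num
  induction n with
  | zero => simp [c2, c3]
  | succ n ih =>
    obtain ⟨hx, hy, hu⟩ := ih
    rw [pow_succ']
    refine ⟨?_, ?_, ?_⟩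
    · rw [mul_x, hx]; push_cast; ring
    · rw [mul_y, hy, hx, Th.fY]; simp only [c2]; push_cast; field_simp; ring
    · rw [mul_u, hu, hx, hy]; simp only [Th.fU, Th.vu, Th.fY, Th.bu, c2, c3, h62]; push_cast; field_simp; ring

lemma pow_t (w : Gr d θ) (n : ℕ) : (w ^ n).t = n * w.t + iot p d (∑ i ∈ Finset.range n,
    θ.fC (bar p d w.t) w.x (w ^ i).x (w ^ i).y (w ^ i).u) := by
  induction n with
  | zero => simp
  | succ n ih =>
    rw [show w ^ (n + 1) = w * w ^ n from pow_succ' w n, mul_t, ih, Finset.sum_range_succ, map_add]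
    push_cast; ring

lemma sum_poly (q : Polynomial (ZMod p)) (hq : q.natDegree ≤ 3) :
    ∑ i ∈ Finset.range p, q.eval (i : ZMod p) = 0 := by
  have h5 := h5.out
  have hs : ∀ k ≤ 3, ∑ i ∈ Finset.range p, ((i : ZMod p)) ^ k = 0 := by
    intro k hk
    have := FiniteField.sum_pow_lt_card_sub_one (K := ZMod p) k (by rw [ZMod.card]; omega)
    rw [← this]
    refine Finset.sum_bij (fun i _ => (i : ZMod p)) (by simp) ?_ ?_ (by simp)
    · intro a ha b hb hab
      rw [ZMod.natCast_eq_natCast_iff'] at hab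
      rw [Finset.mem_range] at ha hb
      rwa [Nat.mod_eq_of_lt ha, Nat.mod_eq_of_lt hb] at hab
    · intro b _
      exact ⟨b.val, by simpa using ZMod.val_lt b, by simp⟩
  have : ∀ s : ZMod p, q.eval s = ∑ k ∈ Finset.range 4, q.coeff k * s ^ k := fun s =>
    Polynomial.eval_eq_sum_range' (by omega) s
  simp only [this]
  rw [Finset.sum_comm]
  apply Finset.sum_eq_zero
  intro k hk
  rw [← Finset.mul_sum, hs k (by simp at hk; omega), mul_zero]

open Polynomial in
lemma pow_p (w : Gr d θ) : w ^ p = ⟨p * w.t, 0, 0, 0⟩ := by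
  have h2 := two_ne (p := p)
  have h3 := three_ne (p := p)
  have h62 : (6 : ZMod p) = 2 * 3 := by norm_num
  obtain ⟨hx, hy, hu⟩ := pow_coord w p
  ext
  · rw [pow_t]
    set T := bar p d w.t
    have key : ∃ q : (ZMod p)[X], q.natDegree ≤ 3 ∧ ∀ i : ℕ,
        θ.fC T w.x (w ^ i).x (w ^ i).y (w ^ i).u = q.eval (i : ZMod p) := by
      obtain ⟨Y1, Y2, hY⟩ : ∃ Y1 Y2 : ZMod p, ∀ i : ℕ, (w ^ i).y = Y1 * i + Y2 * i ^ 2 :=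
        ⟨w.y - (θ.nu * T * w.x) / 2, (θ.nu * T * w.x) / 2, fun i => by
          rw [(pow_coord w i).2.1]; simp only [c2]; field_simp; ring⟩
      obtain ⟨U1, U2, U3, hU⟩ : ∃ U1 U2 U3 : ZMod p, ∀ i : ℕ, (w ^ i).u = U1 * i + U2 * i ^ 2 + U3 * i ^ 3 := by
        have aux : ∀ A B C : ZMod p, ∃ U1 U2 U3 : ZMod p, ∀ i : ℕ, i * A + c2 (i : ZMod p) * B + c3 (i : ZMod p) * C
          = U1 * i + U2 * i ^ 2 + U3 * i ^ 3 := fun A B C =>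
          ⟨A - B / 2 + C / 3, B / 2 - C / 2, C / 6, fun i => by
            simp only [c2, c3, h62]; field_simp; ring⟩
        obtain ⟨U1, U2, U3, h⟩ := aux _ _ _
        exact ⟨U1, U2, U3, fun i => by rw [(pow_coord w i).2.2, h]⟩
      have aux : ∀ a0 a1 a2 a3 a4 a5 a6 : ZMod p, ∃ q : (ZMod p)[X], q.natDegree ≤ 3 ∧ ∀ i : ℕ,
         a1 * (Y1 * i + Y2 * i ^ 2) + a2 * (U1 * i + U2 * i ^ 2 + U3 * i ^ 3)
          + a3 * ((i : ZMod p) * w.x) + a4 * c2 ((i : ZMod p) * w.x) + a5 * c3 ((i : ZMod p) * w.x) = q.eval (i : ZMod p) := by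
        intro a0 a1 a2 a3 a4 a5 a6
        refine ⟨C a1 * (C Y1 * X + C Y2 * X ^ 2) + C a2 * (C U1 * X + C U2 * X ^ 2 + C U3 * X ^ 3)
          + C a3 * (X * C w.x) + C (a4 / 2) * ((X * C w.x) * (X * C w.x - 1))
          + C (a5 / 6) * ((X * C w.x) * (X * C w.x - 1) * (X * C w.x - C 2)), ?_, ?_⟩
        · compute_degree!
        · intro i
          simp [c2, c3]
          ring
      obtain ⟨q, hq, h⟩ := aux 0 ((T * θ.mu + c2 T * (θ.h * θ.la)) + (w.x * θ.e + c2 w.x * (θ.k1 * θ.k2)) + w.x * θ.k2 * (T * θ.h))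
        (T * θ.la + w.x * θ.k2)
        (θ.bc T + (w.x * θ.e + c2 w.x * (θ.k1 * θ.k2)) * (T * θ.nu) + w.x * θ.k2 * θ.bu T)
        ((θ.e * (T * θ.nu) + θ.k2 * θ.bu T) + w.x * θ.k2 * (θ.k1 * (T * θ.nu)))
        (θ.k1 * θ.k2 * (T * θ.nu)) 0
      refine ⟨q, hq, fun i => ?_⟩
      rw [← h, (pow_coord w i).1, hY, hU]
      simp only [Th.fC, Th.vc, Th.vu, Th.fY]
      ring
    obtain ⟨q, hq, h⟩ := key
    rw [Finset.sum_congr rfl (fun i _ => h i), sum_poly q hq]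
    simp
  · simp [hx]
  · simp [hy, c2]
  · simp [hu, c2, c3]

end Gr
end model2

set_option linter.all false

section typ
variable {p : ℕ} [hp : Fact p.Prime]

lemma pab_pow {H : Type*} [Group H] (hab : ∀ x y : H, (x * y) ^ p = x ^ p * y ^ p) (i : ℕ) (x y : H) :
    (x * y) ^ p ^ i = x ^ p ^ i * y ^ p ^ i := by
  induction i with
  | zero => simp
  | succ i ih => rw [pow_succ, pow_mul, pow_mul, pow_mul, ih, hab]

lemma reg_of_pab {H : Type} [Group H] (hab : ∀ x y : H, (x * y) ^ p = x ^ p * y ^ p) :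
    IsRegularPGroup p H := fun x y => ⟨1, one_mem _, by rw [hab, mul_one]⟩

lemma omega_card_rel {H : Type} [Group H] [Finite H] {i : ℕ} :
    Nat.card (OmegaSubgroup p H i) * ((OmegaSubgroup p H i).relIndex (OmegaSubgroup p H (i + 1))) =
      Nat.card (OmegaSubgroup p H (i + 1)) := by
  have hle : OmegaSubgroup p H i ≤ OmegaSubgroup p H (i + 1) :=
    Subgroup.closure_mono fun x (hx : x ^ p ^ i = 1) => by
      show x ^ p ^ (i + 1) = 1
      rw [pow_succ, pow_mul, hx, one_pow]
  rw [Subgroup.relIndex]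
  rw [← Subgroup.card_mul_index ((OmegaSubgroup p H i).subgroupOf (OmegaSubgroup p H (i + 1)))]
  congr 1
  exact Nat.card_congr (Subgroup.subgroupOfEquivOfLe hle).symm.toEquiv

lemma type_of_counts {H : Type} [Group H] [Finite H] (hab : ∀ x y : H, (x * y) ^ p = x ^ p * y ^ p)
    (e : ℕ) (he : 2 ≤ e)
    (hc : ∀ i, 1 ≤ i → Nat.card {g : H // g ^ p ^ i = 1} = p ^ (3 + min i e)) :
    HasTypeInvariants p H [e, 1, 1, 1] := by
  have hO : ∀ i, (OmegaSubgroup p H i : Set H) = {x | x ^ p ^ i = 1} := by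
    intro i
    let φ : H →* H := ⟨⟨fun x => x ^ p ^ i, one_pow _⟩, pab_pow hab i⟩
    have : OmegaSubgroup p H i = φ.ker := by
      apply le_antisymm
      · exact (Subgroup.closure_le _).2 fun x hx => hx
      · exact fun x hx => Subgroup.subset_closure hx
    rw [this]; rfl
  have hcard : ∀ i, 1 ≤ i → Nat.card (OmegaSubgroup p H i) = p ^ (3 + min i e) := by
    intro i hi
    rw [← hc i hi]
    exact Nat.card_congr (Equiv.setCongr (hO i))
  have hcard0 : Nat.card (OmegaSubgroup p H 0) = 1 := by
    have : Nat.card (OmegaSubgroup p H 0) = Nat.card {x : H | x ^ p ^ 0 = 1} := Nat.card_congr (Equiv.setCongr (hO 0))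
    rw [this]; simp
  have pp := hp.out.pos
  have hw1 : omegaInv p H 1 = 4 := by
    have := omega_card_rel (p := p) (H := H) (i := 0)
    rw [hcard0, one_mul, hcard 1 le_rfl, min_eq_left (by omega)] at this
    rw [omegaInv, this, hp.out.factorization_pow]; simp
  have hw2 : ∀ i, 1 ≤ i → omegaInv p H (i + 1) = if i + 1 ≤ e then 1 else 0 := by
    intro i hi
    have := omega_card_rel (p := p) (H := H) (i := i)
    rw [hcard i hi, hcard (i+1) (by omega)] at this
    rw [omegaInv, Nat.add_sub_cancel]
    split_ifs with h
    · rw [min_eq_left h, min_eq_left (by omega), show 3 + (i + 1) = 3 + i + 1 by ring, pow_succ p (3 + i)] at this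
      rw [Nat.eq_of_mul_eq_mul_left (by positivity) this, hp.out.factorization]; simp
    · rw [min_eq_right (by omega), min_eq_right (by omega)] at this
      rw [Nat.eq_of_mul_eq_mul_left (by positivity) (this.trans (mul_one _).symm)]; simp
  have key : ∀ j, 1 ≤ j → ∀ s : Finset ℕ, (∀ i, i ∈ s ↔ (1 ≤ i ∧ j ≤ omegaInv p H i)) → muInv p H j = s.card := by
    intro j hj s hs
    have hs' : s.card = Nat.card {i // i ∈ s} := by simp
    rw [muInv, hs']
    exact Nat.card_congr (Equiv.subtypeEquivRight fun i => (hs i).symm)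
  have hom : ∀ i, 1 ≤ i → omegaInv p H i = if i = 1 then 4 else if i ≤ e then 1 else 0 := by
    intro i hi
    rcases i with _ | _ | i
    · omega
    · simpa using hw1
    · rw [hw2 (i + 1) (by omega)]; simp
  have hA : ∀ j, 2 ≤ j → j ≤ 4 → muInv p H j = 1 := by
    intro j hj hj4
    rw [key j (by omega) {1}]
    · simp
    · intro i
      rw [Finset.mem_singleton]
      constructor
      · rintro rfl; refine ⟨le_rfl, ?_⟩; rw [hw1]; omega
      · rintro ⟨h1, h2⟩; rw [hom i h1] at h2; split_ifs at h2 <;> omega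
  intro i
  rcases i with _ | _ | _ | _ | i
  · rw [key 1 le_rfl (Finset.Icc 1 e)]
    · simp
    · intro i
      rw [Finset.mem_Icc]
      constructor
      · rintro ⟨h1, h2⟩; refine ⟨h1, ?_⟩; rw [hom i h1]; split_ifs <;> omega
      · rintro ⟨h1, h2⟩; rw [hom i h1] at h2; split_ifs at h2 <;> omega
  · exact hA _ (by omega) (by omega)
  · exact hA _ (by omega) (by omega)
  · exact hA _ (by omega) (by omega)
  · rw [key _ (by omega) ∅]
    · simp
    · intro i
      constructor
      · intro h; simp at h
      · rintro ⟨h1, h2⟩; rw [hom i h1] at h2; split_ifs at h2 <;> omega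

variable [h5 : Fact (5 ≤ p)] {d : ℕ} {θ : Th p}

namespace Gr
lemma pab (x y : Gr d θ) : (x * y) ^ p = x ^ p * y ^ p := by
  rw [pow_p, pow_p, pow_p]
  ext
  · rw [mul_t, mul_t]
    simp [mul_add, nsmul_iot, Th.fC, Th.vc, Th.vu, Th.fY, Th.bu, Th.bc, c2, c3]
  · simp
  · simp [Th.fY]
  · simp [Th.fU, Th.vu, Th.fY, Th.bu, c2]

lemma pow_pi (w : Gr d θ) (i : ℕ) : w ^ p ^ (i + 1) = ⟨p ^ (i + 1) * w.t, 0, 0, 0⟩ := by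
  induction i with
  | zero => simp [pow_p]
  | succ i ih =>
    rw [show p ^ (i + 1 + 1) = p ^ (i + 1) * p from pow_succ _ _, pow_mul, ih, pow_p]
    ext <;> simp
    ring

lemma counts (i : ℕ) (hi : 1 ≤ i) :
    Nat.card {g : Gr d θ // g ^ p ^ i = 1} = p ^ (3 + min i (d + 2)) := by
  obtain ⟨i, rfl⟩ : ∃ j, i = j + 1 := ⟨i - 1, by omega⟩
  haveI : NeZero (p ^ (d + 2)) := ⟨pow_ne_zero _ hp.out.ne_zero⟩
  have e1 : {g : Gr d θ // g ^ p ^ (i + 1) = 1} ≃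
      (nsmulAddMonoidHom (α := ZMod (p ^ (d + 2))) (p ^ (i + 1))).ker × ZMod p × ZMod p × ZMod p :=
    { toFun := fun g => (⟨g.1.t, by
        have := congrArg Gr.t ((pow_pi g.1 i).symm.trans g.2)
        rw [AddMonoidHom.mem_ker]
        simpa using this⟩, g.1.x, g.1.y, g.1.u)
      invFun := fun v => ⟨⟨v.1.1, v.2.1, v.2.2.1, v.2.2.2⟩, by
        have := v.1.2
        rw [AddMonoidHom.mem_ker] at this
        rw [pow_pi]
        ext
        · simpa using this
        all_goals simp⟩
      left_inv := fun _ => rfl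
      right_inv := fun _ => rfl }
  rw [Nat.card_congr e1, Nat.card_prod, IsAddCyclic.card_nsmulAddMonoidHom_ker, Nat.card_zmod]
  simp only [Nat.card_prod, Nat.card_zmod]
  have : (p ^ (d + 2)).gcd (p ^ (i + 1)) = p ^ (min (i + 1) (d + 2)) := by
    rcases le_total (i + 1) (d + 2) with h | h
    · rw [min_eq_left h, Nat.gcd_eq_right (pow_dvd_pow _ h)]
    · rw [min_eq_right h, Nat.gcd_eq_left (pow_dvd_pow _ h)]
  rw [this]; ring
end Gr
end typ

set_option linter.all false

section struct1
open scoped commutatorElement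
variable {p : ℕ} [hp : Fact p.Prime]

/-- weak regularity -/
def WReg (p : ℕ) (G : Type*) [Group G] : Prop :=
  ∀ x y : G, (∀ h ∈ ⁅Subgroup.closure {x, y}, Subgroup.closure {x, y}⁆, h ^ p = 1) → x ^ p * y ^ p = (x * y) ^ p

lemma wreg_of_reg {G : Type} [Group G] (h : IsRegularPGroup p G) : WReg p G := by
  intro x y hxy
  obtain ⟨z, hz, h⟩ := h x y
  have : MhoOne p ⁅Subgroup.closure {x, y}, Subgroup.closure {x, y}⁆ ≤ ⊥ := by
    refine (Subgroup.closure_le _).2 ?_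
    rintro _ ⟨g, hg, rfl⟩
    exact hxy g hg
  have hz1 : z = 1 := this hz
  rw [h, hz1, mul_one]

lemma wreg_sub {G : Type*} [Group G] (h : WReg p G) (H : Subgroup G) : WReg p H := by
  intro x y hxy
  apply Subtype.ext
  have := h x y ?_
  · simpa using this
  · intro g hg
    have e : Subgroup.closure {(x : G), (y : G)} = (Subgroup.closure {x, y}).map H.subtype := by
      rw [MonoidHom.map_closure]; congr 1; simp [Set.image_pair]
    rw [e, ← Subgroup.map_commutator] at hg
    obtain ⟨g', hg', rfl⟩ := hg
    have := hxy g' hg'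
    rw [← map_pow, this, map_one]

lemma claimA (n : ℕ) : ∀ (G : Type) [Group G] [Finite G], IsPGroup p G → WReg p G → Nat.card G ≤ n →
    ∀ x y : G, x ^ p = y ^ p → (x⁻¹ * y) ^ p = 1 := by
  induction n with
  | zero =>
    intro G _ _ _ _ h
    have := Nat.card_pos (α := G)
    omega
  | succ n ih =>
    intro G _ _ hG hR hn x y hxy
    by_cases htop : Subgroup.closure {x, y} = ⊤
    swap
    · have hlt := lt_of_not_ge (fun hle => htop (Subgroup.eq_top_of_le_card _ hle))
      have hx : x ∈ Subgroup.closure {x, y} := Subgroup.subset_closure (by simp)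
      have hy : y ∈ Subgroup.closure {x, y} := Subgroup.subset_closure (by simp)
      have := ih (Subgroup.closure {x, y}) (hG.to_subgroup _) (wreg_sub hR _) (by omega) ⟨x, hx⟩ ⟨y, hy⟩ (Subtype.ext hxy)
      simpa using congrArg Subtype.val this
    haveI : Group.IsNilpotent G := hG.isNilpotent
    rcases subsingleton_or_nontrivial G with hs | hnt
    · exact Subsingleton.elim _ _
    have hih : ∀ M : Subgroup G, M ≠ ⊤ → ∀ g ∈ M, ∀ h ∈ M, g ^ p = h ^ p → (g⁻¹ * h) ^ p = 1 := by
      intro M hM g hg h hh hgh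
      have hlt := lt_of_not_ge (fun hle => hM (Subgroup.eq_top_of_le_card _ hle))
      have := ih M (hG.to_subgroup _) (wreg_sub hR _) (by omega) ⟨g, hg⟩ ⟨h, hh⟩ (Subtype.ext hgh)
      simpa using congrArg Subtype.val this
    by_cases hyt : Subgroup.zpowers y = ⊤
    · have hx : x ∈ Subgroup.zpowers y := by rw [hyt]; trivial
      obtain ⟨k, rfl⟩ := hx
      have : Commute (y ^ k)⁻¹ y := ((Commute.refl y).zpow_left k).inv_left
      rw [this.mul_pow, ← hxy, inv_pow, inv_mul_cancel]
    obtain ⟨M, hM, hyM⟩ := (eq_top_or_exists_le_coatom (Subgroup.zpowers y)).resolve_left hyt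
    have hMn : M.Normal := Subgroup.NormalizerCondition.normal_of_coatom _ Group.normalizerCondition_of_isNilpotent hM
    have hyM' : y ∈ M := hyM (Subgroup.mem_zpowers y)
    have hw : (y⁻¹ * (x * y * x⁻¹)) ^ p = 1 := by
      apply hih M hM.1 y hyM' _ (hMn.conj_mem y hyM' x)
      rw [conj_pow, ← hxy]
      group
    have hct : commutator G ≠ ⊤ := (Group.IsSolvable.commutator_lt_top_of_nontrivial G).ne
    let S : Subgroup G :=
      { carrier := {g | g ∈ commutator G ∧ g ^ p = 1}
        mul_mem' := by
          rintro g h ⟨hg, hg1⟩ ⟨hh, hh1⟩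
          refine ⟨mul_mem hg hh, ?_⟩
          have := hih _ hct g⁻¹ (inv_mem hg) h hh (by rw [inv_pow, hg1, hh1, inv_one])
          simpa using this
        one_mem' := ⟨one_mem _, one_pow _⟩
        inv_mem' := by
          rintro g ⟨hg, hg1⟩
          exact ⟨inv_mem hg, by rw [inv_pow, hg1, inv_one]⟩ }
    have hSn : S.Normal := ⟨fun g ⟨hg, hg1⟩ h => ⟨(inferInstance : (commutator G).Normal).conj_mem g hg h, by rw [conj_pow, hg1]; group⟩⟩
    have hwS : y⁻¹ * (x * y * x⁻¹) ∈ S := by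
      refine ⟨?_, hw⟩
      have : y⁻¹ * (x * y * x⁻¹) = ⁅y⁻¹, x⁆ := by rw [commutatorElement_def]; group
      rw [this]
      exact Subgroup.commutator_mem_commutator (Subgroup.mem_top _) (Subgroup.mem_top _)
    have hcomm : (QuotientGroup.mk x : G ⧸ S) * QuotientGroup.mk y = QuotientGroup.mk y * QuotientGroup.mk x := by
      rw [← QuotientGroup.mk_mul, ← QuotientGroup.mk_mul, eq_comm, QuotientGroup.eq]
      have := hSn.conj_mem _ hwS x⁻¹
      convert this using 1; group
    have hcl : Subgroup.closure {(QuotientGroup.mk x : G ⧸ S), QuotientGroup.mk y} = ⊤ := by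
      have := congrArg (Subgroup.map (QuotientGroup.mk' S)) htop
      rw [MonoidHom.map_closure, Set.image_pair, Subgroup.map_top_of_surjective _ (QuotientGroup.mk'_surjective S)] at this
      exact this
    have hQ : IsMulCommutative (G ⧸ S) := by
      have := Subgroup.isMulCommutative_closure (k := {(QuotientGroup.mk x : G ⧸ S), QuotientGroup.mk y}) (by
        rintro a (rfl | rfl) b (rfl | rfl)
        · rfl
        · exact hcomm
        · exact hcomm.symm
        · rfl)
      refine ⟨⟨fun a b => ?_⟩⟩
      have ha : a ∈ Subgroup.closure {(QuotientGroup.mk x : G ⧸ S), QuotientGroup.mk y} := by rw [hcl]; trivial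
      have hb : b ∈ Subgroup.closure {(QuotientGroup.mk x : G ⧸ S), QuotientGroup.mk y} := by rw [hcl]; trivial
      exact congrArg Subtype.val (this.is_comm.comm ⟨a, ha⟩ ⟨b, hb⟩)
    rw [Subgroup.Normal.quotient_commutative_iff_commutator_le] at hQ
    have hfin : ∀ a b : G, (∀ h ∈ ⁅Subgroup.closure {a, b}, Subgroup.closure {a, b}⁆, h ^ p = 1) := by
      intro a b h hh
      exact (hQ (Subgroup.commutator_mono le_top le_top hh)).2
    have e1 := hR x (x⁻¹ * y) (hfin _ _)
    rw [mul_inv_cancel_left, ← hxy] at e1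
    exact mul_left_cancel (e1.trans (mul_one _).symm)

lemma lemL {G : Type*} [Group G] [Group.IsNilpotent G] (K M : Subgroup G) [K.Normal] [M.Normal] (h : ¬ M ≤ K) :
    ∃ g ∈ M, g ∉ K ∧ ∀ h : G, h * g * h⁻¹ * g⁻¹ ∈ K := by
  by_contra hcon
  push Not at hcon
  have : ∀ n, ∃ g ∈ M, g ∉ K ∧ g ∈ (⊤ : Subgroup G).lowerCentralSeries n := by
    intro n
    induction n with
    | zero =>
      obtain ⟨g, hg, hgK⟩ := SetLike.not_le_iff_exists.1 h
      exact ⟨g, hg, hgK, by simp⟩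
    | succ n ih =>
      obtain ⟨g, hg, hgK, hgn⟩ := ih
      obtain ⟨h, hh⟩ := hcon g hg hgK
      refine ⟨h * g * h⁻¹ * g⁻¹, mul_mem ((inferInstance : M.Normal).conj_mem g hg h) (inv_mem hg), hh, ?_⟩
      have : h * g * h⁻¹ * g⁻¹ = ⁅g, h⁆⁻¹ := by rw [commutatorElement_def]; group
      rw [this, Subgroup.lowerCentralSeries_succ]
      exact inv_mem (Subgroup.commutator_mem_commutator hgn (Subgroup.mem_top _))
  obtain ⟨n, hn⟩ := nilpotent_iff_lowerCentralSeries.mp (inferInstance : Group.IsNilpotent G)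
  obtain ⟨g, _, hgK, hg⟩ := this n
  rw [hn, Subgroup.mem_bot] at hg
  exact hgK (hg ▸ one_mem K)
end struct1

set_option linter.all false

section struct2
open scoped commutatorElement
variable {p : ℕ} [hp : Fact p.Prime]

lemma count_step {G : Type} [Group G] [Finite G]
    (hcl : ∀ x y : G, x ^ p = y ^ p → (x⁻¹ * y) ^ p = 1) (i : ℕ) :
    Nat.card {g : G // g ^ p ^ (i + 1) = 1} ≤ Nat.card {g : G // g ^ p ^ i = 1} * Nat.card {g : G // g ^ p = 1} := by
  classical
  let r : G → G := fun v => if h : ∃ g, g ^ p = v then h.choose else 1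
  have hr : ∀ g, (r (g ^ p)) ^ p = g ^ p := by
    intro g
    have h : ∃ g', g' ^ p = g ^ p := ⟨g, rfl⟩
    simp only [r, dif_pos h]
    exact h.choose_spec
  rw [← Nat.card_prod]
  refine Nat.card_le_card_of_injective (fun g : {g : G // g ^ p ^ (i + 1) = 1} =>
    ((⟨g.1 ^ p, by rw [← pow_mul, ← pow_succ']; exact g.2⟩, ⟨(r (g.1 ^ p))⁻¹ * g.1, hcl _ _ (hr _)⟩) :
      {g : G // g ^ p ^ i = 1} × {g : G // g ^ p = 1})) ?_
  rintro ⟨g, hg⟩ ⟨h, hh⟩ hgh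
  simp only [Prod.mk.injEq, Subtype.mk.injEq] at hgh
  obtain ⟨h1, h2⟩ := hgh
  rw [h1] at h2
  exact Subtype.ext (mul_left_cancel h2)

lemma struct1 {d : ℕ} {G : Type} [Group G] [Finite G] (hcard : Nat.card G = p ^ (d + 5)) (hR : IsRegularPGroup p G)
    (hT : HasTypeInvariants p G [d + 2, 1, 1, 1]) :
    (∀ x y : G, (x * y) ^ p = x ^ p * y ^ p) ∧ Nat.card {g : G // g ^ p = 1} = p ^ 4 ∧
    (∀ x y : G, (x * y * x⁻¹ * y⁻¹) ^ p = 1) ∧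
    ∃ a : G, orderOf a = p ^ (d + 2) ∧ ∀ g, ∃ k : ℤ, (g * (a ^ k)⁻¹) ^ p = 1 := by
  classical
  have pp := hp.out
  have p1 := pp.one_lt
  have hG : IsPGroup p G := IsPGroup.of_card hcard
  have hW := wreg_of_reg hR
  have hcl := claimA (p := p) (Nat.card G) G hG hW le_rfl
  have hex : ∃ f, ∀ g : G, g ^ p ^ f = 1 := ⟨d + 5, fun g => by rw [← hcard]; exact pow_card_eq_one'⟩
  obtain ⟨f, hf, hmin⟩ : ∃ f, (∀ g : G, g ^ p ^ f = 1) ∧ ∀ k < f, ∃ g : G, g ^ p ^ k ≠ 1 :=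
    ⟨Nat.find hex, Nat.find_spec hex, fun k hk => by simpa using Nat.find_min hex hk⟩
  have hf1 : 1 ≤ f := by
    by_contra h0
    have : f = 0 := by omega
    subst this
    have : Subsingleton G := ⟨fun x y => by have := hf x; have := hf y; simp_all⟩
    have h1 : Nat.card G ≤ 1 := Finite.card_le_one_iff_subsingleton.2 this
    rw [hcard] at h1
    have := Nat.one_lt_pow (show d + 5 ≠ 0 by omega) p1
    omega
  obtain ⟨a, ha⟩ := hmin (f - 1) (by omega)
  have hord : orderOf a = p ^ f := by
    obtain ⟨f', rfl⟩ : ∃ f', f = f' + 1 := ⟨f - 1, by omega⟩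
    exact orderOf_eq_prime_pow ha (hf a)
  have hΩtop : ∀ i, f ≤ i → OmegaSubgroup p G i = ⊤ := by
    intro i hi
    rw [eq_top_iff]
    intro g _
    apply Subgroup.subset_closure
    show g ^ p ^ i = 1
    obtain ⟨j, rfl⟩ := Nat.exists_eq_add_of_le hi
    rw [pow_add, pow_mul, hf g, one_pow]
  have hw0 : ∀ i, f < i → omegaInv p G i = 0 := by
    intro i hi
    rw [omegaInv, hΩtop i (by omega), hΩtop (i - 1) (by omega)]; simp
  let O : Subgroup G :=
    { carrier := {g | g ^ p = 1}
      mul_mem' := by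
        intro g h (hg : g ^ p = 1) (hh : h ^ p = 1)
        have := hcl g⁻¹ h (by rw [inv_pow, hg, hh, inv_one])
        simpa using this
      one_mem' := one_pow _
      inv_mem' := by
        intro g (hg : g ^ p = 1)
        show g⁻¹ ^ p = 1
        rw [inv_pow, hg, inv_one] }
  have hOn : O.Normal := ⟨fun g (hg : g ^ p = 1) h => by
    show (h * g * h⁻¹) ^ p = 1
    rw [conj_pow, hg]; group⟩
  have hO1 : OmegaSubgroup p G 1 = O := by
    apply le_antisymm
    · exact (Subgroup.closure_le _).2 fun x (hx : x ^ p ^ 1 = 1) => by rw [pow_one] at hx; exact hx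
    · exact fun x (hx : x ^ p = 1) => Subgroup.subset_closure (by show x ^ p ^ 1 = 1; rwa [pow_one])
  have hO0 : OmegaSubgroup p G 0 = ⊥ := by
    rw [OmegaSubgroup, Subgroup.closure_eq_bot_iff]
    intro x hx
    simpa using hx
  have hOc : Nat.card O = Nat.card {g : G // g ^ p = 1} := rfl
  obtain ⟨k1, hk1le, hk1⟩ := (Nat.dvd_prime_pow pp).1 (hcard ▸ Subgroup.card_subgroup_dvd_card O)
  have hw1 : omegaInv p G 1 = k1 := by
    rw [omegaInv, hO1]
    simp only [Nat.sub_self, hO0, Subgroup.relIndex_bot_left, hk1]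
    rw [pp.factorization_pow]; simp
  have hfin : ∀ j, 1 ≤ j → Finite {i : ℕ // 1 ≤ i ∧ j ≤ omegaInv p G i} := by
    intro j hj
    refine Set.Finite.subset (Set.finite_Icc 1 f) ?_
    rintro i ⟨h1, h2⟩
    refine ⟨h1, ?_⟩
    by_contra h
    rw [hw0 i (by omega)] at h2
    omega
  have m1 : muInv p G 1 = d + 2 := hT 0
  have m2 : muInv p G 2 = 1 := hT 1
  have m4 : muInv p G 4 = 1 := hT 3
  have m5 : muInv p G 5 = 0 := hT 4
  rw [muInv] at m1 m2 m4 m5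
  obtain ⟨⟨⟨i0, hi01, hi04⟩⟩⟩ := Nat.card_pos_iff.1 (by rw [m4]; exact one_pos)
  have hss := (Nat.card_eq_one_iff_unique.1 m2).1
  have hle1 : ∀ i, 1 ≤ i → i ≠ i0 → omegaInv p G i ≤ 1 := by
    intro i hi hne
    by_contra h
    have := hss.elim ⟨i, hi, by omega⟩ ⟨i0, hi01, by omega⟩
    exact hne (congrArg Subtype.val this)
  have hlt5 : ∀ i, 1 ≤ i → omegaInv p G i ≤ 4 := by
    intro i hi
    by_contra h
    haveI := hfin 5 (by norm_num)
    have := Nat.card_pos_iff.2 ⟨⟨(⟨i, hi, by omega⟩ : {i : ℕ // 1 ≤ i ∧ 5 ≤ omegaInv p G i})⟩, this⟩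
    omega
  have hi0 : i0 = 1 := by
    by_contra hne
    have hk : k1 ≤ 1 := by rw [← hw1]; exact hle1 1 le_rfl (Ne.symm hne)
    have hc1 : Nat.card {g : G // g ^ p = 1} ≤ p := by
      rw [← hOc, hk1]
      calc p ^ k1 ≤ p ^ 1 := Nat.pow_le_pow_right pp.pos hk
        _ = p := pow_one p
    have hci : ∀ i, Nat.card {g : G // g ^ p ^ i = 1} ≤ p ^ i := by
      intro i
      induction i with
      | zero => simp
      | succ i ih =>
        refine (count_step hcl i).trans ?_
        rw [pow_succ]
        exact Nat.mul_le_mul ih hc1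
    have hcf : Nat.card G ≤ p ^ f := by
      refine le_trans (le_of_eq ?_) (hci f)
      exact Nat.card_congr (Equiv.subtypeUnivEquiv hf).symm
    have hcyc : IsCyclic G := isCyclic_of_orderOf_eq_card a (le_antisymm (Nat.le_of_dvd Nat.card_pos (orderOf_dvd_natCard a)) (hord ▸ hcf))
    have hcm : ∀ x y : G, x * y = y * x := fun x y => (IsCyclic.isMulCommutative (α := G)).is_comm.comm x y
    have hab : ∀ x y : G, (x * y) ^ p = x ^ p * y ^ p := fun x y => (show Commute x y from hcm x y).mul_pow p
    have hΩ : ∀ i, Nat.card (OmegaSubgroup p G i) = Nat.card {g : G // g ^ p ^ i = 1} := by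
      intro i
      let φ : G →* G := ⟨⟨fun x => x ^ p ^ i, one_pow _⟩, pab_pow hab i⟩
      have : OmegaSubgroup p G i = φ.ker := by
        apply le_antisymm
        · exact (Subgroup.closure_le _).2 fun x hx => hx
        · exact fun x hx => Subgroup.subset_closure hx
      rw [this]; rfl
    obtain ⟨i, rfl⟩ : ∃ i, i0 = i + 1 := ⟨i0 - 1, by omega⟩
    have h1 := omega_card_rel (p := p) (H := G) (i := i)
    have h2 := count_step hcl i
    rw [← hΩ, ← hΩ, ← h1] at h2
    have h3 : (OmegaSubgroup p G i).relIndex (OmegaSubgroup p G (i + 1)) ≤ p :=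
      (Nat.le_of_mul_le_mul_left h2 Nat.card_pos).trans hc1
    rw [omegaInv, Nat.add_sub_cancel] at hi04
    have h4 : p ^ 4 ∣ (OmegaSubgroup p G i).relIndex (OmegaSubgroup p G (i + 1)) :=
      (pow_dvd_pow p hi04).trans (Nat.ordProj_dvd _ _)
    have h5 : 0 < (OmegaSubgroup p G i).relIndex (OmegaSubgroup p G (i + 1)) := by
      rcases Nat.eq_zero_or_pos ((OmegaSubgroup p G i).relIndex (OmegaSubgroup p G (i + 1))) with h | h
      · rw [h] at hi04; simp at hi04
      · exact h
    have h6 := Nat.le_of_dvd h5 h4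
    have h7 : p ^ 1 < p ^ 4 := Nat.pow_lt_pow_right p1 (by norm_num)
    rw [pow_one] at h7
    omega
  subst hi0
  have hk4 : k1 = 4 := by rw [← hw1]; exact le_antisymm (hlt5 1 le_rfl) hi04
  subst hk4
  have hfge : d + 2 ≤ f := by
    rw [← m1]
    have : Nat.card {i // i ∈ Finset.Icc 1 f} = f := by
      rw [Nat.card_eq_fintype_card, Fintype.card_coe, Nat.card_Icc]; omega
    conv_rhs => rw [← this]
    refine Nat.card_le_card_of_injective (fun i : {i : ℕ // 1 ≤ i ∧ 1 ≤ omegaInv p G i} => (⟨i.1, ?_⟩ : {i // i ∈ Finset.Icc 1 f})) ?_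
    · rw [Finset.mem_Icc]
      refine ⟨i.2.1, ?_⟩
      by_contra h
      have := i.2.2
      rw [hw0 i (by omega)] at this
      omega
    · rintro ⟨i, hi⟩ ⟨j, hj⟩ hij
      simpa using hij
  have hindex : Nat.card (G ⧸ O) = p ^ (d + 1) := by
    have := Subgroup.card_mul_index O
    rw [hk1, hcard, show d + 5 = 4 + (d + 1) by ring, pow_add] at this
    exact Nat.eq_of_mul_eq_mul_left (by have := pp.pos; positivity) this
  have hobar : orderOf (QuotientGroup.mk a : G ⧸ O) = p ^ (f - 1) := by
    obtain ⟨f', rfl⟩ : ∃ f', f = f' + 2 := ⟨f - 2, by omega⟩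
    apply orderOf_eq_prime_pow
    · rw [← QuotientGroup.mk_pow, QuotientGroup.eq_one_iff]
      intro (h : (a ^ p ^ f') ^ p = 1)
      rw [← pow_mul, ← pow_succ] at h
      exact ha h
    · rw [← QuotientGroup.mk_pow, QuotientGroup.eq_one_iff]
      show (a ^ p ^ (f' + 1)) ^ p = 1
      rw [← pow_mul, ← pow_succ]
      exact hf a
  have hfle : f - 1 ≤ d + 1 := by
    have := orderOf_dvd_natCard (QuotientGroup.mk a : G ⧸ O)
    rw [hobar, hindex] at this
    exact (Nat.pow_dvd_pow_iff_le_right p1).1 this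
  have hfe : f = d + 2 := by omega
  subst hfe
  have hz : Subgroup.zpowers (QuotientGroup.mk a : G ⧸ O) = ⊤ := by
    apply Subgroup.eq_top_of_card_eq
    rw [Nat.card_zpowers, hobar, hindex]; rfl
  have hcyc : IsCyclic (G ⧸ O) := isCyclic_iff_exists_zpowers_eq_top.2 ⟨_, hz⟩
  have hcO : commutator G ≤ O := Subgroup.Normal.quotient_commutative_iff_commutator_le.1 (IsCyclic.isMulCommutative (α := G ⧸ O))
  refine ⟨fun x y => ?_, ?_, fun x y => ?_, a, hord, fun g => ?_⟩
  · refine (hW x y fun h hh => ?_).symm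
    exact hcO (Subgroup.commutator_mono le_top le_top hh)
  · rw [← hOc, hk1]
  · have : ⁅x, y⁆ ∈ O := hcO (Subgroup.commutator_mem_commutator (Subgroup.mem_top _) (Subgroup.mem_top _))
    exact this
  · have : (QuotientGroup.mk g : G ⧸ O) ∈ Subgroup.zpowers (QuotientGroup.mk a : G ⧸ O) := by rw [hz]; trivial
    obtain ⟨k, hk⟩ := this
    refine ⟨k, ?_⟩
    have hk' : (QuotientGroup.mk (a ^ k) : G ⧸ O) = QuotientGroup.mk g := hk
    rw [QuotientGroup.eq] at hk'
    have := hOn.conj_mem _ hk' (a ^ k)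
    have h2 : (a ^ k * ((a ^ k)⁻¹ * g) * (a ^ k)⁻¹) ^ p = 1 := this
    rwa [mul_inv_cancel_left] at h2
end struct2

set_option linter.all false

lemma zmod_ind {n : ℕ} [NeZero n] {P : ZMod n → Prop} (h0 : P 0) (h1 : ∀ k, P k → P (1 + k)) (k : ZMod n) : P k := by
  obtain ⟨k, rfl⟩ := ZMod.natCast_zmod_surjective k
  induction k with
  | zero => simpa using h0
  | succ k ih => have := h1 _ ih; rwa [add_comm, ← Nat.cast_succ] at this

section zpw
variable {H : Type*} [Group H] {n : ℕ} [NeZero n]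

/-- power with exponent in `ZMod n` -/
def zp (g : H) (k : ZMod n) : H := g ^ k.val

lemma zp_nat {g : H} (hg : g ^ n = 1) (k : ℕ) : zp g (k : ZMod n) = g ^ k := by
  rw [zp, ZMod.val_natCast, ← pow_mod_orderOf, ← pow_mod_orderOf g k]
  rw [Nat.mod_mod_of_dvd _ (orderOf_dvd_of_pow_eq_one hg)]

@[simp] lemma zp_zero (g : H) : zp g (0 : ZMod n) = 1 := by simp [zp]

lemma zp_one {g : H} (hg : g ^ n = 1) : zp g (1 : ZMod n) = g := by
  have := zp_nat hg 1
  simpa using this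

lemma zp_add {g : H} (hg : g ^ n = 1) (k l : ZMod n) : zp g (k + l) = zp g k * zp g l := by
  obtain ⟨k, rfl⟩ := ZMod.natCast_zmod_surjective k
  obtain ⟨l, rfl⟩ := ZMod.natCast_zmod_surjective l
  rw [← Nat.cast_add, zp_nat hg, zp_nat hg, zp_nat hg, pow_add]

lemma zp_zp {g : H} (hg : g ^ n = 1) (k l : ZMod n) : zp (zp g k) l = zp g (k * l) := by
  obtain ⟨k, rfl⟩ := ZMod.natCast_zmod_surjective k
  obtain ⟨l, rfl⟩ := ZMod.natCast_zmod_surjective l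
  rw [← Nat.cast_mul, zp_nat hg, zp_nat hg, zp_nat, pow_mul]
  rw [← pow_mul, mul_comm, pow_mul, hg, one_pow]

lemma zp_pow_n {g : H} (hg : g ^ n = 1) (k : ZMod n) : (zp g k) ^ n = 1 := by
  rw [zp, ← pow_mul, mul_comm, pow_mul, hg, one_pow]

lemma zp_commute {g h : H} (hgh : Commute g h) (k l : ZMod n) : Commute (zp g k) (zp h l) :=
  (hgh.pow_right _).pow_left _
lemma zp_commute_r {g h : H} (hgh : Commute g h) (l : ZMod n) : Commute g (zp h l) :=
  (hgh.pow_right _)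

lemma zp_mul {g h : H} (hgh : Commute g h) (k : ZMod n) : zp (g * h) k = zp g k * zp h k :=
  hgh.mul_pow _

lemma zp_conj {g g' h : H} (hh : h * g = g' * h) (k : ZMod n) : h * zp g k = zp g' k * h := by
  have : g' = h * g * h⁻¹ := by rw [hh]; group
  rw [this, zp, zp, conj_pow]; group

lemma zp_inv {g : H} (hg : g ^ n = 1) (k : ZMod n) : (zp g k)⁻¹ = zp g (-k) := by
  rw [inv_eq_iff_mul_eq_one, ← zp_add hg, add_neg_cancel, zp_zero]

lemma zp_map {K : Type*} [Group K] (f : H ≃* K) (g : H) (k : ZMod n) : f (zp g k) = zp (f g) k := map_pow f g _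
end zpw

section iso
variable {p : ℕ} [hp : Fact p.Prime]

/-- relations -/
structure GRel {H : Type*} [Group H] (d : ℕ) (θ : Th p) (a x y u c : H) : Prop where
  hcdef : c = a ^ p ^ (d + 1)
  hx : x ^ p = 1
  hy : y ^ p = 1
  hu : u ^ p = 1
  ha : a ^ p ^ (d + 2) = 1
  cen : ∀ g, Commute c g
  yu : Commute y u
  xu : x * u = u * zp c θ.k2 * x
  xy : x * y = zp u θ.k1 * y * zp c θ.e * x
  au : a * u = u * zp c θ.la * a
  ay : a * y = zp u θ.h * y * zp c θ.mu * a
  ax : a * x = zp u θ.b2 * zp y θ.nu * zp c θ.b3 * x * a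
  nd : ∀ i j k l : ZMod p, zp u k * zp y j * zp c l * zp x i = 1 → i = 0 ∧ j = 0 ∧ k = 0 ∧ l = 0

/-- the map -/
def gf {H : Type*} [Group H] {d : ℕ} {θ : Th p} (a x y u : H) (w : Gr d θ) : H :=
  haveI : NeZero (p ^ (d + 2)) := ⟨pow_ne_zero _ hp.out.ne_zero⟩
  zp u w.u * zp y w.y * zp x w.x * zp a w.t

namespace GRel
variable {H : Type*} [Group H] {d : ℕ} {θ : Th p} {a x y u c : H} (R : GRel d θ a x y u c)
include R

lemma hcp : c ^ p = 1 := by rw [R.hcdef, ← pow_mul, ← pow_succ, R.ha]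

lemma Vmul (k j l k' j' l' : ZMod p) : (zp u k * zp y j * zp c l) * (zp u k' * zp y j' * zp c l') =
    zp u (k + k') * zp y (j + j') * zp c (l + l') := by
  rw [zp_add R.hu, zp_add R.hy, zp_add R.hcp]
  have h1 := (zp_commute_r (n := p) (zp_commute R.yu j k').symm 1)
  have e1 : zp c l * zp u k' = zp u k' * zp c l := zp_commute (R.cen u) l k'
  have e2 : zp c l * zp y j' = zp y j' * zp c l := zp_commute (R.cen y) l j'
  have e3 : zp y j * zp u k' = zp u k' * zp y j := zp_commute R.yu j k'
  calc _ = zp u k * zp y j * (zp c l * zp u k') * zp y j' * zp c l' := by group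
    _ = zp u k * (zp y j * zp u k') * (zp c l * zp y j') * zp c l' := by rw [e1]; group
    _ = _ := by rw [e2, e3]; group

lemma Vpow (k j l : ZMod p) (i : ZMod p) : zp (zp u k * zp y j * zp c l) i = zp u (k * i) * zp y (j * i) * zp c (l * i) := by
  rw [zp_mul, zp_mul, zp_zp R.hu, zp_zp R.hy, zp_zp R.hcp]
  · exact (zp_commute R.yu _ _).symm
  · exact (zp_commute_r ((R.cen _).symm) _)

lemma Xmul (k j l : ZMod p) : x * (zp u k * zp y j * zp c l) =
    zp u (k + θ.k1 * j) * zp y j * zp c (l + θ.k2 * k + θ.e * j) * x := by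
  have h1 := zp_conj R.xu k
  have h2 := zp_conj R.xy j
  have h3 : x * zp c l = zp c l * x := (zp_commute_r ((R.cen x).symm) l)
  have e1 : u * zp c θ.k2 = zp u (1 : ZMod p) * zp y (0 : ZMod p) * zp c θ.k2 := by rw [zp_one R.hu]; simp
  have e2 : zp u θ.k1 * y * zp c θ.e = zp u θ.k1 * zp y (1 : ZMod p) * zp c θ.e := by rw [zp_one R.hy]
  have e3 : zp c l = zp u (0 : ZMod p) * zp y (0 : ZMod p) * zp c l := by simp
  rw [e1, R.Vpow] at h1
  rw [e2, R.Vpow] at h2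
  rw [← mul_assoc, ← mul_assoc, h1, mul_assoc _ x, h2, mul_assoc _ _ (zp c l), mul_assoc _ x, h3, e3, ← mul_assoc, ← mul_assoc, R.Vmul, R.Vmul]
  congr 3 <;> ring_nf

lemma Amul (k j l : ZMod p) : a * (zp u k * zp y j * zp c l) =
    zp u (k + θ.h * j) * zp y j * zp c (l + θ.la * k + θ.mu * j) * a := by
  have h1 := zp_conj R.au k
  have h2 := zp_conj R.ay j
  have h3 : a * zp c l = zp c l * a := (zp_commute_r ((R.cen a).symm) l)
  have e1 : u * zp c θ.la = zp u (1 : ZMod p) * zp y (0 : ZMod p) * zp c θ.la := by rw [zp_one R.hu]; simp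
  have e2 : zp u θ.h * y * zp c θ.mu = zp u θ.h * zp y (1 : ZMod p) * zp c θ.mu := by rw [zp_one R.hy]
  have e3 : zp c l = zp u (0 : ZMod p) * zp y (0 : ZMod p) * zp c l := by simp
  rw [e1, R.Vpow] at h1
  rw [e2, R.Vpow] at h2
  rw [← mul_assoc, ← mul_assoc, h1, mul_assoc _ a, h2, mul_assoc _ _ (zp c l), mul_assoc _ a, h3, e3, ← mul_assoc, ← mul_assoc, R.Vmul, R.Vmul]
  congr 3 <;> ring_nf

variable [h5 : Fact (5 ≤ p)]

lemma Axpow (n : ℕ) : (zp u θ.b2 * zp y θ.nu * zp c θ.b3 * x) ^ n =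
    zp u ((n : ZMod p) * θ.b2 + c2 (n : ZMod p) * (θ.k1 * θ.nu)) * zp y ((n : ZMod p) * θ.nu) *
     zp c ((n : ZMod p) * θ.b3 + c2 (n : ZMod p) * (θ.e * θ.nu + θ.k2 * θ.b2) + c3 (n : ZMod p) * (θ.k1 * θ.k2 * θ.nu)) * x ^ n := by
  have h2 := two_ne (p := p)
  have h3 := three_ne (p := p)
  have h62 : (6 : ZMod p) = 2 * 3 := by norm_num
  induction n with
  | zero => simp [c2, c3]
  | succ n ih =>
    rw [pow_succ', ih, mul_assoc _ x, ← mul_assoc x, R.Xmul, ← mul_assoc, ← mul_assoc, R.Vmul, mul_assoc _ x, ← pow_succ']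
    congr 1
    congr 1
    · congr 1
      · congr 1; simp only [c2]; push_cast; field_simp; ring
      · congr 1; push_cast; ring
    · congr 1; simp only [c2, c3, h62]; push_cast; field_simp; ring

lemma Ax (i : ZMod p) : a * zp x i =
    zp u (i * θ.b2 + c2 i * (θ.k1 * θ.nu)) * zp y (i * θ.nu) *
     zp c (i * θ.b3 + c2 i * (θ.e * θ.nu + θ.k2 * θ.b2) + c3 i * (θ.k1 * θ.k2 * θ.nu)) * zp x i * a := by
  obtain ⟨n, rfl⟩ := ZMod.natCast_zmod_surjective i
  have := zp_conj R.ax (n : ZMod p)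
  rw [this]
  have e : (zp u θ.b2 * zp y θ.nu * zp c θ.b3 * x) ^ p = 1 := by
    rw [R.Axpow]; simp [c2, c3, R.hx]
  rw [zp_nat e, R.Axpow, zp_nat R.hx]

lemma f_V (k j l i : ZMod p) (t : ZMod (p ^ (d + 2))) :
    haveI : NeZero (p ^ (d + 2)) := ⟨pow_ne_zero _ hp.out.ne_zero⟩
    gf a x y u (⟨t + iot p d l, i, j, k⟩ : Gr d θ) = zp u k * zp y j * zp c l * zp x i * zp a t := by
  haveI : NeZero (p ^ (d + 2)) := ⟨pow_ne_zero _ hp.out.ne_zero⟩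
  have e : zp a (iot p d l) = zp c l := by
    obtain ⟨n, rfl⟩ := ZMod.natCast_zmod_surjective l
    have : iot p d (n : ZMod p) = ((p ^ (d + 1) * n : ℕ) : ZMod (p ^ (d + 2))) := by
      have := iot_int (p := p) d n
      push_cast at this ⊢
      rw [this]; ring
    rw [this, zp_nat R.ha, zp_nat R.hcp, R.hcdef, pow_mul]
  simp only [gf]
  rw [zp_add R.ha, e]
  have h1 : zp c l * zp x i = zp x i * zp c l := zp_commute (R.cen x) l i
  have h2 : zp c l * zp a t = zp a t * zp c l := zp_commute_r ((R.cen _).pow_left _) _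
  rw [mul_assoc _ (zp c l), h1, mul_assoc, mul_assoc _ _ (zp a t), mul_assoc _ _ (zp a t), h2]


lemma f_V' (w : Gr d θ) (l : ZMod p) (k j i : ZMod p) (t : ZMod (p ^ (d + 2))) (h1 : w.t = t + iot p d l)
    (h2 : w.x = i) (h3 : w.y = j) (h4 : w.u = k) :
    haveI : NeZero (p ^ (d + 2)) := ⟨pow_ne_zero _ hp.out.ne_zero⟩
    gf a x y u w = zp u k * zp y j * zp c l * zp x i * zp a t := by
  have : w = ⟨t + iot p d l, i, j, k⟩ := Gr.ext h1 h2 h3 h4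
  rw [this, R.f_V]

lemma f_u (w : Gr d θ) : gf a x y u ((⟨0, 0, 0, 1⟩ : Gr d θ) * w) = u * gf a x y u w := by
  rw [R.f_V' ((⟨0, 0, 0, 1⟩ : Gr d θ) * w) 0 (1 + w.u) w.y w.x w.t, gf, zp_add R.hu, zp_one R.hu]
  · simp [mul_assoc]
  · simp [Gr.mul_t, Th.fC, Th.vc, Th.vu, Th.fY, Th.bu, Th.bc, c2, c3]
  · simp
  · simp [Th.fY]
  · simp [Th.fU, Th.vu, Th.fY, Th.bu, c2]

lemma f_y (w : Gr d θ) : gf a x y u ((⟨0, 0, 1, 0⟩ : Gr d θ) * w) = y * gf a x y u w := by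
  rw [R.f_V' ((⟨0, 0, 1, 0⟩ : Gr d θ) * w) 0 (w.u) (1 + w.y) w.x w.t, gf, zp_add R.hy, zp_one R.hy]
  · have : y * zp u w.u = zp u w.u * y := zp_commute_r R.yu _
    simp only [← mul_assoc, this, zp_zero, mul_one]
  · simp [Gr.mul_t, Th.fC, Th.vc, Th.vu, Th.fY, Th.bu, Th.bc, c2, c3]
  · simp
  · simp [Th.fY]
  · simp [Th.fU, Th.vu, Th.fY, Th.bu, c2]

lemma f_x (w : Gr d θ) : gf a x y u ((⟨0, 1, 0, 0⟩ : Gr d θ) * w) = x * gf a x y u w := by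
  rw [R.f_V' ((⟨0, 1, 0, 0⟩ : Gr d θ) * w) (θ.k2 * w.u + θ.e * w.y) (w.u + θ.k1 * w.y) (w.y) (1 + w.x) w.t, gf, zp_add R.hx, zp_one R.hx]
  · have := R.Xmul w.u w.y 0
    simp only [zp_zero, mul_one, zero_add] at this
    simp only [← mul_assoc] at this ⊢
    rw [this]
  · simp [Gr.mul_t, Th.fC, Th.vc, Th.vu, Th.fY, Th.bu, Th.bc, c2, c3]
    ring
  · simp
  · simp [Th.fY]
  · simp [Th.fU, Th.vu, Th.fY, Th.bu, c2]

lemma f_a (w : Gr d θ) : gf a x y u ((⟨1, 0, 0, 0⟩ : Gr d θ) * w) = a * gf a x y u w := by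
  haveI : NeZero (p ^ (d + 2)) := ⟨pow_ne_zero _ hp.out.ne_zero⟩
  rw [R.f_V' ((⟨1, 0, 0, 0⟩ : Gr d θ) * w) (θ.la * w.u + θ.mu * w.y + 
     (w.x * θ.b3 + c2 w.x * (θ.e * θ.nu + θ.k2 * θ.b2) + c3 w.x * (θ.k1 * θ.k2 * θ.nu))) 
     (w.u + θ.h * w.y + (w.x * θ.b2 + c2 w.x * (θ.k1 * θ.nu))) (w.y + w.x * θ.nu) (w.x) (1 + w.t), gf, zp_add R.ha, zp_one R.ha]
  · have h1 := R.Amul w.u w.y 0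
    have h2 := R.Ax w.x
    simp only [zp_zero, mul_one, zero_add] at h1
    conv_rhs => rw [← mul_assoc, ← mul_assoc, h1, mul_assoc _ a, h2]
    rw [← R.Vmul]
    simp only [← mul_assoc]
  · simp [Gr.mul_t, Th.fC, Th.vc, Th.vu, Th.fY, Th.bu, Th.bc, c2, c3]
    ring
  · simp
  · simp [Th.fY]
  · simp [Th.fU, Th.vu, Th.fY, Th.bu, c2]
    ring

lemma f_mul (w w' : Gr d θ) : gf a x y u (w * w') = gf a x y u w * gf a x y u w' := by
  haveI : NeZero (p ^ (d + 2)) := ⟨pow_ne_zero _ hp.out.ne_zero⟩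
  have h1 : gf a x y u (1 : Gr d θ) = 1 := by simp [gf]
  revert w'
  obtain ⟨t, i, j, k⟩ := w
  have ht : ∀ w' : Gr d θ, gf a x y u ((⟨t, 0, 0, 0⟩ : Gr d θ) * w') = gf a x y u (⟨t, 0, 0, 0⟩ : Gr d θ) * gf a x y u w' := by
    induction t using zmod_ind with
    | h0 => intro w'; rw [show (⟨0, 0, 0, 0⟩ : Gr d θ) = 1 from rfl, h1, one_mul, one_mul]
    | h1 t ih =>
      intro w'
      have : (⟨1 + t, 0, 0, 0⟩ : Gr d θ) = ⟨1, 0, 0, 0⟩ * ⟨t, 0, 0, 0⟩ := by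
        ext
        · simp [Gr.mul_t, Th.fC, Th.vc, Th.vu, Th.fY, Th.bu, Th.bc, c2, c3]
        · simp
        · simp [Th.fY]
        · simp [Th.fU, Th.vu, Th.fY, Th.bu, c2]
      rw [this, R.f_a, mul_assoc, R.f_a, ih, mul_assoc]
  have hi : ∀ w' : Gr d θ, gf a x y u ((⟨t, i, 0, 0⟩ : Gr d θ) * w') = gf a x y u (⟨t, i, 0, 0⟩ : Gr d θ) * gf a x y u w' := by
    induction i using zmod_ind with
    | h0 => exact ht
    | h1 i ih =>
      intro w'
      have : (⟨t, 1 + i, 0, 0⟩ : Gr d θ) = ⟨0, 1, 0, 0⟩ * ⟨t, i, 0, 0⟩ := by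
        ext
        · simp [Gr.mul_t, Th.fC, Th.vc, Th.vu, Th.fY, Th.bu, Th.bc, c2, c3]
        · simp
        · simp [Th.fY]
        · simp [Th.fU, Th.vu, Th.fY, Th.bu, c2]
      rw [this, R.f_x, mul_assoc, R.f_x, ih, mul_assoc]
  have hj : ∀ w' : Gr d θ, gf a x y u ((⟨t, i, j, 0⟩ : Gr d θ) * w') = gf a x y u (⟨t, i, j, 0⟩ : Gr d θ) * gf a x y u w' := by
    induction j using zmod_ind with
    | h0 => exact hi
    | h1 j ih =>
      intro w'
      have : (⟨t, i, 1 + j, 0⟩ : Gr d θ) = ⟨0, 0, 1, 0⟩ * ⟨t, i, j, 0⟩ := by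
        ext
        · simp [Gr.mul_t, Th.fC, Th.vc, Th.vu, Th.fY, Th.bu, Th.bc, c2, c3]
        · simp
        · simp [Th.fY]
        · simp [Th.fU, Th.vu, Th.fY, Th.bu, c2]
      rw [this, R.f_y, mul_assoc, R.f_y, ih, mul_assoc]
  induction k using zmod_ind with
  | h0 => exact hj
  | h1 k ih =>
    intro w'
    have : (⟨t, i, j, 1 + k⟩ : Gr d θ) = ⟨0, 0, 0, 1⟩ * ⟨t, i, j, k⟩ := by
      ext
      · simp [Gr.mul_t, Th.fC, Th.vc, Th.vu, Th.fY, Th.bu, Th.bc, c2, c3]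
      · simp
      · simp [Th.fY]
      · simp [Th.fU, Th.vu, Th.fY, Th.bu, c2]
    rw [this, R.f_u, mul_assoc, R.f_u, ih, mul_assoc]

lemma iso [Finite H] (hcard : Nat.card H = p ^ (d + 5)) : Nonempty (Gr d θ ≃* H) := by
  haveI : NeZero (p ^ (d + 2)) := ⟨pow_ne_zero _ hp.out.ne_zero⟩
  let F : Gr d θ →* H := MonoidHom.mk' (gf a x y u) R.f_mul
  have hinj : Function.Injective F := by
    rw [injective_iff_map_eq_one]
    intro w hw
    have h1 : gf a x y u (w ^ p) = 1 := by
      have := map_pow F w p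
      rw [hw, one_pow] at this
      exact this
    rw [Gr.pow_p] at h1
    simp only [gf, zp_zero, one_mul] at h1
    have hord : orderOf a = p ^ (d + 2) := by
      apply orderOf_eq_prime_pow
      · intro h
        have := R.nd 0 0 0 1 (by rw [R.hcdef, h]; simp [zp])
        exact one_ne_zero this.2.2.2
      · exact R.ha
    have h2 : (p : ZMod (p ^ (d + 2))) * w.t = 0 := by
      rw [zp] at h1
      have := orderOf_dvd_of_pow_eq_one h1
      rw [hord] at this
      have h3 := Nat.eq_zero_of_dvd_of_lt this (ZMod.val_lt _)
      exact (ZMod.val_eq_zero _).1 h3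
    obtain ⟨l, hl⟩ := p_mul_eq_zero d h2
    have h4 := R.f_V' w l w.u w.y w.x 0 (by rw [hl, zero_add]) rfl rfl rfl
    rw [show gf a x y u w = 1 from hw, zp_zero, mul_one] at h4
    obtain ⟨e1, e2, e3, e4⟩ := R.nd _ _ _ _ h4.symm
    ext
    · rw [hl, e4, map_zero]; rfl
    · exact e1
    · exact e2
    · exact e3
  have hbij : Function.Bijective F := by
    rw [Nat.bijective_iff_injective_and_card]
    exact ⟨hinj, by rw [Gr.card_eq, hcard]⟩
  exact ⟨MulEquiv.ofBijective F hbij⟩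

end GRel
end iso

set_option linter.all false

section struct3
variable {p : ℕ} [hp : Fact p.Prime]

lemma ext_sub {G : Type*} [Group G] [Finite G] (K : Subgroup G) [hK : K.Normal] (g : G) (hg : g ^ p = 1)
    (hc : ∀ h : G, h * g * h⁻¹ * g⁻¹ ∈ K) :
    ∃ K' : Subgroup G, K'.Normal ∧ K ≤ K' ∧ g ∈ K' ∧ Nat.card K' ≤ p * Nat.card K ∧
      ∀ v ∈ K', ∃ k : ZMod p, ∃ w ∈ K, v = zp g k * w := by
  have hgm : g ∈ Subgroup.zpowers g ⊔ K := (le_sup_left : _ ≤ Subgroup.zpowers g ⊔ K) (Subgroup.mem_zpowers g)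
  have hex : ∀ v ∈ Subgroup.zpowers g ⊔ K, ∃ k : ZMod p, ∃ w ∈ K, v = zp g k * w := by
    intro v hv
    rw [Subgroup.mem_sup_of_normal_right] at hv
    obtain ⟨y, hy, z, hz, rfl⟩ := hv
    rw [← mem_powers_iff_mem_zpowers] at hy
    obtain ⟨n, rfl⟩ := hy
    exact ⟨n, z, hz, by rw [zp_nat hg]⟩
  refine ⟨Subgroup.zpowers g ⊔ K, ⟨?_⟩, le_sup_right, hgm, ?_, hex⟩
  · intro v hv h
    obtain ⟨k, w, hw, rfl⟩ := hex v hv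
    have e : h * (zp g k * w) * h⁻¹ = (h * g * h⁻¹) ^ k.val * (h * w * h⁻¹) := by
      rw [conj_pow, zp]; group
    rw [e]
    refine mul_mem (pow_mem ?_ _) ((le_sup_right : K ≤ _) (hK.conj_mem w hw h))
    have := mul_mem ((le_sup_right : K ≤ Subgroup.zpowers g ⊔ K) (hc h)) hgm
    rwa [inv_mul_cancel_right] at this
  · have : p * Nat.card K = Nat.card (ZMod p × K) := by rw [Nat.card_prod, Nat.card_zmod]
    rw [this]
    refine Nat.card_le_card_of_surjective (fun q : ZMod p × K => (⟨zp g q.1 * q.2, mul_mem (pow_mem hgm _) ((le_sup_right : K ≤ _) q.2.2)⟩ : ↥(Subgroup.zpowers g ⊔ K))) ?_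
    rintro ⟨v, hv⟩
    obtain ⟨k, w, hw, rfl⟩ := hex v hv
    exact ⟨(k, ⟨w, hw⟩), rfl⟩

lemma zp_mem_cancel {G : Type*} [Group G] (K : Subgroup G) {g : G} (hg : g ^ p = 1) (hgK : g ∉ K) {i : ZMod p}
    (h : zp g i ∈ K) : i = 0 := by
  by_contra hi
  apply hgK
  have : g = zp (zp g i) i⁻¹ := by rw [zp_zp hg, mul_inv_cancel₀ hi, zp_one hg]
  rw [this]
  exact pow_mem h _

lemma struct2 {d : ℕ} {G : Type} [Group G] [Finite G] (hcard : Nat.card G = p ^ (d + 5))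
    (hab : ∀ x y : G, (x * y) ^ p = x ^ p * y ^ p) (hN : Nat.card {g : G // g ^ p = 1} = p ^ 4)
    (hcm : ∀ x y : G, (x * y * x⁻¹ * y⁻¹) ^ p = 1) (a : G) (hord : orderOf a = p ^ (d + 2)) :
    ∃ θ : Th p, ∃ x y u c : G, GRel d θ a x y u c := by
  have pp := hp.out
  have p1 := pp.one_lt
  have hG : IsPGroup p G := IsPGroup.of_card hcard
  haveI : Group.IsNilpotent G := hG.isNilpotent
  have ha : a ^ p ^ (d + 2) = 1 := by rw [← hord]; exact pow_orderOf_eq_one a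
  have hcen : ∀ g h : G, Commute (g ^ p) h := by
    intro g h
    have h1 : (h * g * h⁻¹ * g⁻¹ * g) ^ p = g ^ p := by rw [hab, hcm, one_mul]
    rw [inv_mul_cancel_right, conj_pow] at h1
    show g ^ p * h = h * g ^ p
    rw [mul_inv_eq_iff_eq_mul] at h1
    exact h1.symm
  obtain ⟨c, hc⟩ : ∃ c, c = a ^ p ^ (d + 1) := ⟨_, rfl⟩
  have hcc : ∀ g, Commute c g := by
    intro g; rw [hc, pow_succ, pow_mul]; exact hcen _ _
  have hcp : c ^ p = 1 := by rw [hc, ← pow_mul, ← pow_succ, ha]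
  have hc1 : c ∉ (⊥ : Subgroup G) := by
    rw [Subgroup.mem_bot, hc]
    intro h
    have := orderOf_dvd_of_pow_eq_one h
    rw [hord, Nat.pow_dvd_pow_iff_le_right p1] at this
    omega
  let φ : G →* G := ⟨⟨fun x => x ^ p, one_pow _⟩, hab⟩
  have hNc : Nat.card φ.ker = p ^ 4 := hN
  have hcN : ∀ h g : G, h * g * h⁻¹ * g⁻¹ ∈ φ.ker := fun h g => hcm h g
  obtain ⟨K1, hK1n, -, hcK1, hK1c, hK1⟩ := ext_sub ⊥ c hcp (fun h => by
    rw [← (hcc h).eq]; simp)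
  have hK1' : ∀ v ∈ K1, ∃ k : ZMod p, v = zp c k := by
    intro v hv
    obtain ⟨k, w, hw, rfl⟩ := hK1 v hv
    rw [Subgroup.mem_bot] at hw
    exact ⟨k, by rw [hw, mul_one]⟩
  rw [Subgroup.card_bot, mul_one] at hK1c
  have hKc : ∀ v ∈ K1, ∀ g, Commute v g := by
    intro v hv g
    obtain ⟨k, rfl⟩ := hK1' v hv
    exact (hcc g).pow_left _
  have hlt : ∀ (M K : Subgroup G) , Nat.card K < Nat.card M → ¬ M ≤ K := by
    intro M K h hle
    have := Subgroup.card_le_of_le hle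
    omega
  obtain ⟨u, huN, huK, huG⟩ := lemL K1 φ.ker (hlt _ _ (by
    rw [hNc]
    calc _ ≤ p ^ 1 := by simpa using hK1c
      _ < p ^ 4 := Nat.pow_lt_pow_right p1 (by norm_num)))
  have hu : u ^ p = 1 := huN
  obtain ⟨K2, hK2n, hK12, huK2, hK2c, hK2⟩ := ext_sub K1 u hu huG
  have hK2c' : Nat.card K2 ≤ p ^ 2 := hK2c.trans (by rw [sq]; exact Nat.mul_le_mul le_rfl hK1c)
  let Cu : Subgroup G := φ.ker ⊓ Subgroup.centralizer {u}
  have hCn : Cu.Normal := by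
    constructor
    rintro g ⟨hg1, hg2⟩ h
    refine ⟨(inferInstance : φ.ker.Normal).conj_mem g hg1 h, ?_⟩
    replace hg2 : g ∈ Subgroup.centralizer {u} := hg2
    show _ ∈ Subgroup.centralizer {u}
    rw [Subgroup.mem_centralizer_singleton_iff] at hg2 ⊢
    have h1 : Commute (h⁻¹ * u * h⁻¹⁻¹ * u⁻¹) g := hKc _ (huG h⁻¹) g
    have h2 : Commute (h⁻¹ * u * h) g := by
      have := h1.mul_left (show Commute u g from hg2.symm)
      rwa [inv_mul_cancel_right, inv_inv] at this
    have h3 := h2.eq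
    calc h * g * h⁻¹ * u = h * (g * (h⁻¹ * u * h)) * h⁻¹ := by group
      _ = h * ((h⁻¹ * u * h) * g) * h⁻¹ := by rw [h3]
      _ = u * (h * g * h⁻¹) := by group
  have hCK : ¬ Cu ≤ K2 := by
    intro hle
    let ψ : φ.ker →* K1 := MonoidHom.mk' (fun n => ⟨n.1 * u * n.1⁻¹ * u⁻¹, huG _⟩) (by
      rintro ⟨g, hg⟩ ⟨h, hh⟩
      apply Subtype.ext
      show (g * h) * u * (g * h)⁻¹ * u⁻¹ = (g * u * g⁻¹ * u⁻¹) * (h * u * h⁻¹ * u⁻¹)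
      have h1 := (hKc _ (huG h) (u * g⁻¹ * u⁻¹)).eq
      calc _ = g * ((h * u * h⁻¹ * u⁻¹) * (u * g⁻¹ * u⁻¹)) := by group
        _ = _ := by rw [h1]; group)
    have h1 := Subgroup.card_mul_index ψ.ker
    rw [hNc, Subgroup.index_ker] at h1
    have h2 : Nat.card ψ.range ≤ p := (Subgroup.card_le_card_group _).trans hK1c
    have h3 : Nat.card ψ.ker ≤ p ^ 2 := by
      refine le_trans ?_ hK2c'
      refine Nat.card_le_card_of_injective (fun n : ψ.ker => (⟨n.1.1, hle ⟨n.1.2, ?_⟩⟩ : K2)) ?_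
      · have := n.2
        rw [MonoidHom.mem_ker] at this
        have h4 : n.1.1 * u * n.1.1⁻¹ * u⁻¹ = 1 := congrArg Subtype.val this
        show _ ∈ Subgroup.centralizer {u}
        rw [Subgroup.mem_centralizer_singleton_iff]
        rw [mul_inv_eq_one, mul_inv_eq_iff_eq_mul] at h4
        exact h4
      · intro n m hnm
        simp only [Subtype.mk.injEq] at hnm
        exact Subtype.ext (Subtype.ext hnm)
    have h4 : p ^ 4 ≤ p ^ 3 := by
      rw [← h1, pow_succ p 2]
      exact Nat.mul_le_mul h3 h2
    have h5 : p ^ 3 < p ^ 4 := Nat.pow_lt_pow_right p1 (by norm_num)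
    omega
  obtain ⟨y, ⟨hyN, hyu⟩, hyK, hyG⟩ := lemL K2 Cu hCK
  have hy : y ^ p = 1 := hyN
  have hyu : Commute y u := by
    replace hyu : y ∈ Subgroup.centralizer {u} := hyu
    rw [Subgroup.mem_centralizer_singleton_iff] at hyu
    exact hyu
  obtain ⟨K3, hK3n, hK23, hyK3, hK3c, hK3⟩ := ext_sub K2 y hy hyG
  have hK3c' : Nat.card K3 ≤ p ^ 3 := hK3c.trans (by rw [pow_succ', ]; exact Nat.mul_le_mul le_rfl hK2c')
  obtain ⟨x, hxN, hxK, hxG⟩ := lemL K3 φ.ker (hlt _ _ (by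
    rw [hNc]
    exact lt_of_le_of_lt hK3c' (Nat.pow_lt_pow_right p1 (by norm_num))))
  have hx : x ^ p = 1 := hxN
  have hK2' : ∀ v ∈ K2, ∃ k l : ZMod p, v = zp u k * zp c l := by
    intro v hv
    obtain ⟨k, w, hw, rfl⟩ := hK2 v hv
    obtain ⟨l, rfl⟩ := hK1' w hw
    exact ⟨k, l, rfl⟩
  have hK3' : ∀ v ∈ K3, ∃ j k l : ZMod p, v = zp y j * (zp u k * zp c l) := by
    intro v hv
    obtain ⟨j, w, hw, rfl⟩ := hK3 v hv
    obtain ⟨k, l, rfl⟩ := hK2' w hw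
    exact ⟨j, k, l, rfl⟩
  have cz : ∀ (l : ZMod p) g, zp c l * g = g * zp c l := fun l g => ((hcc g).pow_left _).eq
  have cr : ∀ g h v : G, g * h * g⁻¹ * h⁻¹ = v → g * h = v * h * g := by
    rintro g h v rfl; group
  obtain ⟨k2, hk2⟩ := hK1' _ (huG x)
  obtain ⟨la, hla⟩ := hK1' _ (huG a)
  obtain ⟨k1, e, hk1⟩ := hK2' _ (hyG x)
  obtain ⟨h, mu, hh⟩ := hK2' _ (hyG a)
  obtain ⟨nu, b2, b3, hnu⟩ := hK3' _ (hxG a)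
  have xu : x * u = u * zp c k2 * x := by rw [cr _ _ _ hk2, cz]
  have au : a * u = u * zp c la * a := by rw [cr _ _ _ hla, cz]
  have xy : x * y = zp u k1 * y * zp c e * x := by rw [cr _ _ _ hk1, mul_assoc _ (zp c e), cz, ← mul_assoc]
  have ay : a * y = zp u h * y * zp c mu * a := by rw [cr _ _ _ hh, mul_assoc _ (zp c mu), cz, ← mul_assoc]
  have yu' : ∀ j k : ZMod p, zp y j * zp u k = zp u k * zp y j := fun j k => (zp_commute hyu j k).eq
  have ax : a * x = zp u b2 * zp y nu * zp c b3 * x * a := by rw [cr _ _ _ hnu, ← mul_assoc, yu']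
  have hconst : k1 * la = h * k2 := by
    have e1 : (a * x) * y = zp u k1 * zp u h * y * zp c (la * k1 + mu + e) * (a * x) := by
      calc (a * x) * y = a * zp u k1 * y * zp c e * x := by rw [mul_assoc, xy]; simp only [mul_assoc]
        _ = zp u k1 * zp c (la * k1) * (a * y) * zp c e * x := by
          rw [zp_conj au, zp_mul (zp_commute_r (hcc _).symm _), zp_zp hcp]; simp only [mul_assoc]
        _ = zp u k1 * (zp c (la * k1) * (zp u h * y)) * zp c mu * (a * zp c e) * x := by rw [ay]; simp only [mul_assoc]
        _ = _ := by rw [cz, ← cz e a, zp_add hcp, zp_add hcp]; simp only [mul_assoc]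
    have e2 : (x * a) * y = zp u k1 * zp u h * y * zp c (k2 * h + mu + e) * (x * a) := by
      calc (x * a) * y = x * zp u h * y * zp c mu * a := by rw [mul_assoc, ay]; simp only [mul_assoc]
        _ = zp u h * zp c (k2 * h) * (x * y) * zp c mu * a := by
          rw [zp_conj xu, zp_mul (zp_commute_r (hcc _).symm _), zp_zp hcp]; simp only [mul_assoc]
        _ = zp u h * (zp c (k2 * h) * (zp u k1 * y)) * zp c e * (x * zp c mu) * a := by rw [xy]; simp only [mul_assoc]
        _ = zp u k1 * zp u h * (y * (zp c (k2 * h) * zp c e * zp c mu) * (x * a)) := by 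
          rw [cz, ← cz mu x, ← zp_add hu, add_comm k1 h, zp_add hu]; simp only [mul_assoc]
        _ = _ := by rw [zp_add hcp, zp_add hcp, mul_assoc _ (zp c e), cz e]; simp only [mul_assoc]
    have e3 : a * x = zp u b2 * zp y nu * zp c b3 * (x * a) := by rw [ax, mul_assoc _ x]
    have e4 : Commute (zp u b2 * zp y nu * zp c b3) (zp u k1 * zp u h * y * zp c (k2 * h + mu + e)) := by
      have cu : ∀ k : ZMod p, Commute (zp u b2 * zp y nu * zp c b3) (zp u k) := fun k =>
        ((zp_commute (Commute.refl u) _ _).mul_left (zp_commute hyu _ _)).mul_left (cz _ _)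
      have cy : Commute (zp u b2 * zp y nu * zp c b3) y :=
        ((zp_commute_r hyu _).symm.mul_left (zp_commute_r (Commute.refl y) _).symm).mul_left (cz _ _)
      exact (((cu _).mul_right (cu _)).mul_right cy).mul_right (cz _ _).symm
    rw [e3, mul_assoc, e2, ← mul_assoc, e4.eq, mul_assoc, ← e3] at e1
    have e5 := mul_left_cancel (mul_right_cancel e1)
    rw [add_assoc, add_assoc, zp_add hcp, zp_add hcp (la * k1)] at e5
    have e6 := mul_right_cancel e5
    have e7 : zp c (la * k1 - k2 * h) = 1 := by
      rw [sub_eq_add_neg, zp_add hcp, ← e6, ← zp_add hcp, add_neg_cancel, zp_zero]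
    have := zp_mem_cancel ⊥ hcp hc1 (e7 ▸ one_mem _)
    linear_combination this
  refine ⟨⟨k1, e, k2, h, mu, la, nu, b2, b3, hconst⟩, x, y, u, c, ⟨hc, hx, hy, hu, ha, hcc, hyu, xu, xy, au, ay, ax, ?_⟩⟩
  intro i j k l hE
  have hi : i = 0 := by
    refine zp_mem_cancel K3 hx hxK ?_
    rw [mul_eq_one_iff_inv_eq.1 hE |>.symm]
    refine inv_mem (mul_mem (mul_mem (pow_mem (hK23 huK2) _) (pow_mem hyK3 _)) (pow_mem (hK23 (hK12 hcK1)) _))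
  subst hi
  rw [zp_zero, mul_one] at hE
  have hj : j = 0 := by
    refine zp_mem_cancel K2 hy hyK ?_
    have : zp y j = (zp u k)⁻¹ * (zp c l)⁻¹ := by
      rw [eq_inv_mul_iff_mul_eq, eq_inv_iff_mul_eq_one, hE]
    rw [this]
    exact mul_mem (inv_mem (pow_mem huK2 _)) (inv_mem (pow_mem (hK12 hcK1) _))
  subst hj
  rw [zp_zero, mul_one] at hE
  have hk : k = 0 := by
    refine zp_mem_cancel K1 hu huK ?_
    rw [mul_eq_one_iff_eq_inv.1 hE]
    exact inv_mem (pow_mem hcK1 _)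
  subst hk
  rw [zp_zero, one_mul] at hE
  exact ⟨rfl, rfl, rfl, zp_mem_cancel ⊥ hcp hc1 (hE ▸ one_mem _)⟩

lemma structMain [h5 : Fact (5 ≤ p)] {d : ℕ} {G : Type} [Group G] [Finite G] (hcard : Nat.card G = p ^ (d + 5)) (hR : IsRegularPGroup p G)
    (hT : HasTypeInvariants p G [d + 2, 1, 1, 1]) : ∃ θ : Th p, Nonempty (Gr d θ ≃* G) := by
  obtain ⟨hab, hN, hcm, a, ha, -⟩ := struct1 hcard hR hT
  obtain ⟨θ, x, y, u, c, R⟩ := struct2 hcard hab hN hcm a ha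
  exact ⟨θ, R.iso hcard⟩
end struct3

set_option linter.all false

/-- A change of generators. -/
structure Mv (p : ℕ) where
  k : ZMod p := 1
  xa : ZMod p := 0
  ya : ZMod p := 0
  ua : ZMod p := 0
  lx : ZMod p := 0
  ix : ZMod p := 1
  jx : ZMod p := 0
  kx : ZMod p := 0
  ly : ZMod p := 0
  iy : ZMod p := 0
  jy : ZMod p := 1
  ky : ZMod p := 0
  lu : ZMod p := 0
  iu : ZMod p := 0
  ju : ZMod p := 0
  ku : ZMod p := 1

section moves
variable {p : ℕ} [hp : Fact p.Prime] [h5 : Fact (5 ≤ p)] {d : ℕ} {θ : Th p}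

namespace Gr
def nel (l i j k : ZMod p) : Gr d θ := ⟨iot p d l, i, j, k⟩

lemma nel_mul (l i j k l' i' j' k' : ZMod p) : (nel l i j k * nel l' i' j' k' : Gr d θ) =
    nel (l + l' + θ.fC 0 i i' j' k') (i + i') (j + j') (k + k' + θ.fU 0 i i' j') := by
  ext
  · simp [mul_t, nel]
  · simp [nel]
  · simp [nel, Th.fY]
  · simp [nel]

lemma nel_pow_p (l i j k : ZMod p) : (nel l i j k : Gr d θ) ^ p = 1 := by
  rw [pow_p]
  ext <;> simp [nel, nsmul_iot]

lemma zp_nel (l i j k : ZMod p) (h : i = 0 ∨ (j = 0 ∧ k = 0)) (r : ZMod p) :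
    zp (nel l i j k : Gr d θ) r = nel (r * l) (r * i) (r * j) (r * k) := by
  haveI : NeZero p := ⟨hp.out.ne_zero⟩
  induction r using zmod_ind with
  | h0 => rw [zp_zero]; ext <;> simp [nel]
  | h1 r ih =>
    rw [zp_add (nel_pow_p _ _ _ _), zp_one (nel_pow_p _ _ _ _), ih, nel_mul]
    have e1 : θ.fC 0 i (r * i) (r * j) (r * k) = 0 := by
      rcases h with rfl | ⟨rfl, rfl⟩ <;> simp [Th.fC, Th.vc, Th.vu, Th.fY, Th.bu, Th.bc, c2, c3]
    have e2 : θ.fU 0 i (r * i) (r * j) = 0 := by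
      rcases h with rfl | ⟨rfl, rfl⟩ <;> simp [Th.fU, Th.vu, Th.fY, Th.bu, c2]
    rw [e1, e2]
    congr 1 <;> ring

lemma zp_nel_coord (l i j k : ZMod p) (r : ZMod p) :
    ∃ l' k', zp (nel l i j k : Gr d θ) r = nel l' (r * i) (r * j) k' ∧ (θ.k1 = 0 → k' = r * k) := by
  haveI : NeZero p := ⟨hp.out.ne_zero⟩
  induction r using zmod_ind with
  | h0 => exact ⟨0, 0, by rw [zp_zero]; ext <;> simp [nel], by simp⟩
  | h1 r ih =>
    obtain ⟨l', k', ih, hk⟩ := ih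
    rw [zp_add (nel_pow_p _ _ _ _), zp_one (nel_pow_p _ _ _ _), ih, nel_mul]
    refine ⟨l + l' + θ.fC 0 i (r * i) (r * j) k', k + k' + θ.fU 0 i (r * i) (r * j), ?_, ?_⟩
    · congr 1 <;> ring
    · intro h
      rw [hk h]
      simp [Th.fU, Th.vu, Th.fY, Th.bu, c2, h]
      ring

lemma nel_a (l i j k : ZMod p) (g : Gr d θ) : nel l i j k * g =
    ⟨g.t + iot p d (l + θ.fC 0 i g.x g.y g.u), i + g.x, j + g.y, k + g.u + θ.fU 0 i g.x g.y⟩ := by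
  ext
  · simp [mul_t, nel]; ring
  · simp [nel]
  · simp [nel, Th.fY]
  · simp [nel]
lemma a_nel (l i j k : ZMod p) (g : Gr d θ) : g * nel l i j k =
    ⟨g.t + iot p d (l + θ.fC (bar p d g.t) g.x i j k), g.x + i, g.y + j + θ.fY (bar p d g.t) i,
      g.u + k + θ.fU (bar p d g.t) g.x i j⟩ := by
  ext
  · simp [mul_t, nel]; ring
  · simp [nel]
  · simp [nel]
  · simp [nel]

lemma nel_ext {l i j k l' i' j' k' : ZMod p} (h1 : l = l') (h2 : i = i') (h3 : j = j') (h4 : k = k') :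
    (nel l i j k : Gr d θ) = nel l' i' j' k' := by subst h1 h2 h3 h4; rfl

lemma nel_eq_one {l i j k : ZMod p} (h : (nel l i j k : Gr d θ) = 1) : l = 0 ∧ i = 0 ∧ j = 0 ∧ k = 0 := by
  have h1 := congrArg Gr.t h
  have h2 := congrArg Gr.x h
  have h3 := congrArg Gr.y h
  have h4 := congrArg Gr.u h
  exact ⟨iot_inj d h1, h2, h3, h4⟩

lemma fC00 (i j k : ZMod p) : θ.fC 0 0 i j k = 0 := by
  simp [Th.fC, Th.vc, Th.vu, Th.fY, Th.bu, Th.bc, c2, c3]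
lemma fU00 (i j : ZMod p) : θ.fU 0 0 i j = 0 := by
  simp [Th.fU, Th.vu, Th.fY, Th.bu, c2]
lemma fC000 (i : ZMod p) : θ.fC 0 i 0 0 0 = 0 := by
  simp [Th.fC, Th.vc, Th.vu, Th.fY, Th.bu, Th.bc, c2, c3]
lemma fU000 (i : ZMod p) : θ.fU 0 i 0 0 = 0 := by
  simp [Th.fU, Th.vu, Th.fY, Th.bu, c2]

lemma pow_pd (g : Gr d θ) : g ^ p ^ (d + 1) = nel (bar p d g.t) 0 0 0 := by
  have : ∀ n, g ^ p ^ (n + 1) = (⟨p ^ (n + 1) * g.t, 0, 0, 0⟩ : Gr d θ) := by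
    intro n
    induction n with
    | zero => rw [pow_one, zero_add, pow_p, pow_one]
    | succ n ih => rw [pow_succ, pow_mul, ih, pow_p]; congr 1; push_cast; ring
  rw [this, pow_mul_T]; rfl

lemma cen_nel (l : ZMod p) (g : Gr d θ) : Commute (nel l 0 0 0) g := by
  show _ * _ = _ * _
  rw [nel_a, a_nel]
  have e1 : θ.fC (bar p d g.t) g.x 0 0 0 = 0 := by
    simp [Th.fC, Th.vc, Th.vu, Th.fY, Th.bu, Th.bc, c2, c3]
  have e2 : θ.fU (bar p d g.t) g.x 0 0 = 0 := by
    simp [Th.fU, Th.vu, Th.fY, Th.bu, Th.bc, c2, c3]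
  simp [e1, e2, fC00, fU00, Th.fY]
end Gr
open Gr

/-- Validity of a change of generators. -/
structure Mv.Ok (m : Mv p) (θ θ' : Th p) : Prop where
  k0 : m.k ≠ 0
  det : m.ix * (m.jy * m.ku - m.ky * m.ju) - m.jx * (m.iy * m.ku - m.ky * m.iu)
    + m.kx * (m.iy * m.ju - m.jy * m.iu) ≠ 0
  sp : θ.k1 = 0 ∨ (m.iu = 0 ∧ m.ju = 0)
  ly : m.iy = 0 ∨ (m.jy = 0 ∧ m.ky = 0)
  lu : m.iu = 0 ∨ (m.ju = 0 ∧ m.ku = 0)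
  yu1 : θ.fU 0 m.iy m.iu m.ju = θ.fU 0 m.iu m.iy m.jy
  yu2 : θ.fC 0 m.iy m.iu m.ju m.ku = θ.fC 0 m.iu m.iy m.jy m.ky
  xu1 : θ.fU 0 m.ix m.iu m.ju = θ.fU 0 m.iu m.ix m.jx
  xu2 : θ.fC 0 m.ix m.iu m.ju m.ku = m.k * θ'.k2 + θ.fC 0 m.iu m.ix m.jx m.kx
  xy1 : θ'.k1 * m.iu = 0
  xy2 : θ'.k1 * m.ju = 0
  xy3 : θ.fU 0 m.ix m.iy m.jy = θ'.k1 * m.ku + θ.fU 0 m.iy m.ix m.jx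
  xy4 : θ.fC 0 m.ix m.iy m.jy m.ky = θ'.k1 * m.lu + m.k * θ'.e + θ.fC 0 m.iy m.ix m.jx m.kx
  au1 : θ.fY m.k m.iu = 0
  au2 : θ.fU m.k m.xa m.iu m.ju = θ.fU 0 m.iu m.xa m.ya
  au3 : θ.fC m.k m.xa m.iu m.ju m.ku = m.k * θ'.la + θ.fC 0 m.iu m.xa m.ya m.ua
  ay1 : θ'.h * m.iu = 0
  ay2 : θ.fY m.k m.iy = θ'.h * m.ju
  ay3 : θ.fU m.k m.xa m.iy m.jy = θ'.h * m.ku + θ.fU 0 m.iy m.xa m.ya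
  ay4 : θ.fC m.k m.xa m.iy m.jy m.ky = θ'.h * m.lu + m.k * θ'.mu + θ.fC 0 m.iy m.xa m.ya m.ua
  ax0 : θ'.b2 * m.iu = 0
  ax1 : θ'.nu * m.iy = 0
  ax2 : θ.fY m.k m.ix = θ'.b2 * m.ju + θ'.nu * m.jy
  ax3 : θ.fU m.k m.xa m.ix m.jx = θ'.b2 * m.ku + θ'.nu * m.ky + θ.fU 0 m.ix m.xa m.ya
  ax4 : θ.fC m.k m.xa m.ix m.jx m.kx = θ'.b2 * m.lu + θ'.nu * m.ly + m.k * θ'.b3 + θ.fC 0 m.ix m.xa m.ya m.ua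

lemma move_rel {θ' : Th p} (m : Mv p) (ok : m.Ok θ θ') (τ : ZMod (p ^ (d + 2))) (hτ : bar p d τ = m.k) :
    GRel d θ' (⟨τ, m.xa, m.ya, m.ua⟩ : Gr d θ) (nel m.lx m.ix m.jx m.kx) (nel m.ly m.iy m.jy m.ky)
      (nel m.lu m.iu m.ju m.ku) (nel m.k 0 0 0) := by
  have zc : ∀ r, zp (nel m.k 0 0 0 : Gr d θ) r = nel (r * m.k) 0 0 0 := by
    intro r; rw [zp_nel _ _ _ _ (Or.inl rfl)]; simp
  refine ⟨?_, nel_pow_p _ _ _ _, nel_pow_p _ _ _ _, nel_pow_p _ _ _ _, ?_, cen_nel _, ?_, ?_, ?_, ?_, ?_, ?_, ?_⟩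
  · rw [pow_pd, hτ]
  · rw [pow_succ, pow_mul, pow_pd, nel_pow_p]
  · show _ * _ = _ * _
    rw [nel_mul, nel_mul]
    apply nel_ext
    · linear_combination ok.yu2
    · ring
    · ring
    · linear_combination ok.yu1
  · rw [zc, nel_mul, nel_mul, nel_mul]
    simp only [fC000, fU000, add_zero]
    apply nel_ext
    · linear_combination ok.xu2
    · ring
    · ring
    · linear_combination ok.xu1
  · rw [zc, zp_nel _ _ _ _ ok.lu, nel_mul, nel_mul, nel_mul, nel_mul, ok.xy1, ok.xy2]
    simp only [fC000, fU000, fC00, fU00, add_zero, zero_add]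
    apply nel_ext
    · linear_combination ok.xy4
    · ring
    · ring
    · linear_combination ok.xy3
  · rw [zc, nel_mul, nel_a, a_nel, hτ]
    simp only [fC000, fU000, fC00, fU00, add_zero, zero_add, ok.au1, ok.au2, ok.au3]
    ext <;> simp only [] <;> ring_nf
  · rw [zc, zp_nel _ _ _ _ ok.lu, nel_mul, nel_mul, nel_a, a_nel, hτ, ok.ay1]
    simp only [fC000, fU000, fC00, fU00, add_zero, zero_add, ok.ay2, ok.ay3, ok.ay4]
    ext <;> simp only [] <;> ring_nf
  · rw [zc, zp_nel _ _ _ _ ok.lu, zp_nel _ _ _ _ ok.ly, nel_mul, nel_mul, nel_mul, nel_a, a_nel, hτ, ok.ax0, ok.ax1]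
    simp only [fC000, fU000, fC00, fU00, add_zero, zero_add, ok.ax2, ok.ax3, ok.ax4]
    ext <;> simp only [] <;> ring_nf
  · intro i j k l hE
    rw [zc, zp_nel _ _ _ _ ok.lu, zp_nel _ _ _ _ ok.ly] at hE
    obtain ⟨l', k', h1, h2⟩ := zp_nel_coord (d := d) (θ := θ) m.lx m.ix m.jx m.kx i
    rw [h1, nel_mul, nel_mul, nel_mul] at hE
    simp only [fC000, fU000, add_zero] at hE
    obtain ⟨e1, e2, e3, e4⟩ := nel_eq_one hE
    have key : i = 0 ∧ j = 0 ∧ k = 0 := by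
      have hd := ok.det
      rcases ok.sp with h | ⟨hi, hj⟩
      · rw [h2 h] at e4
        simp only [Th.fU, Th.vu, Th.fY, Th.bu, c2, h] at e4
        refine ⟨?_, ?_, ?_⟩ <;> refine (mul_eq_zero.1 ?_).resolve_right hd
        · linear_combination (m.jy * m.ku - m.ky * m.ju) * e2 + (m.ky * m.iu - m.iy * m.ku) * e3 + (m.iy * m.ju - m.jy * m.iu) * e4
        · linear_combination (m.ju * m.kx - m.jx * m.ku) * e2 + (m.ix * m.ku - m.iu * m.kx) * e3 + (m.jx * m.iu - m.ix * m.ju) * e4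
        · linear_combination (m.jx * m.ky - m.jy * m.kx) * e2 + (m.iy * m.kx - m.ix * m.ky) * e3 + (m.ix * m.jy - m.jx * m.iy) * e4
      · rw [hi] at e2 hd
        rw [hj] at e3 hd
        have hd' : m.ku * (m.ix * m.jy - m.jx * m.iy) ≠ 0 := by
          convert hd using 1; ring
        have hA := right_ne_zero_of_mul hd'
        have hB := left_ne_zero_of_mul hd'
        have hi0 : i = 0 := by
          refine (mul_eq_zero.1 ?_).resolve_right hA
          linear_combination m.jy * e2 - m.iy * e3
        have hj0 : j = 0 := by
          refine (mul_eq_zero.1 ?_).resolve_right hA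
          linear_combination m.ix * e3 - m.jx * e2
        subst hi0 hj0
        rw [zp_zero] at h1
        obtain ⟨-, -, -, hk'⟩ := nel_eq_one h1.symm
        subst hk'
        refine ⟨rfl, rfl, ?_⟩
        rw [hi] at e4
        simp only [mul_zero, zero_mul, fU00, add_zero] at e4
        exact (mul_eq_zero.1 e4).resolve_right hB
    obtain ⟨rfl, rfl, rfl⟩ := key
    rw [zp_zero] at h1
    obtain ⟨hl', -, -, -⟩ := nel_eq_one h1.symm
    subst hl'
    simp only [mul_zero, zero_mul, fC00, add_zero, zero_add] at e1
    exact ⟨rfl, rfl, rfl, (mul_eq_zero.1 e1).resolve_right ok.k0⟩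

/-- Isomorphism relation. -/
def Iso (d : ℕ) (θ θ' : Th p) : Prop := Nonempty (Gr d θ ≃* Gr d θ')

lemma Iso.refl (θ : Th p) : Iso d θ θ := ⟨MulEquiv.refl _⟩
lemma Iso.symm {θ θ' : Th p} (h : Iso d θ θ') : Iso d θ' θ := h.elim fun f => ⟨f.symm⟩
lemma Iso.trans {θ θ' θ'' : Th p} (h : Iso d θ θ') (h' : Iso d θ' θ'') : Iso d θ θ'' :=
  h.elim fun f => h'.elim fun g => ⟨f.trans g⟩

lemma bar_surj (k : ZMod p) : ∃ τ, bar p d τ = k := by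
  obtain ⟨i, rfl⟩ := int_surj k
  exact ⟨i, by simp⟩

lemma move {θ θ' : Th p} (m : Mv p) (ok : m.Ok θ θ') : Iso d θ θ' := by
  obtain ⟨τ, hτ⟩ := bar_surj (d := d) m.k
  exact Iso.symm ((move_rel m ok τ hτ).iso card_eq)
end moves

set_option linter.all false

section norm
variable {p : ℕ} [hp : Fact p.Prime] [h5 : Fact (5 ≤ p)] {d : ℕ}

lemma hu1 (k1 e h mu nu b2 b3 : ZMod p) (hk1 : k1 ≠ 0) (w1 w2) :
    Iso d (⟨k1, e, 0, h, mu, 0, nu, b2, b3, w1⟩ : Th p) ⟨1, 0, 0, h / k1, mu - h * e / k1, 0, nu, b2 / k1, b3 - b2 * e / k1, w2⟩ := by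
  have h2 := two_ne (p := p)
  have h6 := six_ne (p := p)
  refine move {ku := k1, lu := e} ?_
  constructor <;> (try simp [*, Th.fC, Th.vc, Th.vu, Th.fY, Th.fU, Th.bu, Th.bc, c2, c3]) <;> (try field_simp) <;> (try ring)

lemma hu2 (h mu nu b2 b3 : ZMod p)  (w1 w2) :
    Iso d (⟨1, 0, 0, h, mu, 0, nu, b2, b3, w1⟩ : Th p) ⟨1, 0, 0, 0, mu, 0, nu, b2 - h * nu, b3, w2⟩ := by
  have h2 := two_ne (p := p)
  have h6 := six_ne (p := p)
  refine move {xa := -h} ?_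
  constructor <;> (try simp [*, Th.fC, Th.vc, Th.vu, Th.fY, Th.fU, Th.bu, Th.bc, c2, c3]) <;> (try field_simp) <;> (try ring)

lemma hu3 (mu nu b2 b3 : ZMod p)  (w1 w2) :
    Iso d (⟨1, 0, 0, 0, mu, 0, nu, b2, b3, w1⟩ : Th p) ⟨1, 0, 0, 0, mu, 0, nu, 0, b3, w2⟩ := by
  have h2 := two_ne (p := p)
  have h6 := six_ne (p := p)
  refine move {ya := b2} ?_
  constructor <;> (try simp [*, Th.fC, Th.vc, Th.vu, Th.fY, Th.fU, Th.bu, Th.bc, c2, c3]) <;> (try field_simp) <;> (try ring)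

lemma hu4 (mu nu b3 : ZMod p) (hnu : nu ≠ 0) (w1 w2) :
    Iso d (⟨1, 0, 0, 0, mu, 0, nu, 0, b3, w1⟩ : Th p) ⟨1, 0, 0, 0, nu * mu, 0, 1, 0, 0, w2⟩ := by
  have h2 := two_ne (p := p)
  have h6 := six_ne (p := p)
  refine move {jy := nu, ly := b3, ku := nu} ?_
  constructor <;> (try simp [*, Th.fC, Th.vc, Th.vu, Th.fY, Th.fU, Th.bu, Th.bc, c2, c3]) <;> (try field_simp) <;> (try ring)

lemma hu5 (mu : ZMod p) (hmu : mu ≠ 0) (w1 w2) :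
    Iso d (⟨1, 0, 0, 0, mu, 0, 1, 0, 0, w1⟩ : Th p) ⟨1, 0, 0, 0, 1, 0, 1, 0, 0, w2⟩ := by
  have h2 := two_ne (p := p)
  have h6 := six_ne (p := p)
  refine move {k := mu⁻¹, jy := mu⁻¹, ly := c2 mu⁻¹ * mu, ku := mu⁻¹} ?_
  constructor <;> (try simp [*, Th.fC, Th.vc, Th.vu, Th.fY, Th.fU, Th.bu, Th.bc, c2, c3]) <;> (try field_simp) <;> (try ring)

lemma hu6 (mu : ZMod p) (hmu : mu ≠ 0) (w1 w2) :
    Iso d (⟨1, 0, 0, 0, mu, 0, 0, 0, 0, w1⟩ : Th p) ⟨1, 0, 0, 0, 1, 0, 0, 0, 0, w2⟩ := by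
  have h2 := two_ne (p := p)
  have h6 := six_ne (p := p)
  refine move {jy := mu⁻¹, ku := mu⁻¹} ?_
  constructor <;> (try simp [*, Th.fC, Th.vc, Th.vu, Th.fY, Th.fU, Th.bu, Th.bc, c2, c3]) <;> (try field_simp) <;> (try ring)

lemma hu7 (b3 : ZMod p)  (w1 w2) :
    Iso d (⟨1, 0, 0, 0, 0, 0, 0, 0, b3, w1⟩ : Th p) ⟨1, 0, 0, 0, b3, 0, 0, 0, 0, w2⟩ := by
  have h2 := two_ne (p := p)
  have h6 := six_ne (p := p)
  refine move {ix := 0, jx := 1, iy := 1, jy := 0, ku := -1} ?_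
  constructor <;> (try simp [*, Th.fC, Th.vc, Th.vu, Th.fY, Th.fU, Th.bu, Th.bc, c2, c3]) <;> (try field_simp) <;> (try ring)

lemma hu8 (mu b3 : ZMod p) (hmu : mu ≠ 0) (w1 w2) :
    Iso d (⟨1, 0, 0, 0, mu, 0, 0, 0, b3, w1⟩ : Th p) ⟨1, 0, 0, 0, mu, 0, 0, 0, 0, w2⟩ := by
  have h2 := two_ne (p := p)
  have h6 := six_ne (p := p)
  refine move {jx := -b3 / mu} ?_
  constructor <;> (try simp [*, Th.fC, Th.vc, Th.vu, Th.fY, Th.fU, Th.bu, Th.bc, c2, c3]) <;> (try field_simp) <;> (try ring)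

lemma m41 (k1 e k2 s mu nu b2 b3 : ZMod p)  (w1 w2) :
    Iso d (⟨k1, e, k2, -k1 * s, mu, -k2 * s, nu, b2, b3, w1⟩ : Th p) ⟨k1, e, k2, 0, mu - s * k2 * k1 * s + s * e + c2 s * k1 * k2, 0, nu, b2 + s * k1 * nu, b3 + s * k2 * b2 + nu * (s * e + c2 s * k1 * k2), w2⟩ := by
  have h2 := two_ne (p := p)
  have h6 := six_ne (p := p)
  refine move {xa := s} ?_
  constructor <;> (try simp [*, Th.fC, Th.vc, Th.vu, Th.fY, Th.fU, Th.bu, Th.bc, c2, c3]) <;> (try field_simp) <;> (try ring)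

lemma m42 (k1 e k2 mu nu b2 b3 : ZMod p) (hk1 : k1 ≠ 0) (hk2 : k2 ≠ 0) (w1 w2) :
    Iso d (⟨k1, e, k2, 0, mu, 0, nu, b2, b3, w1⟩ : Th p) ⟨1, 0, k1 * k2, 0, mu, 0, nu, b2 / k1, b3 - b2 * e / k1, w2⟩ := by
  have h2 := two_ne (p := p)
  have h6 := six_ne (p := p)
  refine move {ku := k1, lu := e} ?_
  constructor <;> (try simp [*, Th.fC, Th.vc, Th.vu, Th.fY, Th.fU, Th.bu, Th.bc, c2, c3]) <;> (try field_simp) <;> (try ring)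

lemma m43 (k2 mu nu b2 b3 : ZMod p) (hk2 : k2 ≠ 0) (w1 w2) :
    Iso d (⟨1, 0, k2, 0, mu, 0, nu, b2, b3, w1⟩ : Th p) ⟨1, 0, k2, 0, mu, 0, nu, 0, 0, w2⟩ := by
  have h2 := two_ne (p := p)
  have h6 := six_ne (p := p)
  refine move {ya := b2, ua := b3 / k2} ?_
  constructor <;> (try simp [*, Th.fC, Th.vc, Th.vu, Th.fY, Th.fU, Th.bu, Th.bc, c2, c3]) <;> (try field_simp) <;> (try ring)

lemma m44 (k2 mu : ZMod p) (hk2 : k2 ≠ 0) (w1 w2) :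
    Iso d (⟨1, 0, k2, 0, mu, 0, 0, 0, 0, w1⟩ : Th p) ⟨1, 0, 1, 0, mu / k2, 0, 0, 0, 0, w2⟩ := by
  have h2 := two_ne (p := p)
  have h6 := six_ne (p := p)
  refine move {jy := k2⁻¹, ku := k2⁻¹} ?_
  constructor <;> (try simp [*, Th.fC, Th.vc, Th.vu, Th.fY, Th.fU, Th.bu, Th.bc, c2, c3]) <;> (try field_simp) <;> (try ring)

lemma m45 (mu : ZMod p) (hmu : mu ≠ 0) (w1 w2) :
    Iso d (⟨1, 0, 1, 0, mu, 0, 0, 0, 0, w1⟩ : Th p) ⟨1, 0, 1, 0, 1, 0, 0, 0, 0, w2⟩ := by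
  have h2 := two_ne (p := p)
  have h6 := six_ne (p := p)
  refine move {k := mu⁻¹, jy := mu⁻¹, ku := mu⁻¹} ?_
  constructor <;> (try simp [*, Th.fC, Th.vc, Th.vu, Th.fY, Th.fU, Th.bu, Th.bc, c2, c3]) <;> (try field_simp) <;> (try ring)

lemma m46 (k2 mu nu : ZMod p) (hk2 : k2 ≠ 0) (hnu : nu ≠ 0) (w1 w2) :
    Iso d (⟨1, 0, k2, 0, mu, 0, nu, 0, 0, w1⟩ : Th p) ⟨1, 0, nu * k2, 0, nu * mu, 0, 1, 0, 0, w2⟩ := by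
  have h2 := two_ne (p := p)
  have h6 := six_ne (p := p)
  refine move {jy := nu, ku := nu} ?_
  constructor <;> (try simp [*, Th.fC, Th.vc, Th.vu, Th.fY, Th.fU, Th.bu, Th.bc, c2, c3]) <;> (try field_simp) <;> (try ring)

lemma m47 (k2 mu : ZMod p) (hk2 : k2 ≠ 0) (hmu : mu ≠ 0) (w1 w2) :
    Iso d (⟨1, 0, k2, 0, mu, 0, 1, 0, 0, w1⟩ : Th p) ⟨1, 0, k2, 0, 1, 0, 1, 0, 0, w2⟩ := by
  have h2 := two_ne (p := p)
  have h6 := six_ne (p := p)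
  refine move {k := mu⁻¹, jy := mu⁻¹, ly := c2 mu⁻¹ * mu, ku := mu⁻¹} ?_
  constructor <;> (try simp [*, Th.fC, Th.vc, Th.vu, Th.fY, Th.fU, Th.bu, Th.bc, c2, c3]) <;> (try field_simp) <;> (try ring)

lemma m48 (k2 mu i : ZMod p) (hk2 : k2 ≠ 0) (hi : i ≠ 0) (w1 w2) :
    Iso d (⟨1, 0, k2, 0, mu, 0, 1, 0, 0, w1⟩ : Th p) ⟨1, 0, i ^ 3 * k2, 0, i * mu, 0, 1, 0, 0, w2⟩ := by
  have h2 := two_ne (p := p)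
  have h6 := six_ne (p := p)
  refine move {ix := i, jy := i, ky := c2 i, ly := c3 i * k2, ku := i ^ 2, lu := 2 * i * c2 i * k2} ?_
  constructor <;> (try simp [*, Th.fC, Th.vc, Th.vu, Th.fY, Th.fU, Th.bu, Th.bc, c2, c3]) <;> (try field_simp) <;> (try ring)

lemma hc0 (e k2 mu la nu b2 b3 : ZMod p) (hk2 : k2 ≠ 0) (w1 w2) :
    Iso d (⟨0, e, k2, 0, mu, la, nu, b2, b3, w1⟩ : Th p) ⟨0, k2, 0, 0, la, mu - e * la / k2, b2 + nu * e / k2, nu, b3, w2⟩ := by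
  have h2 := two_ne (p := p)
  have h6 := six_ne (p := p)
  refine move {jy := 0, ky := 1, ju := 1, ku := -e / k2} ?_
  constructor <;> (try simp [*, Th.fC, Th.vc, Th.vu, Th.fY, Th.fU, Th.bu, Th.bc, c2, c3]) <;> (try field_simp) <;> (try ring)

lemma hc1 (e h mu la nu b2 b3 : ZMod p) (he : e ≠ 0) (w1 w2) :
    Iso d (⟨0, e, 0, h, mu, la, nu, b2, b3, w1⟩ : Th p) ⟨0, e, 0, h, 0, la, nu, b2, b3 - mu * nu, w2⟩ := by
  have h2 := two_ne (p := p)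
  have h6 := six_ne (p := p)
  refine move {xa := -mu / e} ?_
  constructor <;> (try simp [*, Th.fC, Th.vc, Th.vu, Th.fY, Th.fU, Th.bu, Th.bc, c2, c3]) <;> (try field_simp) <;> (try ring)

lemma hc2 (e h la nu b2 b3 : ZMod p) (he : e ≠ 0) (w1 w2) :
    Iso d (⟨0, e, 0, h, 0, la, nu, b2, b3, w1⟩ : Th p) ⟨0, e, 0, h, 0, la, nu, b2, 0, w2⟩ := by
  have h2 := two_ne (p := p)
  have h6 := six_ne (p := p)
  refine move {ya := b3 / e} ?_
  constructor <;> (try simp [*, Th.fC, Th.vc, Th.vu, Th.fY, Th.fU, Th.bu, Th.bc, c2, c3]) <;> (try field_simp) <;> (try ring)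

lemma hc3 (e h la nu b2 : ZMod p) (he : e ≠ 0) (hnu : nu ≠ 0) (w1 w2) :
    Iso d (⟨0, e, 0, h, 0, la, nu, b2, 0, w1⟩ : Th p) ⟨0, e * nu, 0, nu * h, b2 * la, la, 1, 0, 0, w2⟩ := by
  have h2 := two_ne (p := p)
  have h6 := six_ne (p := p)
  refine move {jy := nu, ky := b2} ?_
  constructor <;> (try simp [*, Th.fC, Th.vc, Th.vu, Th.fY, Th.fU, Th.bu, Th.bc, c2, c3]) <;> (try field_simp) <;> (try ring)

lemma hc4 (e h la nu : ZMod p) (hh : h ≠ 0) (w1 w2) :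
    Iso d (⟨0, e, 0, h, 0, la, nu, 0, 0, w1⟩ : Th p) ⟨0, e, 0, 1, 0, h * la, nu, 0, 0, w2⟩ := by
  have h2 := two_ne (p := p)
  have h6 := six_ne (p := p)
  refine move {ku := h} ?_
  constructor <;> (try simp [*, Th.fC, Th.vc, Th.vu, Th.fY, Th.fU, Th.bu, Th.bc, c2, c3]) <;> (try field_simp) <;> (try ring)

lemma hc5 (e la nu : ZMod p) (hla : la ≠ 0) (w1 w2) :
    Iso d (⟨0, e, 0, 0, 0, la, nu, 0, 0, w1⟩ : Th p) ⟨0, e, 0, 0, 0, 1, nu, 0, 0, w2⟩ := by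
  have h2 := two_ne (p := p)
  have h6 := six_ne (p := p)
  refine move {ku := la⁻¹} ?_
  constructor <;> (try simp [*, Th.fC, Th.vc, Th.vu, Th.fY, Th.fU, Th.bu, Th.bc, c2, c3]) <;> (try field_simp) <;> (try ring)

lemma hc6 (e h la i : ZMod p) (he : e ≠ 0) (hi : i ≠ 0) (w1 w2) :
    Iso d (⟨0, e, 0, h, 0, la, 1, 0, 0, w1⟩ : Th p) ⟨0, i ^ 2 * e, 0, h, 0, i * la, 1, 0, 0, w2⟩ := by
  have h2 := two_ne (p := p)
  have h6 := six_ne (p := p)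
  refine move {ix := i, jy := i, ly := c2 i * e, ku := i} ?_
  constructor <;> (try simp [*, Th.fC, Th.vc, Th.vu, Th.fY, Th.fU, Th.bu, Th.bc, c2, c3]) <;> (try field_simp) <;> (try ring)

lemma hc7 (e k : ZMod p) (he : e ≠ 0) (hk : k ≠ 0) (w1 w2) :
    Iso d (⟨0, e, 0, 1, 0, 1, 1, 0, 0, w1⟩ : Th p) ⟨0, e, 0, 1, 0, k ^ 2, 1, 0, 0, w2⟩ := by
  have h2 := two_ne (p := p)
  have h6 := six_ne (p := p)
  refine move {k := k, jy := k, ky := c2 k, ly := c3 k, ku := k ^ 2, lu := 2 * k * c2 k} ?_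
  constructor <;> (try simp [*, Th.fC, Th.vc, Th.vu, Th.fY, Th.fU, Th.bu, Th.bc, c2, c3]) <;> (try field_simp) <;> (try ring)

lemma hc8 (e h la b2 : ZMod p) (hh : h ≠ 0) (w1 w2) :
    Iso d (⟨0, e, 0, h, 0, la, 0, b2, 0, w1⟩ : Th p) ⟨0, e, 0, h, 0, la, 0, 0, 0, w2⟩ := by
  have h2 := two_ne (p := p)
  have h6 := six_ne (p := p)
  refine move {jx := -b2 / h} ?_
  constructor <;> (try simp [*, Th.fC, Th.vc, Th.vu, Th.fY, Th.fU, Th.bu, Th.bc, c2, c3]) <;> (try field_simp) <;> (try ring)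

lemma hc9 (e la b2 : ZMod p)  (w1 w2) :
    Iso d (⟨0, e, 0, 0, 0, la, 0, b2, 0, w1⟩ : Th p) ⟨0, -e, 0, b2, 0, la, 0, 0, 0, w2⟩ := by
  have h2 := two_ne (p := p)
  have h6 := six_ne (p := p)
  refine move {ix := 0, jx := 1, iy := 1, jy := 0} ?_
  constructor <;> (try simp [*, Th.fC, Th.vc, Th.vu, Th.fY, Th.fU, Th.bu, Th.bc, c2, c3]) <;> (try field_simp) <;> (try ring)

lemma hc10 (e h la : ZMod p) (he : e ≠ 0) (w1 w2) :
    Iso d (⟨0, e, 0, h, 0, la, 0, 0, 0, w1⟩ : Th p) ⟨0, 1, 0, h, 0, la, 0, 0, 0, w2⟩ := by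
  have h2 := two_ne (p := p)
  have h6 := six_ne (p := p)
  refine move {ix := e⁻¹} ?_
  constructor <;> (try simp [*, Th.fC, Th.vc, Th.vu, Th.fY, Th.fU, Th.bu, Th.bc, c2, c3]) <;> (try field_simp) <;> (try ring)

lemma hc11 (la : ZMod p) (hla : la ≠ 0) (w1 w2) :
    Iso d (⟨0, 1, 0, 1, 0, la, 0, 0, 0, w1⟩ : Th p) ⟨0, 1, 0, 1, 0, 1, 0, 0, 0, w2⟩ := by
  have h2 := two_ne (p := p)
  have h6 := six_ne (p := p)
  refine move {ix := la, jy := la⁻¹, ku := la⁻¹} ?_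
  constructor <;> (try simp [*, Th.fC, Th.vc, Th.vu, Th.fY, Th.fU, Th.bu, Th.bc, c2, c3]) <;> (try field_simp) <;> (try ring)

lemma ab1 (h mu la nu b2 b3 : ZMod p) (hla : la ≠ 0) (w1 w2) :
    Iso d (⟨0, 0, 0, h, mu, la, nu, b2, b3, w1⟩ : Th p) ⟨0, 0, 0, la * h, 0, 1, nu, la * b2 + nu * mu, 0, w2⟩ := by
  have h2 := two_ne (p := p)
  have h6 := six_ne (p := p)
  refine move {ku := la⁻¹, ky := -mu / la, kx := -b3 / la} ?_
  constructor <;> (try simp [*, Th.fC, Th.vc, Th.vu, Th.fY, Th.fU, Th.bu, Th.bc, c2, c3]) <;> (try field_simp) <;> (try ring)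

lemma ab2 (h nu b2 : ZMod p) (hh : h ≠ 0) (w1 w2) :
    Iso d (⟨0, 0, 0, h, 0, 1, nu, b2, 0, w1⟩ : Th p) ⟨0, 0, 0, 1, 0, 1, nu * h, 0, 0, w2⟩ := by
  have h2 := two_ne (p := p)
  have h6 := six_ne (p := p)
  refine move {jx := -b2 / h, jy := h⁻¹} ?_
  constructor <;> (try simp [*, Th.fC, Th.vc, Th.vu, Th.fY, Th.fU, Th.bu, Th.bc, c2, c3]) <;> (try field_simp) <;> (try ring)

lemma ab3 (h la nu : ZMod p) (hnu : nu ≠ 0) (w1 w2) :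
    Iso d (⟨0, 0, 0, h, 0, la, nu, 0, 0, w1⟩ : Th p) ⟨0, 0, 0, h, 0, la, 1, 0, 0, w2⟩ := by
  have h2 := two_ne (p := p)
  have h6 := six_ne (p := p)
  refine move {ix := nu⁻¹} ?_
  constructor <;> (try simp [*, Th.fC, Th.vc, Th.vu, Th.fY, Th.fU, Th.bu, Th.bc, c2, c3]) <;> (try field_simp) <;> (try ring)

lemma ab4 (nu b2 : ZMod p) (hb2 : b2 ≠ 0) (w1 w2) :
    Iso d (⟨0, 0, 0, 0, 0, 1, nu, b2, 0, w1⟩ : Th p) ⟨0, 0, 0, 1, 0, 1, 0, 0, 0, w2⟩ := by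
  have h2 := two_ne (p := p)
  have h6 := six_ne (p := p)
  refine move {ix := 0, jx := 1, iy := b2⁻¹, jy := 0, ju := nu / b2} ?_
  constructor <;> (try simp [*, Th.fC, Th.vc, Th.vu, Th.fY, Th.fU, Th.bu, Th.bc, c2, c3]) <;> (try field_simp) <;> (try ring)

lemma ab5 (h mu nu b2 b3 : ZMod p) (hh : h ≠ 0) (w1 w2) :
    Iso d (⟨0, 0, 0, h, mu, 0, nu, b2, b3, w1⟩ : Th p) ⟨0, 0, 0, 1, 0, 0, nu, 0, b3 - b2 * mu / h, w2⟩ := by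
  have h2 := two_ne (p := p)
  have h6 := six_ne (p := p)
  refine move {jx := -b2 / h, ku := h, lu := mu} ?_
  constructor <;> (try simp [*, Th.fC, Th.vc, Th.vu, Th.fY, Th.fU, Th.bu, Th.bc, c2, c3]) <;> (try field_simp) <;> (try ring)

lemma ab6 (nu b3 : ZMod p) (hnu : nu ≠ 0) (w1 w2) :
    Iso d (⟨0, 0, 0, 1, 0, 0, nu, 0, b3, w1⟩ : Th p) ⟨0, 0, 0, 1, 0, 0, 1, 0, 0, w2⟩ := by
  have h2 := two_ne (p := p)
  have h6 := six_ne (p := p)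
  refine move {jy := nu, ly := b3, ku := nu} ?_
  constructor <;> (try simp [*, Th.fC, Th.vc, Th.vu, Th.fY, Th.fU, Th.bu, Th.bc, c2, c3]) <;> (try field_simp) <;> (try ring)

lemma ab7  (w1 w2) :
    Iso d (⟨0, 0, 0, 1, 0, 0, 0, 0, 0, w1⟩ : Th p) ⟨0, 0, 0, 0, 0, 0, 1, 0, 0, w2⟩ := by
  have h2 := two_ne (p := p)
  have h6 := six_ne (p := p)
  refine move {ix := 0, jx := 1, jy := 0, ky := 1, iu := 1, ku := 0} ?_
  constructor <;> (try simp [*, Th.fC, Th.vc, Th.vu, Th.fY, Th.fU, Th.bu, Th.bc, c2, c3]) <;> (try field_simp) <;> (try ring)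

lemma ab8 (b3 : ZMod p) (hb3 : b3 ≠ 0) (w1 w2) :
    Iso d (⟨0, 0, 0, 1, 0, 0, 0, 0, b3, w1⟩ : Th p) ⟨0, 0, 0, 0, 0, 1, 1, 0, 0, w2⟩ := by
  have h2 := two_ne (p := p)
  have h6 := six_ne (p := p)
  refine move {ix := 0, jx := 1, jy := 0, ky := 1, iu := b3⁻¹, ku := 0} ?_
  constructor <;> (try simp [*, Th.fC, Th.vc, Th.vu, Th.fY, Th.fU, Th.bu, Th.bc, c2, c3]) <;> (try field_simp) <;> (try ring)

lemma ab9 (mu nu b2 b3 : ZMod p)  (w1 w2) :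
    Iso d (⟨0, 0, 0, 0, mu, 0, nu, b2, b3, w1⟩ : Th p) ⟨0, 0, 0, 0, 0, mu, b2, nu, b3, w2⟩ := by
  have h2 := two_ne (p := p)
  have h6 := six_ne (p := p)
  refine move {jy := 0, ky := 1, ju := 1, ku := 0} ?_
  constructor <;> (try simp [*, Th.fC, Th.vc, Th.vu, Th.fY, Th.fU, Th.bu, Th.bc, c2, c3]) <;> (try field_simp) <;> (try ring)

lemma ab10 (nu b2 b3 : ZMod p) (hnu : nu ≠ 0) (w1 w2) :
    Iso d (⟨0, 0, 0, 0, 0, 0, nu, b2, b3, w1⟩ : Th p) ⟨0, 0, 0, 0, 0, 0, 1, 0, 0, w2⟩ := by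
  have h2 := two_ne (p := p)
  have h6 := six_ne (p := p)
  refine move {jy := nu, ky := b2, ly := b3} ?_
  constructor <;> (try simp [*, Th.fC, Th.vc, Th.vu, Th.fY, Th.fU, Th.bu, Th.bc, c2, c3]) <;> (try field_simp) <;> (try ring)

lemma ab11 (b2 b3 : ZMod p) (hb2 : b2 ≠ 0) (w1 w2) :
    Iso d (⟨0, 0, 0, 0, 0, 0, 0, b2, b3, w1⟩ : Th p) ⟨0, 0, 0, 0, 0, 0, 1, 0, 0, w2⟩ := by
  have h2 := two_ne (p := p)
  have h6 := six_ne (p := p)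
  refine move {jy := 0, ky := b2, ly := b3, ju := 1, ku := 0} ?_
  constructor <;> (try simp [*, Th.fC, Th.vc, Th.vu, Th.fY, Th.fU, Th.bu, Th.bc, c2, c3]) <;> (try field_simp) <;> (try ring)

lemma ab12 (b3 : ZMod p) (hb3 : b3 ≠ 0) (w1 w2) :
    Iso d (⟨0, 0, 0, 0, 0, 0, 0, 0, b3, w1⟩ : Th p) ⟨0, 0, 0, 0, 0, 1, 0, 0, 0, w2⟩ := by
  have h2 := two_ne (p := p)
  have h6 := six_ne (p := p)
  refine move {ix := 0, kx := 1, iu := b3⁻¹, ku := 0} ?_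
  constructor <;> (try simp [*, Th.fC, Th.vc, Th.vu, Th.fY, Th.fU, Th.bu, Th.bc, c2, c3]) <;> (try field_simp) <;> (try ring)

end norm

set_option linter.all false

section labels
variable {p : ℕ} [hp : Fact p.Prime] [h5 : Fact (5 ≤ p)] {d : ℕ}

/-- 0/1 -/
def bz (b : Bool) : ZMod p := if b then 1 else 0
@[simp] lemma bz_t : (bz true : ZMod p) = 1 := rfl
@[simp] lemma bz_f : (bz false : ZMod p) = 0 := rfl

lemma wA (a b : ZMod p) : 0 * a = b * 0 := by ring
lemma wB (a b : ZMod p) : a * 0 = 0 * b := by ring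
lemma wU (a b : ZMod p) : a * 0 = b * 0 := by ring

def tA (nu h la : Bool) : Th p := ⟨0, 0, 0, bz h, 0, bz la, bz nu, 0, 0, by ring⟩
def tC0 (h la : Bool) : Th p := ⟨0, 1, 0, bz h, 0, bz la, 0, 0, 0, by ring⟩
def tC1 (h la : Bool) (e : ZMod p) : Th p := ⟨0, e, 0, bz h, 0, bz la, 1, 0, 0, by ring⟩
def tU (nu mu : Bool) : Th p := ⟨1, 0, 0, 0, bz mu, 0, bz nu, 0, 0, by ring⟩
def tM0 (mu : Bool) : Th p := ⟨1, 0, 1, 0, bz mu, 0, 0, 0, 0, by ring⟩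
def tM1 (mu : Bool) (r : ZMod p) : Th p := ⟨1, 0, r, 0, bz mu, 0, 1, 0, 0, by ring⟩

lemma norm_A1 (h mu la nu b2 b3 : ZMod p) (w) (hla : la ≠ 0) :
    ∃ a b c : Bool, (a, b, c) ≠ (false, true, false) ∧ Iso d (⟨0, 0, 0, h, mu, la, nu, b2, b3, w⟩ : Th p) (tA a b c) := by
  have s1 := ab1 (d := d) h mu la nu b2 b3 hla w (wA _ _)
  generalize la * h = h' at s1
  generalize la * b2 + nu * mu = b2' at s1
  by_cases hh : h' = 0
  · subst hh
    by_cases hb : b2' = 0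
    · subst hb
      by_cases hn : nu = 0
      · subst hn; exact ⟨false, false, true, by decide, s1⟩
      · exact ⟨true, false, true, by decide, s1.trans (ab3 0 1 nu hn _ _)⟩
    · exact ⟨false, true, true, by decide, s1.trans (ab4 nu b2' hb _ _)⟩
  · have s2 := s1.trans (ab2 h' nu b2' hh _ (wA _ _))
    by_cases hn : nu * h' = 0
    · rw [hn] at s2; exact ⟨false, true, true, by decide, s2⟩
    · exact ⟨true, true, true, by decide, s2.trans (ab3 1 1 _ hn _ _)⟩

lemma norm_A (h mu la nu b2 b3 : ZMod p) (w) :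
    ∃ a b c : Bool, (a, b, c) ≠ (false, true, false) ∧ Iso d (⟨0, 0, 0, h, mu, la, nu, b2, b3, w⟩ : Th p) (tA a b c) := by
  by_cases hla : la = 0
  · subst hla
    by_cases hh : h = 0
    · subst hh
      by_cases hm : mu = 0
      · subst hm
        by_cases hn : nu = 0
        · subst hn
          by_cases hb : b2 = 0
          · subst hb
            by_cases hb3 : b3 = 0
            · subst hb3; exact ⟨false, false, false, by decide, Iso.refl _⟩
            · exact ⟨false, false, true, by decide, ab12 b3 hb3 _ _⟩
          · exact ⟨true, false, false, by decide, ab11 b2 b3 hb _ _⟩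
        · exact ⟨true, false, false, by decide, ab10 nu b2 b3 hn _ _⟩
      · obtain ⟨a, b, c, h1, h2⟩ := norm_A1 (d := d) 0 0 mu b2 nu b3 (wA _ _) hm
        exact ⟨a, b, c, h1, (ab9 mu nu b2 b3 _ _).trans h2⟩
    · have s1 := ab5 (d := d) h mu nu b2 b3 hh w (wA _ _)
      generalize b3 - b2 * mu / h = b3' at s1
      by_cases hn : nu = 0
      · subst hn
        by_cases hb : b3' = 0
        · subst hb; exact ⟨true, false, false, by decide, s1.trans (ab7 _ _)⟩
        · exact ⟨true, false, true, by decide, s1.trans (ab8 _ hb _ _)⟩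
      · exact ⟨true, true, false, by decide, s1.trans (ab6 nu b3' hn _ _)⟩
  · exact norm_A1 h mu la nu b2 b3 w hla

lemma norm_C (e h mu la nu b2 b3 : ZMod p) (he : e ≠ 0) (w) :
    (∃ b c : Bool, Iso d (⟨0, e, 0, h, mu, la, nu, b2, b3, w⟩ : Th p) (tC0 b c)) ∨
    (∃ b c : Bool, ∃ r : ZMod p, r ≠ 0 ∧ Iso d (⟨0, e, 0, h, mu, la, nu, b2, b3, w⟩ : Th p) (tC1 b c r)) := by
  have s1 := (hc1 (d := d) e h mu la nu b2 b3 he w (wA _ _)).trans (hc2 e h la nu b2 _ he _ (wA _ _))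
  by_cases hn : nu = 0
  · left
    subst hn
    have key : ∃ e' h', e' ≠ 0 ∧ ∃ w', Iso d (⟨0, e, 0, h, 0, la, 0, b2, 0, wA _ _⟩ : Th p) ⟨0, e', 0, h', 0, la, 0, 0, 0, w'⟩ := by
      by_cases hh : h = 0
      · subst hh
        exact ⟨-e, b2, neg_ne_zero.2 he, wA _ _, hc9 e la b2 _ _⟩
      · exact ⟨e, h, he, wA _ _, hc8 e h la b2 hh _ _⟩
    obtain ⟨e', h', he', w', s2⟩ := key
    have s3 := (s1.trans s2).trans (hc10 e' h' la he' _ (wA _ _))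
    by_cases hh : h' = 0
    · subst hh
      by_cases hl : la = 0
      · subst hl; exact ⟨false, false, s3⟩
      · exact ⟨false, true, s3.trans (hc5 1 la 0 hl _ _)⟩
    · have s4 := s3.trans (hc4 1 h' la 0 hh _ (wA _ _))
      by_cases hl : h' * la = 0
      · rw [hl] at s4; exact ⟨true, false, s4⟩
      · exact ⟨true, true, s4.trans (hc11 _ hl _ _)⟩
  · right
    have he' : e * nu ≠ 0 := mul_ne_zero he hn
    have s2 := ((s1.trans (hc3 e h la nu b2 he hn _ (wA _ _))).trans
      (hc1 _ _ _ _ _ _ _ he' _ (wA _ _))).trans (hc2 _ _ _ _ _ _ he' _ (wA _ _))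
    generalize e * nu = e' at s2 he'
    by_cases hh : nu * h = 0
    · rw [hh] at s2
      by_cases hl : la = 0
      · subst hl; exact ⟨false, false, e', he', s2⟩
      · exact ⟨false, true, e', he', s2.trans (hc5 _ la _ hl _ _)⟩
    · have s4 := s2.trans (hc4 _ _ la _ hh _ (wA _ _))
      by_cases hl : nu * h * la = 0
      · rw [hl] at s4; exact ⟨true, false, _, he', s4⟩
      · have s5 := s4.trans (hc6 _ _ _ (nu * h * la)⁻¹ he' (inv_ne_zero hl) _ (wA _ _))
        rw [inv_mul_cancel₀ hl] at s5
        exact ⟨true, true, _, mul_ne_zero (pow_ne_zero _ (inv_ne_zero hl)) he', s5⟩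

lemma norm_U (k1 e h mu nu b2 b3 : ZMod p) (hk : k1 ≠ 0) (w) :
    ∃ b c : Bool, Iso d (⟨k1, e, 0, h, mu, 0, nu, b2, b3, w⟩ : Th p) (tU b c) := by
  have s1 := ((hu1 (d := d) k1 e h mu nu b2 b3 hk w (wU _ _)).trans (hu2 _ _ _ _ _ _ (wU _ _))).trans (hu3 _ _ _ _ _ (wU _ _))
  generalize mu - h * e / k1 = mu' at s1
  generalize b3 - b2 * e / k1 = b3' at s1
  by_cases hn : nu = 0
  · subst hn
    by_cases hm : mu' = 0
    · subst hm
      have s2 := s1.trans (hu7 b3' _ (wU _ _))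
      by_cases hb : b3' = 0
      · subst hb; exact ⟨false, false, s2⟩
      · exact ⟨false, true, s2.trans (hu6 _ hb _ _)⟩
    · exact ⟨false, true, (s1.trans (hu8 mu' b3' hm _ (wU _ _))).trans (hu6 _ hm _ _)⟩
  · have s2 := s1.trans (hu4 _ _ _ hn _ (wU _ _))
    by_cases hm : nu * mu' = 0
    · rw [hm] at s2; exact ⟨true, false, s2⟩
    · exact ⟨true, true, s2.trans (hu5 _ hm _ _)⟩

lemma norm_M (k1 e k2 s mu nu b2 b3 : ZMod p) (hk : k1 ≠ 0) (hk2 : k2 ≠ 0) (w) :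
    (∃ b : Bool, Iso d (⟨k1, e, k2, -k1 * s, mu, -k2 * s, nu, b2, b3, w⟩ : Th p) (tM0 b)) ∨
    (∃ b : Bool, ∃ r : ZMod p, r ≠ 0 ∧ Iso d (⟨k1, e, k2, -k1 * s, mu, -k2 * s, nu, b2, b3, w⟩ : Th p) (tM1 b r)) := by
  have hkk : k1 * k2 ≠ 0 := mul_ne_zero hk hk2
  have s1 := ((m41 (d := d) k1 e k2 s mu nu b2 b3 w (wB _ _)).trans (m42 _ _ _ _ _ _ _ hk hk2 _ (wB _ _))).trans
    (m43 _ _ _ _ _ hkk _ (wB _ _))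
  generalize k1 * k2 = r at hkk s1
  generalize mu - s * k2 * k1 * s + s * e + c2 s * k1 * k2 = mu' at s1
  by_cases hn : nu = 0
  · subst hn
    left
    have s2 := s1.trans (m44 _ _ hkk _ (wB _ _))
    by_cases hm : mu' / r = 0
    · rw [hm] at s2; exact ⟨false, s2⟩
    · exact ⟨true, s2.trans (m45 _ hm _ _)⟩
  · right
    have s2 := s1.trans (m46 _ _ _ hkk hn _ (wB _ _))
    by_cases hm : nu * mu' = 0
    · rw [hm] at s2; exact ⟨false, _, mul_ne_zero hn hkk, s2⟩
    · exact ⟨true, _, mul_ne_zero hn hkk, s2.trans (m47 _ _ (mul_ne_zero hn hkk) hm _ _)⟩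

lemma tC1_sq (b c : Bool) (hbc : (b, c) ≠ (true, true)) (e i : ZMod p) (he : e ≠ 0) (hi : i ≠ 0) :
    Iso d (tC1 b c e) (tC1 b c (i ^ 2 * e)) := by
  have s1 := hc6 (d := d) e (bz b) (bz c) i he hi (wA _ _) (wA _ _)
  cases c
  · refine s1.trans ?_
    simp only [bz_f, mul_zero]
    exact Iso.refl _
  · cases b
    · refine s1.trans ?_
      refine hc5 _ _ _ ?_ _ _
      simpa using hi
    · exact absurd rfl hbc

lemma tC1_4 (e i : ZMod p) (he : e ≠ 0) (hi : i ≠ 0) :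
    Iso d (tC1 true true e) (tC1 true true (i ^ 4 * e)) := by
  have s1 := (hc7 (d := d) e i⁻¹ he (inv_ne_zero hi) (wA _ _) (wA _ _)).trans (hc6 _ _ _ (i ^ 2) he (pow_ne_zero _ hi) _ (wA _ _))
  have e1 : i ^ 2 * i⁻¹ ^ 2 = 1 := by field_simp
  have e2 : (i ^ 2) ^ 2 * e = i ^ 4 * e := by ring
  rw [e1, e2] at s1
  exact s1

lemma tM1_3 (b : Bool) (e i : ZMod p) (he : e ≠ 0) (hi : i ≠ 0) :
    Iso d (tM1 b e) (tM1 b (i ^ 3 * e)) := by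
  have s1 := m48 (d := d) e (bz b) i he hi (wB _ _) (wB _ _)
  cases b
  · refine s1.trans ?_
    simp only [bz_f, mul_zero]
    exact Iso.refl _
  · refine s1.trans ?_
    refine m47 _ _ (mul_ne_zero (pow_ne_zero _ hi) he) ?_ _ _
    simpa using hi

abbrev Qk (p k : ℕ) [Fact p.Prime] := (ZMod p)ˣ ⧸ (powMonoidHom k : (ZMod p)ˣ →* (ZMod p)ˣ).range

abbrev LA := {t : Bool × Bool × Bool // t ≠ (false, true, false)}
abbrev LC := {t : Bool × Bool // t ≠ (true, true)}
/-- Labels -/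
abbrev Lab (p : ℕ) [Fact p.Prime] :=
  LA ⊕ (Bool × Bool) ⊕ (LC × Qk p 2) ⊕ Qk p 4 ⊕ (Bool × Bool) ⊕ Bool ⊕ (Bool × Qk p 3)

noncomputable def qrep {k : ℕ} (q : Qk p k) : ZMod p := ((Quotient.out q : (ZMod p)ˣ) : ZMod p)

lemma qrep_ne {k : ℕ} (q : Qk p k) : qrep q ≠ 0 := Units.ne_zero _

lemma qrep_ex (k : ℕ) (r : ZMod p) (hr : r ≠ 0) : ∃ q : Qk p k, ∃ i : ZMod p, i ≠ 0 ∧ qrep q = i ^ k * r := by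
  refine ⟨QuotientGroup.mk (Units.mk0 r hr), ?_⟩
  obtain ⟨⟨_, ⟨i, rfl⟩⟩, h⟩ := QuotientGroup.mk_out_eq_mul (powMonoidHom k : (ZMod p)ˣ →* (ZMod p)ˣ).range (Units.mk0 r hr)
  refine ⟨i, i.ne_zero, ?_⟩
  have := congrArg (fun u : (ZMod p)ˣ => (u : ZMod p)) h
  simp only [powMonoidHom_apply, Units.val_mul, Units.val_pow_eq_pow_val, Units.val_mk0] at this
  rw [mul_comm]
  exact this

lemma qrep_inj {k : ℕ} (q q' : Qk p k) (i : ZMod p) (h : qrep q' = i ^ k * qrep q) (hk : k ≠ 0) : q = q' := by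
  have hi : i ≠ 0 := by
    rintro rfl
    rw [zero_pow hk, zero_mul] at h
    exact qrep_ne q' h
  rw [← Quotient.out_eq q, ← Quotient.out_eq q']
  refine (QuotientGroup.eq).2 ⟨Units.mk0 i hi, ?_⟩
  rw [eq_inv_mul_iff_mul_eq]
  apply Units.ext
  rw [mul_comm]
  exact h.symm

noncomputable def rep : Lab p → Th p
  | .inl t => tA t.1.1 t.1.2.1 t.1.2.2
  | .inr (.inl t) => tC0 t.1 t.2
  | .inr (.inr (.inl t)) => tC1 t.1.1.1 t.1.1.2 (qrep t.2)
  | .inr (.inr (.inr (.inl q))) => tC1 true true (qrep q)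
  | .inr (.inr (.inr (.inr (.inl t)))) => tU t.1 t.2
  | .inr (.inr (.inr (.inr (.inr (.inl b))))) => tM0 b
  | .inr (.inr (.inr (.inr (.inr (.inr t))))) => tM1 t.1 (qrep t.2)

lemma norm_all (θ : Th p) : ∃ L : Lab p, Iso d θ (rep L) := by
  obtain ⟨k1, e, k2, h, mu, la, nu, b2, b3, w⟩ := θ
  by_cases hk1 : k1 = 0
  · subst hk1
    have key : ∀ (e h mu la nu b2 b3 : ZMod p) (he : e ≠ 0) w, ∃ L : Lab p, Iso d (⟨0, e, 0, h, mu, la, nu, b2, b3, w⟩ : Th p) (rep L) := by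
      intro e h mu la nu b2 b3 he w
      rcases norm_C (d := d) e h mu la nu b2 b3 he w with ⟨b, c, s⟩ | ⟨b, c, r, hr, s⟩
      · exact ⟨.inr (.inl (b, c)), s⟩
      · by_cases hbc : (b, c) = (true, true)
        · simp only [Prod.mk.injEq] at hbc
          obtain ⟨rfl, rfl⟩ := hbc
          obtain ⟨q, i, hi, hq⟩ := qrep_ex 4 r hr
          refine ⟨.inr (.inr (.inr (.inl q))), s.trans ?_⟩
          show Iso d _ (tC1 true true (qrep q))
          rw [hq]; exact tC1_4 r i hr hi
        · obtain ⟨q, i, hi, hq⟩ := qrep_ex 2 r hr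
          refine ⟨.inr (.inr (.inl (⟨(b, c), hbc⟩, q))), s.trans ?_⟩
          show Iso d _ (tC1 b c (qrep q))
          rw [hq]; exact tC1_sq b c hbc r i hr hi
    by_cases hk2 : k2 = 0
    · subst hk2
      by_cases he : e = 0
      · subst he
        obtain ⟨a, b, c, hn, s⟩ := norm_A (d := d) h mu la nu b2 b3 w
        exact ⟨.inl ⟨(a, b, c), hn⟩, s⟩
      · exact key _ _ _ _ _ _ _ he _
    · have hh : h = 0 := by
        rw [zero_mul, eq_comm, mul_eq_zero] at w
        exact w.resolve_right hk2
      subst hh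
      obtain ⟨L, s⟩ := key k2 0 la (mu - e * la / k2) (b2 + nu * e / k2) nu b3 hk2 (wA _ _)
      exact ⟨L, (hc0 e k2 mu la nu b2 b3 hk2 _ _).trans s⟩
  · by_cases hk2 : k2 = 0
    · subst hk2
      have hl : la = 0 := by
        rw [mul_zero, mul_eq_zero] at w
        exact w.resolve_left hk1
      subst hl
      obtain ⟨b, c, s⟩ := norm_U (d := d) k1 e h mu nu b2 b3 hk1 w
      exact ⟨.inr (.inr (.inr (.inr (.inl (b, c))))), s⟩
    · obtain ⟨s, rfl⟩ : ∃ s, la = -k2 * s := ⟨-la / k2, by field_simp⟩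
      obtain rfl : h = -k1 * s := by
        refine mul_right_cancel₀ hk2 ?_
        rw [← w]; ring
      rcases norm_M (d := d) k1 e k2 s mu nu b2 b3 hk1 hk2 w with ⟨b, s⟩ | ⟨b, r, hr, s⟩
      · exact ⟨.inr (.inr (.inr (.inr (.inr (.inl b))))), s⟩
      · obtain ⟨q, i, hi, hq⟩ := qrep_ex 3 r hr
        refine ⟨.inr (.inr (.inr (.inr (.inr (.inr (b, q)))))), s.trans ?_⟩
        show Iso d _ (tM1 b (qrep q))
        rw [hq]; exact tM1_3 b r i hr hi
end labels

set_option linter.all false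

section inj
variable {p : ℕ} [hp : Fact p.Prime] [h5 : Fact (5 ≤ p)] {d : ℕ} {θ θ' : Th p}
open Gr

/-- Necessary equations. -/
structure Mv.Eqs (m : Mv p) (θ θ' : Th p) : Prop where
  k0 : m.k ≠ 0
  ndx : ¬ (m.ix = 0 ∧ m.jx = 0 ∧ m.kx = 0)
  ndy : ¬ (m.iy = 0 ∧ m.jy = 0 ∧ m.ky = 0)
  ndu : ¬ (m.iu = 0 ∧ m.ju = 0 ∧ m.ku = 0)
  yu1 : θ.fU 0 m.iy m.iu m.ju = θ.fU 0 m.iu m.iy m.jy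
  yu2 : θ.fC 0 m.iy m.iu m.ju m.ku = θ.fC 0 m.iu m.iy m.jy m.ky
  xu1 : θ.fU 0 m.ix m.iu m.ju = θ.fU 0 m.iu m.ix m.jx
  xu2 : θ.fC 0 m.ix m.iu m.ju m.ku = m.k * θ'.k2 + θ.fC 0 m.iu m.ix m.jx m.kx
  xy1 : θ'.k1 * m.iu = 0
  xy2 : θ'.k1 * m.ju = 0
  xy3 : θ.fU 0 m.ix m.iy m.jy = θ'.k1 * m.ku + θ.fU 0 m.iy m.ix m.jx
  xy4 : θ.fC 0 m.ix m.iy m.jy m.ky = θ'.k1 * m.lu + m.k * θ'.e + θ.fC 0 m.iy m.ix m.jx m.kx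
  au1 : θ.fY m.k m.iu = 0
  au2 : θ.fU m.k m.xa m.iu m.ju = θ.fU 0 m.iu m.xa m.ya
  au3 : θ.fC m.k m.xa m.iu m.ju m.ku = m.k * θ'.la + θ.fC 0 m.iu m.xa m.ya m.ua
  ay1 : θ'.h * m.iu = 0
  ay2 : θ.fY m.k m.iy = θ'.h * m.ju
  ay3 : θ.fU m.k m.xa m.iy m.jy = θ'.h * m.ku + θ.fU 0 m.iy m.xa m.ya
  ay4 : θ.fC m.k m.xa m.iy m.jy m.ky = θ'.h * m.lu + m.k * θ'.mu + θ.fC 0 m.iy m.xa m.ya m.ua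
  ax1 : θ'.nu * m.iy = 0
  ax2 : θ.fY m.k m.ix = θ'.nu * m.jy
  ax3 : θ.fU m.k m.xa m.ix m.jx = θ'.nu * m.ky + θ.fU 0 m.ix m.xa m.ya
  ax4 : θ.fC m.k m.xa m.ix m.jx m.kx = θ'.nu * m.ly + θ.fC 0 m.ix m.xa m.ya m.ua

lemma ok_id (θ : Th p) : ({} : Mv p).Ok θ θ := by
  have h2 := two_ne (p := p)
  have h6 := six_ne (p := p)
  constructor <;> (try simp [*, Th.fC, Th.vc, Th.vu, Th.fY, Th.fU, Th.bu, Th.bc, c2, c3]) <;> (try field_simp) <;> (try ring)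

lemma GRel.map {G H : Type*} [Group G] [Group H] {a x y u c : G} (R : GRel d θ a x y u c) (f : G ≃* H) :
    GRel d θ (f a) (f x) (f y) (f u) (f c) where
  hcdef := by rw [R.hcdef, map_pow]
  hx := by rw [← map_pow, R.hx, map_one]
  hy := by rw [← map_pow, R.hy, map_one]
  hu := by rw [← map_pow, R.hu, map_one]
  ha := by rw [← map_pow, R.ha, map_one]
  cen := fun g => by
    have := (R.cen (f.symm g)).map f
    rwa [MulEquiv.apply_symm_apply] at this
  yu := R.yu.map f
  xu := by simp only [← zp_map, ← map_mul, R.xu]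
  xy := by simp only [← zp_map, ← map_mul, R.xy]
  au := by simp only [← zp_map, ← map_mul, R.au]
  ay := by simp only [← zp_map, ← map_mul, R.ay]
  ax := by simp only [← zp_map, ← map_mul, R.ax]
  nd := by
    intro i j k l h
    simp only [← zp_map, ← map_mul] at h
    exact R.nd i j k l ((MulEquiv.map_eq_one_iff f).1 h)

lemma nel_of_pow {g : Gr d θ} (hg : g ^ p = 1) : ∃ l i j k, g = nel l i j k := by
  rw [pow_p] at hg
  obtain ⟨l, hl⟩ := p_mul_eq_zero d (congrArg Gr.t hg)
  exact ⟨l, g.x, g.y, g.u, by ext <;> simp [nel, hl]⟩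

lemma nel_inj {l i j k l' i' j' k' : ZMod p} (h : (nel l i j k : Gr d θ) = nel l' i' j' k') :
    l = l' ∧ i = i' ∧ j = j' ∧ k = k' :=
  ⟨(iot_inj' d).1 (congrArg Gr.t h), congrArg Gr.x h, congrArg Gr.y h, congrArg Gr.u h⟩

lemma zp01 (l i j k r : ZMod p) (hr : r = 0 ∨ r = 1) : zp (nel l i j k : Gr d θ) r = nel (r * l) (r * i) (r * j) (r * k) := by
  rcases hr with rfl | rfl
  · rw [zp_zero]; ext <;> simp [nel]
  · rw [zp_one (nel_pow_p _ _ _ _)]; simp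

lemma iso_eqs (hI : Iso d θ' θ) (h1 : θ'.k1 = 0 ∨ θ'.k1 = 1) (h2 : θ'.h = 0 ∨ θ'.h = 1) (h3 : θ'.nu = 0 ∨ θ'.nu = 1)
    (h4 : θ'.b2 = 0) (h5 : θ'.b3 = 0) : ∃ m : Mv p, m.Eqs θ θ' := by
  obtain ⟨f⟩ := hI
  obtain ⟨τ0, hτ0⟩ := bar_surj (p := p) (d := d) 1
  have R := (move_rel {} (ok_id θ') τ0 hτ0).map f
  generalize f _ = a at R
  generalize f _ = x at R
  generalize f _ = y at R
  generalize f _ = u at R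
  generalize f _ = c at R
  obtain ⟨lx, ix, jx, kx, rfl⟩ := nel_of_pow R.hx
  obtain ⟨ly, iy, jy, ky, rfl⟩ := nel_of_pow R.hy
  obtain ⟨lu, iu, ju, ku, rfl⟩ := nel_of_pow R.hu
  have hc := R.hcdef
  rw [pow_pd] at hc
  obtain ⟨τ, xa, ya, ua⟩ := a
  obtain ⟨k, hk⟩ : ∃ k, k = bar p d τ := ⟨_, rfl⟩
  simp only [← hk] at hc
  subst hc
  have zc : ∀ r, zp (nel k 0 0 0 : Gr d θ) r = nel (r * k) 0 0 0 := by
    intro r; rw [zp_nel _ _ _ _ (Or.inl rfl)]; simp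
  have hk0 : k ≠ 0 := by
    rintro rfl
    have := (R.nd 0 0 0 1 (by simp only [zp_zero, one_mul, mul_one, zc]; ext <;> simp [nel])).2.2.2
    exact one_ne_zero this
  have nd : ∀ l : ZMod p, (nel l 0 0 0 * nel (-l / k * k) 0 0 0 : Gr d θ) = 1 := by
    intro l
    rw [nel_mul, fC000, fU000, div_mul_cancel₀ _ hk0]
    ext <;> simp [nel]
  have cz : ∀ l, (nel (-l / k * k) 0 0 0 : Gr d θ) * nel l 0 0 0 = 1 := by
    intro l
    rw [nel_mul, fC000, fU000, div_mul_cancel₀ _ hk0]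
    ext <;> simp [nel]
  have hxu := R.xu
  have hxy := R.xy
  have hau := R.au
  have hay := R.ay
  have hax := R.ax
  have hyu := R.yu.eq
  rw [nel_mul, nel_mul] at hyu
  obtain ⟨yu2, -, -, yu1⟩ := nel_inj hyu
  rw [zc, nel_mul, nel_mul, nel_mul] at hxu
  simp only [fC000, fU000, add_zero] at hxu
  obtain ⟨xu2, -, -, xu1⟩ := nel_inj hxu
  rw [zc, zp01 _ _ _ _ _ h1, nel_mul, nel_mul, nel_mul, nel_mul] at hxy
  simp only [fC000, fU000, add_zero] at hxy
  obtain ⟨xy4, xy1, xy2, xy3⟩ := nel_inj hxy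
  have xy1 : θ'.k1 * iu = 0 := by linear_combination -xy1
  have xy2 : θ'.k1 * ju = 0 := by linear_combination -xy2
  rw [xy1] at xy3 xy4
  simp only [fC00, fU00, add_zero, zero_add] at xy3 xy4
  rw [zc, nel_mul, nel_a, a_nel, ← hk] at hau
  simp only [fC000, fU000, fC00, fU00, add_zero, zero_add] at hau
  simp only [Gr.mk.injEq, add_right_inj, iot_inj'] at hau
  obtain ⟨au3, -, au1, au2⟩ := hau
  rw [zc, zp01 _ _ _ _ _ h2, nel_mul, nel_mul, nel_a, a_nel, ← hk] at hay
  simp only [fC000, fU000, fC00, fU00, add_zero, zero_add] at hay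
  simp only [Gr.mk.injEq, add_right_inj, iot_inj'] at hay
  obtain ⟨ay4, ay1, ay2, ay3⟩ := hay
  have ay1 : θ'.h * iu = 0 := by linear_combination -ay1
  rw [ay1] at ay3 ay4
  simp only [fC00, fU00, add_zero, zero_add] at ay3 ay4
  rw [h4, h5, zp_zero, zp_zero, one_mul, mul_one, zp01 _ _ _ _ _ h3, nel_mul, nel_a, a_nel, ← hk] at hax
  simp only [Gr.mk.injEq, add_right_inj, iot_inj'] at hax
  obtain ⟨ax4, ax1, ax2, ax3⟩ := hax
  have ax1 : θ'.nu * iy = 0 := by linear_combination -ax1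
  rw [ax1] at ax3 ax4
  simp only [fC00, fU00, add_zero, zero_add] at ax3 ax4
  refine ⟨⟨k, xa, ya, ua, lx, ix, jx, kx, ly, iy, jy, ky, lu, iu, ju, ku⟩, ?_⟩
  constructor <;> (try simp only [])
  · exact hk0
  · rintro ⟨rfl, rfl, rfl⟩
    exact one_ne_zero (R.nd 1 0 0 (-lx / k) (by simp only [zp_zero, one_mul, zp_one (nel_pow_p _ _ _ _), zc, cz])).1
  · rintro ⟨rfl, rfl, rfl⟩
    exact one_ne_zero (R.nd 0 1 0 (-ly / k) (by simp only [zp_zero, one_mul, mul_one, zp_one (nel_pow_p _ _ _ _), zc, nd])).2.1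
  · rintro ⟨rfl, rfl, rfl⟩
    exact one_ne_zero (R.nd 0 0 1 (-lu / k) (by simp only [zp_zero, one_mul, mul_one, zp_one (nel_pow_p _ _ _ _), zc, nd])).2.2.1
  · linear_combination yu1
  · linear_combination yu2
  · linear_combination xu1
  · linear_combination xu2
  · exact xy1
  · exact xy2
  · linear_combination xy3
  · linear_combination xy4
  · linear_combination au1
  · linear_combination au2
  · linear_combination au3
  · exact ay1
  · linear_combination ay2
  · linear_combination ay3
  · linear_combination ay4
  · exact ax1
  · linear_combination ax2
  · linear_combination ax3
  · linear_combination ax4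
end inj

set_option linter.all false

section inj2
variable {p : ℕ} [hp : Fact p.Prime] [h5 : Fact (5 ≤ p)] {d : ℕ}

lemma bz_ne (b : Bool) : (bz b : ZMod p) ≠ 0 ↔ b = true := by cases b <;> simp
lemma bz01 (b : Bool) : (bz b : ZMod p) = 0 ∨ (bz b : ZMod p) = 1 := by cases b <;> simp
lemma bool_eq {a b : Bool} (h1 : (bz a : ZMod p) ≠ 0 → (bz b : ZMod p) ≠ 0) (h2 : (bz b : ZMod p) ≠ 0 → (bz a : ZMod p) ≠ 0) : a = b := by
  simp only [bz_ne] at h1 h2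
  cases a <;> cases b <;> simp_all

lemma c2z : c2 (0 : ZMod p) = 0 := by simp [c2]
lemma c3z : c3 (0 : ZMod p) = 0 := by simp [c3]

lemma fam1 {θ θ' : Th p} {m : Mv p} (E : m.Eqs θ θ') (h : θ.k1 = 0) : θ'.k1 = 0 := by
  by_contra h'
  have e1 := (mul_eq_zero.1 E.xy1).resolve_left h'
  have e2 := (mul_eq_zero.1 E.xy2).resolve_left h'
  have e3 := E.xy3
  simp only [Th.fU, Th.vu, Th.fY, Th.bu, h, c2] at e3
  have e4 : θ'.k1 * m.ku = 0 := by linear_combination -e3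
  exact E.ndu ⟨e1, e2, (mul_eq_zero.1 e4).resolve_left h'⟩
lemma fam2 {θ θ' : Th p} {m : Mv p} (E : m.Eqs θ θ') (h : θ.k1 = 0) (he : θ.e = 0) (h2 : θ.k2 = 0) : θ'.e = 0 ∧ θ'.k2 = 0 := by
  have h' := fam1 E h
  have e3 := E.xy4
  have e4 := E.xu2
  simp only [Th.fC, Th.fU, Th.vu, Th.vc, Th.fY, Th.bu, Th.bc, h, h', he, h2, c2, c3] at e3 e4
  constructor
  · refine (mul_eq_zero.1 (?_ : m.k * θ'.e = 0)).resolve_left E.k0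
    linear_combination -e3
  · refine (mul_eq_zero.1 (?_ : m.k * θ'.k2 = 0)).resolve_left E.k0
    linear_combination -e4
lemma fam3 {θ θ' : Th p} {m : Mv p} (E : m.Eqs θ θ') (he : θ.e = 0) (h2 : θ.k2 = 0) (h1 : θ'.k1 ≠ 0) : θ'.k2 = 0 := by
  have e1 := (mul_eq_zero.1 E.xy1).resolve_left h1
  have e2 := (mul_eq_zero.1 E.xy2).resolve_left h1
  have e4 := E.xu2
  simp only [Th.fC, Th.fU, Th.vu, Th.vc, Th.fY, Th.bu, Th.bc, he, h2, e1, e2, c2, c3] at e4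
  refine (mul_eq_zero.1 (?_ : m.k * θ'.k2 = 0)).resolve_left E.k0
  linear_combination -e4

lemma inj_A {h la nu h' la' nu' : ZMod p} {w w'} {m : Mv p}
    (E : m.Eqs (⟨0, 0, 0, h, 0, la, nu, 0, 0, w⟩ : Th p) ⟨0, 0, 0, h', 0, la', nu', 0, 0, w'⟩) :
    (la' ≠ 0 → la ≠ 0) ∧ (nu = 0 → h = 0 → nu' = 0 ∧ h' = 0) ∧ (h * nu = 0 → h * la = 0 → h' * nu' = 0 ∧ h' * la' = 0) ∧
    (h * la * nu = 0 → h' * la' * nu' = 0) := by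
  have k0 := E.k0
  have au1 := E.au1
  have au2 := E.au2
  have au3 := E.au3
  have ay1 := E.ay1
  have ay2 := E.ay2
  have ay3 := E.ay3
  have ax1 := E.ax1
  have ax2 := E.ax2
  have ax3 := E.ax3
  simp only [Th.fC, Th.fU, Th.vu, Th.vc, Th.fY, Th.bu, Th.bc] at *
  simp only [c2z, c3z] at *
  have d1 : m.iu * nu = 0 := (mul_eq_zero.1 (show m.k * (m.iu * nu) = 0 by linear_combination au1)).resolve_left k0
  have d2 : h * m.ju = 0 := (mul_eq_zero.1 (show m.k * (h * m.ju) = 0 by linear_combination au2 - c2 m.k * h * d1)).resolve_left k0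
  have d3 : la * m.ku = la' := mul_left_cancel₀ k0 (show m.k * (la * m.ku) = m.k * la' by
    linear_combination au3 - c2 m.k * la * d2 - c3 m.k * h * la * d1)
  have y2 : m.iy * nu * m.k = h' * m.ju := by linear_combination ay2
  have y3 : m.k * h * m.jy + m.iy * c2 m.k * h * nu = h' * m.ku := by linear_combination ay3
  have x2 : m.ix * nu * m.k = nu' * m.jy := by linear_combination ax2
  have x3 : m.k * h * m.jx + m.ix * c2 m.k * h * nu = nu' * m.ky := by linear_combination ax3
  refine ⟨?_, ?_, ?_, ?_⟩
  · rintro hl rfl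
    exact hl (by rw [← d3, zero_mul])
  · rintro rfl rfl
    constructor
    · by_contra hn
      refine E.ndy ⟨(mul_eq_zero.1 ax1).resolve_left hn, (mul_eq_zero.1 ?_).resolve_left hn, (mul_eq_zero.1 ?_).resolve_left hn⟩
      · rw [← x2]; ring
      · rw [← x3]; ring
    · by_contra hn
      refine E.ndu ⟨(mul_eq_zero.1 ay1).resolve_left hn, (mul_eq_zero.1 ?_).resolve_left hn, (mul_eq_zero.1 ?_).resolve_left hn⟩
      · rw [← y2]; ring
      · rw [← y3]; ring
  · intro a1 a2
    constructor
    · by_contra hn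
      have hh := left_ne_zero_of_mul hn
      have hn' := right_ne_zero_of_mul hn
      have iy := (mul_eq_zero.1 ax1).resolve_left hn'
      refine E.ndu ⟨(mul_eq_zero.1 ay1).resolve_left hh, (mul_eq_zero.1 ?_).resolve_left hh, (mul_eq_zero.1 ?_).resolve_left hn⟩
      · rw [← y2, iy]; ring
      · linear_combination -nu' * y3 - m.k * h * x2 + nu' * c2 m.k * m.iy * a1 + m.k ^ 2 * m.ix * a1
    · rw [← d3]
      linear_combination (-la) * y3 + m.k * m.jy * a2 + m.iy * c2 m.k * nu * a2
  · intro a1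
    by_contra hn
    have hn' := right_ne_zero_of_mul hn
    have iy := (mul_eq_zero.1 ax1).resolve_left hn'
    apply hn
    rw [← d3]
    rw [iy] at y3
    linear_combination (-la * nu') * y3 - la * m.k * h * x2 + m.k ^ 2 * m.ix * a1

lemma inj_C {e h la nu e' h' la' nu' : ZMod p} {w w'} {m : Mv p} (he : e ≠ 0) (he' : e' ≠ 0)
    (E : m.Eqs (⟨0, e, 0, h, 0, la, nu, 0, 0, w⟩ : Th p) ⟨0, e', 0, h', 0, la', nu', 0, 0, w'⟩) :
    (nu ≠ 0 → nu' ≠ 0) ∧ (la' ≠ 0 → la ≠ 0) ∧ ((nu = 0 ↔ nu' = 0) → h ≠ 0 → h' ≠ 0) ∧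
    (nu = 1 → nu' = 1 → e' = m.ix ^ 2 * e) ∧
    (nu = 1 → nu' = 1 → h = 1 → h' = 1 → la = 1 → la' = 1 → e' = (m.k⁻¹) ^ 4 * e) := by
  have k0 := E.k0
  have xu2 := E.xu2
  have yu2 := E.yu2
  have xy4 := E.xy4
  have au3 := E.au3
  have ay2 := E.ay2
  have ay3 := E.ay3
  have ax1 := E.ax1
  have ax2 := E.ax2
  have ax3 := E.ax3
  simp only [Th.fC, Th.fU, Th.vu, Th.vc, Th.fY, Th.bu, Th.bc] at *
  simp only [c2z, c3z] at *
  have D : e * (m.ix * m.jy - m.iy * m.jx) = m.k * e' := by linear_combination xy4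
  have D0 : m.ix * m.jy - m.iy * m.jx ≠ 0 := by
    intro h0; rw [h0, mul_zero] at D; exact mul_ne_zero k0 he' D.symm
  have P : m.ix * m.ju - m.iu * m.jx = 0 := (mul_eq_zero.1 (show e * (m.ix * m.ju - m.iu * m.jx) = 0 by linear_combination xu2)).resolve_left he
  have Q : m.iy * m.ju - m.iu * m.jy = 0 := (mul_eq_zero.1 (show e * (m.iy * m.ju - m.iu * m.jy) = 0 by linear_combination yu2)).resolve_left he
  have iu : m.iu = 0 := (mul_eq_zero.1 (show (m.ix * m.jy - m.iy * m.jx) * m.iu = 0 by linear_combination m.iy * P - m.ix * Q)).resolve_left D0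
  have ju : m.ju = 0 := (mul_eq_zero.1 (show (m.ix * m.jy - m.iy * m.jx) * m.ju = 0 by linear_combination m.jy * P - m.jx * Q)).resolve_left D0
  have ku : m.ku ≠ 0 := fun h => E.ndu ⟨iu, ju, h⟩
  rw [iu, ju] at au3
  simp only [c2z, c3z] at au3
  rw [ju] at ay2
  have d3 : la * m.ku = la' := mul_left_cancel₀ k0 (show m.k * (la * m.ku) = m.k * la' by linear_combination au3)
  have y2 : m.iy * nu = 0 := (mul_eq_zero.1 (show m.k * (m.iy * nu) = 0 by linear_combination ay2)).resolve_left k0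
  have y3 : m.k * h * m.jy = h' * m.ku := by linear_combination ay3 - c2 m.k * h * y2
  have x2 : m.ix * nu * m.k = nu' * m.jy := by linear_combination ax2
  have x3 : m.k * h * m.jx + m.ix * c2 m.k * h * nu = nu' * m.ky := by linear_combination ax3
  have n1 : nu ≠ 0 → m.iy = 0 ∧ m.ix ≠ 0 ∧ m.jy ≠ 0 := by
    intro hn
    have iy := (mul_eq_zero.1 y2).resolve_right hn
    rw [iy, zero_mul, sub_zero] at D0
    exact ⟨iy, left_ne_zero_of_mul D0, right_ne_zero_of_mul D0⟩
  refine ⟨?_, ?_, ?_, ?_, ?_⟩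
  · rintro hn rfl
    obtain ⟨-, ix, jy⟩ := n1 hn
    rw [zero_mul] at x2
    exact mul_ne_zero (mul_ne_zero ix hn) k0 x2
  · rintro hl rfl
    exact hl (by rw [← d3, zero_mul])
  · rintro hn hh rfl
    rw [zero_mul] at y3
    by_cases h0 : nu = 0
    · rw [hn.1 h0, h0] at x3
      have jy := (mul_eq_zero.1 y3).resolve_left (mul_ne_zero k0 hh)
      have jx := (mul_eq_zero.1 (show m.k * h * m.jx = 0 by linear_combination x3)).resolve_left (mul_ne_zero k0 hh)
      exact D0 (by rw [jx, jy]; ring)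
    · exact mul_ne_zero (mul_ne_zero k0 hh) (n1 h0).2.2 y3
  · rintro rfl rfl
    obtain ⟨iy, -, -⟩ := n1 one_ne_zero
    rw [iy] at D
    exact mul_left_cancel₀ k0 (by linear_combination -D - e * m.ix * x2)
  · rintro rfl rfl rfl rfl rfl rfl
    obtain ⟨iy, -, -⟩ := n1 one_ne_zero
    rw [iy] at D
    have z1 : m.k ^ 2 * m.ix = 1 := by linear_combination y3 + d3 + m.k * x2
    have z2 : m.ix = (m.k⁻¹) ^ 2 := by field_simp; linear_combination z1
    have z3 : e' = m.ix ^ 2 * e := mul_left_cancel₀ k0 (by linear_combination -D - e * m.ix * x2)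
    rw [z3, z2]; ring

lemma inj_U {mu nu mu' nu' : ZMod p} {w w'} {m : Mv p}
    (E : m.Eqs (⟨1, 0, 0, 0, mu, 0, nu, 0, 0, w⟩ : Th p) ⟨1, 0, 0, 0, mu', 0, nu', 0, 0, w'⟩) :
    (nu ≠ 0 → nu' ≠ 0) ∧ ((nu = 0 ↔ nu' = 0) → mu ≠ 0 → mu' ≠ 0) := by
  have k0 := E.k0
  have xy1 := E.xy1
  have xy2 := E.xy2
  have xy3 := E.xy3
  have ay2 := E.ay2
  have ay4 := E.ay4
  have ax1 := E.ax1
  have ax2 := E.ax2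
  have ax4 := E.ax4
  simp only [Th.fC, Th.fU, Th.vu, Th.vc, Th.fY, Th.bu, Th.bc] at *
  simp only [c2z, c3z] at *
  have D : m.ix * m.jy - m.iy * m.jx = m.ku := by linear_combination xy3
  have D0 : m.ix * m.jy - m.iy * m.jx ≠ 0 := by
    intro h0; rw [h0] at D; exact E.ndu ⟨by linear_combination xy1, by linear_combination xy2, D.symm⟩
  have y2 : m.iy * nu = 0 := (mul_eq_zero.1 (show m.k * (m.iy * nu) = 0 by linear_combination ay2)).resolve_left k0
  have y4 : mu * m.jy = mu' := mul_left_cancel₀ k0 (by linear_combination ay4 - c2 m.k * mu * y2)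
  have x2 : m.ix * nu * m.k = nu' * m.jy := by linear_combination ax2
  have n1 : nu ≠ 0 → m.iy = 0 ∧ m.ix ≠ 0 ∧ m.jy ≠ 0 := by
    intro hn
    have iy := (mul_eq_zero.1 y2).resolve_right hn
    rw [iy, zero_mul, sub_zero] at D0
    exact ⟨iy, left_ne_zero_of_mul D0, right_ne_zero_of_mul D0⟩
  refine ⟨?_, ?_⟩
  · rintro hn rfl
    obtain ⟨-, ix, jy⟩ := n1 hn
    rw [zero_mul] at x2
    exact mul_ne_zero (mul_ne_zero ix hn) k0 x2
  · rintro hn hh rfl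
    have jy := (mul_eq_zero.1 y4).resolve_left hh
    by_cases h0 : nu = 0
    · rw [hn.1 h0, h0] at ax4
      have jx := (mul_eq_zero.1 (show m.k * mu * m.jx = 0 by linear_combination ax4)).resolve_left (mul_ne_zero k0 hh)
      exact D0 (by rw [jx, jy]; ring)
    · exact (n1 h0).2.2 jy

lemma inj_M {k2 mu nu k2' mu' nu' : ZMod p} {w w'} {m : Mv p} (hk : k2 ≠ 0)
    (E : m.Eqs (⟨1, 0, k2, 0, mu, 0, nu, 0, 0, w⟩ : Th p) ⟨1, 0, k2', 0, mu', 0, nu', 0, 0, w'⟩) :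
    (nu ≠ 0 → nu' ≠ 0) ∧ (mu ≠ 0 → mu' ≠ 0) ∧ (nu = 1 → nu' = 1 → k2' = m.ix ^ 3 * k2) := by
  have k0 := E.k0
  have xy1 := E.xy1
  have xy2 := E.xy2
  have xy3 := E.xy3
  have xu2 := E.xu2
  have yu2 := E.yu2
  have au3 := E.au3
  have ay4 := E.ay4
  have ax2 := E.ax2
  simp only [Th.fC, Th.fU, Th.vu, Th.vc, Th.fY, Th.bu, Th.bc] at *
  simp only [c2z, c3z] at *
  have iu : m.iu = 0 := by linear_combination xy1
  have ju : m.ju = 0 := by linear_combination xy2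
  rw [iu, ju] at xu2 yu2 au3
  try simp only [c2z, c3z] at xu2 yu2 au3
  have D : m.ix * m.jy - m.iy * m.jx = m.ku := by linear_combination xy3
  have ku : m.ku ≠ 0 := fun h => E.ndu ⟨iu, ju, h⟩
  have hkk := mul_ne_zero hk ku
  have iy : m.iy = 0 := (mul_eq_zero.1 (show (k2 * m.ku) * m.iy = 0 by linear_combination yu2)).resolve_left hkk
  have xa : m.xa = 0 := (mul_eq_zero.1 (show (k2 * m.ku) * m.xa = 0 by linear_combination au3)).resolve_left hkk
  rw [iy, xa] at ay4
  try simp only [c2z, c3z] at ay4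
  rw [iy] at D
  have D' : m.ix * m.jy ≠ 0 := by
    intro h; apply ku; rw [← D, h]; ring
  have ix := left_ne_zero_of_mul D'
  have jy := right_ne_zero_of_mul D'
  have y4 : mu * m.jy = mu' := mul_left_cancel₀ k0 (by linear_combination ay4)
  have x2 : m.ix * nu * m.k = nu' * m.jy := by linear_combination ax2
  refine ⟨?_, ?_, ?_⟩
  · rintro hn rfl
    rw [zero_mul] at x2
    exact mul_ne_zero (mul_ne_zero ix hn) k0 x2
  · rintro hh rfl
    exact mul_ne_zero hh jy y4
  · rintro rfl rfl
    exact mul_left_cancel₀ k0 (by linear_combination -xu2 - k2 * m.ix * D - m.ix ^ 2 * k2 * x2)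
end inj2

set_option linter.all false

section inj3
variable {p : ℕ} [hp : Fact p.Prime] [h5 : Fact (5 ≤ p)] {d : ℕ}

def tC (nu h la : Bool) (e : ZMod p) : Th p := ⟨0, e, 0, bz h, 0, bz la, bz nu, 0, 0, by ring⟩
def tM (nu mu : Bool) (r : ZMod p) : Th p := ⟨1, 0, r, 0, bz mu, 0, bz nu, 0, 0, by ring⟩

lemma iso_A {a b c a' b' c' : Bool} (H : (a, b, c) ≠ (false, true, false)) (H' : (a', b', c') ≠ (false, true, false))
    (I : Iso d (tA a b c : Th p) (tA a' b' c')) : (a, b, c) = (a', b', c') := by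
  obtain ⟨m, E⟩ := iso_eqs I (Or.inl rfl) (bz01 b) (bz01 a) rfl rfl
  obtain ⟨m', E'⟩ := iso_eqs I.symm (Or.inl rfl) (bz01 b') (bz01 a') rfl rfl
  have A := inj_A E
  have B := inj_A E'
  cases a <;> cases b <;> cases c <;> cases a' <;> cases b' <;> cases c' <;> simp_all [bz]

lemma iso_C {a b c a' b' c' : Bool} {e e' : ZMod p} (he : e ≠ 0) (he' : e' ≠ 0)
    (I : Iso d (tC a b c e : Th p) (tC a' b' c' e')) : a = a' ∧ b = b' ∧ c = c' ∧
      (a = true → ∃ i, e' = i ^ 2 * e) ∧ (a = true → b = true → c = true → ∃ i, e' = i ^ 4 * e) := by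
  obtain ⟨m, E⟩ := iso_eqs I (Or.inl rfl) (bz01 b) (bz01 a) rfl rfl
  obtain ⟨m', E'⟩ := iso_eqs I.symm (Or.inl rfl) (bz01 b') (bz01 a') rfl rfl
  obtain ⟨A1, A2, A3, -, -⟩ := inj_C he' he E
  obtain ⟨B1, B2, B3, B4, B5⟩ := inj_C he he' E'
  obtain rfl := bool_eq B1 A1
  obtain rfl := bool_eq A2 B2
  obtain rfl := bool_eq (B3 Iff.rfl) (A3 Iff.rfl)
  refine ⟨rfl, rfl, rfl, ?_, ?_⟩
  · rintro rfl
    exact ⟨_, B4 rfl rfl⟩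
  · rintro rfl rfl rfl
    exact ⟨_, B5 rfl rfl rfl rfl rfl rfl⟩

lemma iso_U {a b a' b' : Bool} (I : Iso d (tU a b : Th p) (tU a' b')) : a = a' ∧ b = b' := by
  obtain ⟨m, E⟩ := iso_eqs I (Or.inr rfl) (Or.inl rfl) (bz01 a) rfl rfl
  obtain ⟨m', E'⟩ := iso_eqs I.symm (Or.inr rfl) (Or.inl rfl) (bz01 a') rfl rfl
  obtain ⟨A1, A2⟩ := inj_U E
  obtain ⟨B1, B2⟩ := inj_U E'
  obtain rfl := bool_eq B1 A1
  obtain rfl := bool_eq (B2 Iff.rfl) (A2 Iff.rfl)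
  exact ⟨rfl, rfl⟩

lemma iso_M {a b a' b' : Bool} {r r' : ZMod p} (he : r ≠ 0) (he' : r' ≠ 0)
    (I : Iso d (tM a b r : Th p) (tM a' b' r')) : a = a' ∧ b = b' ∧ (a = true → ∃ i, r' = i ^ 3 * r) := by
  obtain ⟨m, E⟩ := iso_eqs I (Or.inr rfl) (Or.inl rfl) (bz01 a) rfl rfl
  obtain ⟨m', E'⟩ := iso_eqs I.symm (Or.inr rfl) (Or.inl rfl) (bz01 a') rfl rfl
  obtain ⟨A1, A2, -⟩ := inj_M he' E
  obtain ⟨B1, B2, B3⟩ := inj_M he E'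
  obtain rfl := bool_eq B1 A1
  obtain rfl := bool_eq B2 A2
  refine ⟨rfl, rfl, ?_⟩
  rintro rfl
  exact ⟨_, B3 rfl rfl⟩

/-- family of a normal form -/
noncomputable def famOf (θ : Th p) : Prop × Prop := (θ.k1 = 0, θ.e = 0 ∧ θ.k2 = 0)

lemma fam_eq {θ θ' : Th p} {m m' : Mv p} (E : m.Eqs θ θ') (E' : m'.Eqs θ' θ)
    (h1 : θ.k1 ≠ 0 → θ.e = 0) (h2 : θ'.k1 ≠ 0 → θ'.e = 0) : famOf θ = famOf θ' := by
  have k : θ.k1 = 0 ↔ θ'.k1 = 0 := ⟨fam1 E, fam1 E'⟩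
  refine Prod.ext (propext k) (propext ?_)
  by_cases h0 : θ.k1 = 0
  · exact ⟨fun ⟨a, b⟩ => fam2 E h0 a b, fun ⟨a, b⟩ => fam2 E' (k.1 h0) a b⟩
  · have h0' := fun h => h0 (k.2 h)
    exact ⟨fun ⟨a, b⟩ => ⟨h2 h0', fam3 E a b h0'⟩, fun ⟨a, b⟩ => ⟨h1 h0, fam3 E' a b h0⟩⟩

lemma rep_props (L : Lab p) : ((rep L).k1 = 0 ∨ (rep L).k1 = 1) ∧ ((rep L).h = 0 ∨ (rep L).h = 1) ∧
    ((rep L).nu = 0 ∨ (rep L).nu = 1) ∧ (rep L).b2 = 0 ∧ (rep L).b3 = 0 ∧ ((rep L).k1 ≠ 0 → (rep L).e = 0) := by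
  rcases L with t | t | t | q | t | t | t <;>
    simp [rep, tA, tC0, tC1, tU, tM0, tM1, bz01]

lemma rep_inj {L L' : Lab p} (I : Iso d (rep L) (rep L')) : L = L' := by
  have F : famOf (rep L) = famOf (rep L') := by
    obtain ⟨a1, a2, a3, a4, a5, a6⟩ := rep_props L
    obtain ⟨b1, b2, b3, b4, b5, b6⟩ := rep_props L'
    obtain ⟨m, E⟩ := iso_eqs I a1 a2 a3 a4 a5
    obtain ⟨m', E'⟩ := iso_eqs I.symm b1 b2 b3 b4 b5
    exact fam_eq E' E a6 b6
  have cC0 : ∀ b c, (tC0 b c : Th p) = tC false b c 1 := fun _ _ => rfl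
  have cC1 : ∀ b c e, (tC1 b c e : Th p) = tC true b c e := fun _ _ _ => rfl
  have cM0 : ∀ b, (tM0 b : Th p) = tM false b 1 := fun _ => rfl
  have cM1 : ∀ b e, (tM1 b e : Th p) = tM true b e := fun _ _ => rfl
  have o : (1 : ZMod p) ≠ 0 := one_ne_zero
  rcases L with ⟨⟨a, b, c⟩, H⟩ | ⟨b, c⟩ | ⟨⟨⟨b, c⟩, H⟩, q⟩ | q | ⟨a, b⟩ | b | ⟨b, q⟩ <;>
  rcases L' with ⟨⟨a', b', c'⟩, H'⟩ | ⟨b', c'⟩ | ⟨⟨⟨b', c'⟩, H'⟩, q'⟩ | q' | ⟨a', b'⟩ | b' | ⟨b', q'⟩ <;>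
  first
  | (exfalso; simp [famOf, rep, tA, tC0, tC1, tU, tM0, tM1, qrep_ne] at F; done)
  | skip
  all_goals simp only [rep, cC0, cC1, cM0, cM1] at I
  · have := iso_A H H' I
    simp only [Sum.inl.injEq, Subtype.mk.injEq]
    exact this
  · obtain ⟨-, rfl, rfl, -⟩ := iso_C o o I
    rfl
  · exact absurd (iso_C o (qrep_ne _) I).1 (by simp)
  · exact absurd (iso_C o (qrep_ne _) I).1 (by simp)
  · exact absurd (iso_C (qrep_ne _) o I).1 (by simp)
  · obtain ⟨-, rfl, rfl, h, -⟩ := iso_C (qrep_ne _) (qrep_ne _) I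
    obtain ⟨i, hi⟩ := h rfl
    rw [qrep_inj _ _ i hi two_ne_zero]
  · obtain ⟨-, rfl, rfl, -⟩ := iso_C (qrep_ne _) (qrep_ne _) I
    exact absurd rfl H
  · exact absurd (iso_C (qrep_ne _) o I).1 (by simp)
  · obtain ⟨-, rfl, rfl, -⟩ := iso_C (qrep_ne _) (qrep_ne _) I
    exact absurd rfl H'
  · obtain ⟨-, -, -, -, h⟩ := iso_C (qrep_ne _) (qrep_ne _) I
    obtain ⟨i, hi⟩ := h rfl rfl rfl
    rw [qrep_inj _ _ i hi four_ne_zero]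
  · obtain ⟨rfl, rfl⟩ := iso_U I
    rfl
  · obtain ⟨-, rfl, -⟩ := iso_M o o I
    rfl
  · exact absurd (iso_M o (qrep_ne _) I).1 (by simp)
  · exact absurd (iso_M (qrep_ne _) o I).1 (by simp)
  · obtain ⟨-, rfl, h⟩ := iso_M (qrep_ne _) (qrep_ne _) I
    obtain ⟨i, hi⟩ := h rfl
    rw [qrep_inj _ _ i hi three_ne_zero]

lemma card_Qk (k : ℕ) : Nat.card (Qk p k) = Nat.gcd (p - 1) k := by
  have h := IsCyclic.index_powMonoidHom_range (G := (ZMod p)ˣ) k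
  rw [Nat.card_eq_fintype_card, ZMod.card_units] at h
  exact h

lemma card_Lab : Nat.card (Lab p) = 23 + 2 * Nat.gcd (p - 1) 3 + Nat.gcd (p - 1) 4 := by
  have g2 : Nat.gcd (p - 1) 2 = 2 := by
    have := h5.out
    rcases hp.out.eq_two_or_odd with h | h
    · omega
    · exact Nat.gcd_eq_right (by omega)
  have hA : Nat.card LA = 7 := by rw [Nat.card_eq_fintype_card]; decide
  have hC : Nat.card LC = 3 := by rw [Nat.card_eq_fintype_card]; decide
  simp only [Lab, Nat.card_sum, Nat.card_prod, card_Qk, hA, hC, g2]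
  simp
  ring
end inj3

set_option linter.all false

section final
variable {p : ℕ} [hp : Fact p.Prime] [h5 : Fact (5 ≤ p)] {d : ℕ}

lemma good_of_iso {H : Type} [Group H] {θ : Th p} (f : Gr d θ ≃* H) :
    IsRegularPGroup p H ∧ HasTypeInvariants p H [d + 2, 1, 1, 1] := by
  have : Finite H := Finite.of_equiv _ f.toEquiv
  have hab : ∀ x y : H, (x * y) ^ p = x ^ p * y ^ p := by
    intro x y
    apply f.symm.injective
    simp only [map_mul, map_pow]
    exact Gr.pab _ _
  refine ⟨reg_of_pab hab, type_of_counts hab (d + 2) (by omega) ?_⟩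
  intro i hi
  rw [← Gr.counts (d := d) (θ := θ) i hi]
  refine (Nat.card_congr (f.toEquiv.subtypeEquiv ?_)).symm
  intro g
  show g ^ p ^ i = 1 ↔ f g ^ p ^ i = 1
  rw [← map_pow, map_eq_one_iff f f.injective]

lemma psi_gen (X : Type) [Finite X] (hM : Nat.card X = p ^ (d + 5)) :
    Nat.card (Quot fun s t : {s : Group X // (letI := s; IsRegularPGroup p X ∧ HasTypeInvariants p X ((d + 2) :: [1, 1, 1]))} =>
      Nonempty (@MulEquiv X X (mulOfGroup _ s.1) (mulOfGroup _ t.1))) = Nat.card (Lab p) := by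
  have eqv : ∀ L : Lab p, Nonempty (Gr d (rep L) ≃ X) := fun L =>
    Finite.card_eq.1 (by rw [Gr.card_eq, hM])
  have φ := fun L => (eqv L).some
  let S := {s : Group X // (letI := s; IsRegularPGroup p X ∧ HasTypeInvariants p X ((d + 2) :: [1, 1, 1]))}
  let r : S → S → Prop := fun s t => Nonempty (@MulEquiv X X (mulOfGroup _ s.1) (mulOfGroup _ t.1))
  show Nat.card (Quot r) = _
  have req : Equivalence r := ⟨fun s => ⟨@MulEquiv.refl _ (mulOfGroup _ s.1)⟩,
    fun {s t} ⟨f⟩ => ⟨@MulEquiv.symm _ _ (mulOfGroup _ s.1) (mulOfGroup _ t.1) f⟩,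
    fun {s t u} ⟨f⟩ ⟨g⟩ => ⟨@MulEquiv.trans _ _ _ (mulOfGroup _ s.1) (mulOfGroup _ t.1) (mulOfGroup _ u.1) f g⟩⟩
  have gs : ∀ L : Lab p, ∃ s : S, Nonempty (@MulEquiv (Gr d (rep L)) X _ (mulOfGroup _ s.1)) := by
    intro L
    letI g : Group X := (φ L).symm.group
    let f : Gr d (rep L) ≃* X := ((φ L).symm.mulEquiv).symm
    exact ⟨⟨g, good_of_iso f⟩, ⟨f⟩⟩
  choose s hs using gs
  let F : Lab p → Quot r := fun L => Quot.mk r (s L)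
  have hF : Function.Bijective F := by
    constructor
    · intro L L' h
      have h' : r (s L) (s L') := by
        have := Quot.eqvGen_exact h
        rwa [req.eqvGen_iff] at this
      obtain ⟨f⟩ := hs L
      obtain ⟨f'⟩ := hs L'
      obtain ⟨g⟩ := h'
      apply rep_inj (d := d)
      exact ⟨@MulEquiv.trans _ _ _ _ (mulOfGroup _ (s L').1) _ (@MulEquiv.trans _ _ _ _ (mulOfGroup _ (s L).1) (mulOfGroup _ (s L').1) f g) (@MulEquiv.symm _ _ _ (mulOfGroup _ (s L').1) f')⟩
    · intro q
      induction q using Quot.ind with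
      | mk t =>
      obtain ⟨t, ht⟩ := t
      letI := t
      obtain ⟨θ, ⟨f⟩⟩ := structMain (G := X) (d := d) (p := p) hM ht.1 ht.2
      obtain ⟨L, ⟨g⟩⟩ := norm_all (d := d) θ
      obtain ⟨f'⟩ := hs L
      refine ⟨L, Quot.sound ⟨?_⟩⟩
      exact @MulEquiv.trans _ _ _ (mulOfGroup _ (s L).1) _ (mulOfGroup _ t) (@MulEquiv.symm _ _ _ (mulOfGroup _ (s L).1) f') (g.symm.trans f)
  exact (Nat.card_congr (Equiv.ofBijective F hF)).symm

lemma psi_main : PsiType p (d + 2) [1, 1, 1] = 23 + 2 * Nat.gcd (p - 1) 3 + Nat.gcd (p - 1) 4 := by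
  rw [← card_Lab]
  exact psi_gen (Fin (p ^ (d + 2 + [1, 1, 1].sum))) (by simp)
end final

/-- For every prime `p ≥ 5` and every `n ≥ 5`,
`Ψ_{n-3}^p(1,1,1) = 23 + 2·gcd(p-1,3) + gcd(p-1,4)`. -/
theorem psi_type_111 (p : ℕ) (hp : p.Prime) (hp5 : 5 ≤ p) (n : ℕ) (hn : 5 ≤ n) :
    PsiType p (n - 3) [1, 1, 1] = 23 + 2 * Nat.gcd (p - 1) 3 + Nat.gcd (p - 1) 4 := by
  obtain ⟨d, rfl⟩ := Nat.exists_eq_add_of_le' hn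
  haveI : Fact p.Prime := ⟨hp⟩
  haveI : Fact (5 ≤ p) := ⟨hp5⟩
  exact psi_main
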